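/- Let f be a topologically transitive homeomorphism with the shadowing property of a compact metric space M. Then for every f-invariant Borel probability measure μ and every real number c with 0 ≤ c ≤ h_μ(f), there exists a sequence of ergodic f-invariant measures (μ_n) such that each supp(μ_n) is a strictly ergodic subsystem of f (so μ_n is the unique, hence maximal-entropy, invariant measure on its support), μ_n → μ in the weak* topology, and h_{μ_n}(f) → c as n → ∞. -/

import Mathlib

/-!
The measures are obtained by building, inside `M`, subsystems that look like Toeplitz-type towers
of freely concatenable words.

*Initial words* (`SE.exists_initial`). Since `c ≤ h_μ(f)`, some labelling by a maximal Bowen-separated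
set has entropy rate at least about `c`. Typical words over these labels (`SE.exists_typical`) are
numerous and have the right letter frequencies, and transitivity joins the corresponding orbit
segments by gaps of bounded length (`SE.exists_gap`). This gives a finite family of `N` separated words
of common length `n` that can be freely concatenated into pseudo-orbits, with `log N / n` close to
`c`, and with all Birkhoff averages along words close to the integrals against `μ`.

*Refinement* (`SE.exists_step`). Let a family of words be such that all free concatenations are
traced by true orbits. Take one orbit tracing a concatenation that contains every finite pattern
infinitely often. Its segments that follow a typical pattern and then return to the start form a new
family, traced with a much smaller error; each new word runs through all old words with almost
equal frequency, and almost no exponential growth is lost. Iterating yields a `SE.Tower`.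

*Limit set*. The points that follow concatenations of words at every level form a closed set on which
Birkhoff averages are uniformly almost constant (`SE.Tower.uniformAvg`). Hence it carries at most one
invariant measure, which is ergodic with strictly ergodic support (`SE.UniformAvg.unique`,
`SE.UniformAvg.ergodic`, `SE.UniformAvg.strictlyErgodic`).

*Entropy*. A weak limit of empirical measures on orbits tracing the words of higher and higher levels
lives on the limit set (`SE.Tower.exists_measure`). Words stay separated along the tower, so
Misiurewicz's argument (`SE.misiurewicz`) bounds the entropy of the limit from below, while counting
pieces of concatenations (`SE.Tower.entropy_le`) bounds it from above; both bounds are close to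
`log N / n`, hence to `c`. Letting the errors tend to zero in `SE.exists_approx` gives the sequence.
-/

open Filter MeasureTheory Set Topology
open scoped ENNReal NNReal

attribute [local instance] PiCountable.metricSpace

namespace EF

/-! ### Topological entropy via separated sets -/

section Entropy

variable {M : Type*} [MetricSpace M]

/-- `Q` is an `(n,ε)`-separated set for `f`. -/
def IsDynSep (f : M → M) (n : ℕ) (ε : ℝ) (Q : Set M) : Prop :=
  Q.Pairwise fun x y => ∃ j : ℕ, j ≤ n ∧ ε < dist (f^[j] x) (f^[j] y)

/-- Maximal cardinality of an `(n,ε)`-separated subset of `K`. -/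
noncomputable def sepCount (f : M → M) (K : Set M) (n : ℕ) (ε : ℝ) : ℕ :=
  sSup {k : ℕ | ∃ Q : Finset M, ↑Q ⊆ K ∧ IsDynSep f n ε ↑Q ∧ Q.card = k}

/-- Topological entropy of `f` on the (not necessarily invariant) set `K`. -/
noncomputable def topEntropyOn (f : M → M) (K : Set M) : EReal :=
  ⨆ (ε : ℝ) (_ : 0 < ε),
    Filter.atTop.limsup fun n : ℕ => ((Real.log (sepCount f K n ε) / n : ℝ) : EReal)

/-- Topological entropy of `f`. -/
noncomputable def topEntropy (f : M → M) : EReal :=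
  topEntropyOn f Set.univ

end Entropy

/-! ### Measure-theoretic (Kolmogorov–Sinai) entropy -/

section MeasEntropy

variable {α : Type*} [MeasurableSpace α]

/-- A finite measurable partition of the whole space. -/
def IsMeasPartition (P : Finset (Set α)) : Prop :=
  (∀ p ∈ P, MeasurableSet p) ∧ ⋃₀ (↑P : Set (Set α)) = Set.univ ∧
    (↑P : Set (Set α)).Pairwise Disjoint

/-- The function `x ↦ - x log x`. -/
noncomputable def negMulLog (x : ℝ) : ℝ := -(x * Real.log x)

/-- Information of the refinement `P ∨ f⁻¹ P ∨ ⋯ ∨ f⁻⁽ⁿ⁻¹⁾ P` with respect to `μ`. -/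
noncomputable def refinedInfo (f : α → α) (μ : Measure α) (P : Finset (Set α)) (n : ℕ) : ℝ :=
  ∑ a : Fin n → {p // p ∈ P},
    negMulLog (μ (⋂ i : Fin n, f^[(i : ℕ)] ⁻¹' ((a i : Set α)))).toReal

/-- Entropy of `f` w.r.t. `μ` and the partition `P`. -/
noncomputable def partEntropy (f : α → α) (μ : Measure α) (P : Finset (Set α)) : ℝ :=
  Filter.atTop.limsup fun n : ℕ => refinedInfo f μ P n / n

/-- Kolmogorov–Sinai entropy of `f` with respect to `μ`. -/
noncomputable def measEntropy (f : α → α) (μ : Measure α) : EReal :=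
  ⨆ (P : Finset (Set α)) (_ : IsMeasPartition P), ((partEntropy f μ P : ℝ) : EReal)

end MeasEntropy

/-! ### Discrete-time dynamics -/

section Discrete

variable {M : Type*} [MetricSpace M]

/-- A set invariant under `f`. -/
def InvSet (f : M → M) (Λ : Set M) : Prop := f '' Λ = Λ

/-- `f` is minimal on the invariant set `Λ`. -/
def MinimalOn (f : M → M) (Λ : Set M) : Prop :=
  ∀ K : Set M, K ⊆ Λ → K.Nonempty → IsClosed K → f '' K = K → K = Λ

variable [MeasurableSpace M]

/-- `f` is uniquely ergodic on `Λ`: there is exactly one invariant Borel probability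
measure supported in `Λ`. -/
def UniquelyErgodicOn (f : M → M) (Λ : Set M) : Prop :=
  ∃! μ : Measure M, IsProbabilityMeasure μ ∧ MeasurePreserving f μ μ ∧ μ Λᶜ = 0

/-- `f` is strictly ergodic on `Λ`: minimal and uniquely ergodic. -/
def StrictlyErgodicOn (f : M → M) (Λ : Set M) : Prop :=
  MinimalOn f Λ ∧ UniquelyErgodicOn f Λ

/-- Entropy flexibility of `f` on an invariant set `S`. -/
def EntropyFlexibleOn (f : M → M) (S : Set M) : Prop :=
  ∀ c : ℝ, 0 ≤ c → (c : EReal) < topEntropyOn f S →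
    ∃ (μ : Measure M) (Λ : Set M), IsProbabilityMeasure μ ∧ Ergodic f μ ∧ μ Sᶜ = 0 ∧
      Λ ⊆ S ∧ IsCompact Λ ∧ f '' Λ = Λ ∧
      topEntropyOn f Λ = (c : EReal) ∧ measEntropy f μ = (c : EReal)

/-- Entropy flexibility of `f` (on the whole space). -/
def EntropyFlexible (f : M → M) : Prop :=
  ∀ c : ℝ, 0 ≤ c → (c : EReal) < topEntropy f →
    ∃ (μ : Measure M) (Λ : Set M), IsProbabilityMeasure μ ∧ Ergodic f μ ∧
      IsCompact Λ ∧ f '' Λ = Λ ∧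
      topEntropyOn f Λ = (c : EReal) ∧ measEntropy f μ = (c : EReal)

end Discrete

/-! ### Shadowing and expansiveness (discrete time) -/

section Shadowing

variable {M : Type*} [MetricSpace M]

/-- The shadowing property for a homeomorphism `f` (full orbits indexed by `ℤ`,
encoded via orbit functions `z` with `z (n+1) = f (z n)`). -/
def ShadowingProperty (f : M → M) : Prop :=
  ∀ ε : ℝ, 0 < ε → ∃ δ : ℝ, 0 < δ ∧ ∀ x : ℤ → M,
    (∀ n : ℤ, dist (f (x n)) (x (n + 1)) ≤ δ) →
    ∃ z : ℤ → M, (∀ n : ℤ, z (n + 1) = f (z n)) ∧ ∀ n : ℤ, dist (z n) (x n) ≤ ε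

/-- The shadowing property relative to an invariant set `Λ`. -/
def ShadowingOn (f : M → M) (Λ : Set M) : Prop :=
  ∀ ε : ℝ, 0 < ε → ∃ δ : ℝ, 0 < δ ∧ ∀ x : ℤ → M, (∀ n : ℤ, x n ∈ Λ) →
    (∀ n : ℤ, dist (f (x n)) (x (n + 1)) ≤ δ) →
    ∃ z : ℤ → M, (∀ n : ℤ, z n ∈ Λ) ∧ (∀ n : ℤ, z (n + 1) = f (z n)) ∧
      ∀ n : ℤ, dist (z n) (x n) ≤ ε

/-- Expansiveness of a homeomorphism, phrased via full orbit functions. -/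
def Expansive (f : M → M) : Prop :=
  ∃ e : ℝ, 0 < e ∧ ∀ z w : ℤ → M,
    (∀ n : ℤ, z (n + 1) = f (z n)) → (∀ n : ℤ, w (n + 1) = f (w n)) →
    (∀ n : ℤ, dist (z n) (w n) ≤ e) → z 0 = w 0

/-- Topological transitivity of `f` on `Λ`. -/
def TransitiveOn (f : M → M) (Λ : Set M) : Prop :=
  ∀ U V : Set M, IsOpen U → IsOpen V → (U ∩ Λ).Nonempty → (V ∩ Λ).Nonempty →
    ∃ n : ℕ, 0 < n ∧ ((f^[n] '' (U ∩ Λ)) ∩ V).Nonempty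

end Shadowing

/-! ### Continuous-time dynamics -/

section Flows

variable {M : Type*} [MetricSpace M]

/-- A set invariant under all time-`t` maps of the flow. -/
def FlowInvSet (φ : Flow ℝ M) (Λ : Set M) : Prop := ∀ t : ℝ, φ.toFun t '' Λ = Λ

/-- Topological entropy of a flow on a set: entropy of its time-one map. -/
noncomputable def flowTopEntropyOn (φ : Flow ℝ M) (K : Set M) : EReal :=
  topEntropyOn (φ.toFun 1) K

/-- Topological entropy of a flow: the entropy of its time-one map. -/
noncomputable def flowTopEntropy (φ : Flow ℝ M) : EReal := topEntropy (φ.toFun 1)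

/-- Minimality of a flow on `Λ`. -/
def FlowMinimalOn (φ : Flow ℝ M) (Λ : Set M) : Prop :=
  ∀ K : Set M, K ⊆ Λ → K.Nonempty → IsClosed K → (∀ t : ℝ, φ.toFun t '' K = K) → K = Λ

variable [MeasurableSpace M]

/-- An invariant measure for a flow. -/
def FlowInvariant (φ : Flow ℝ M) (μ : Measure M) : Prop :=
  ∀ t : ℝ, MeasurePreserving (φ.toFun t) μ μ

/-- An ergodic measure for a flow. -/
def FlowErgodic (φ : Flow ℝ M) (μ : Measure M) : Prop :=
  FlowInvariant φ μ ∧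
    ∀ s : Set M, MeasurableSet s → (∀ t : ℝ, φ.toFun t ⁻¹' s = s) → μ s = 0 ∨ μ s = 1

/-- Measure-theoretic entropy of a flow: entropy of the time-one map. -/
noncomputable def flowMeasEntropy (φ : Flow ℝ M) (μ : Measure M) : EReal :=
  measEntropy (φ.toFun 1) μ

/-- Unique ergodicity of a flow on `Λ`. -/
def FlowUniquelyErgodicOn (φ : Flow ℝ M) (Λ : Set M) : Prop :=
  ∃! μ : Measure M, IsProbabilityMeasure μ ∧ FlowInvariant φ μ ∧ μ Λᶜ = 0

/-- Strict ergodicity of a flow on `Λ`. -/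
def FlowStrictlyErgodicOn (φ : Flow ℝ M) (Λ : Set M) : Prop :=
  FlowMinimalOn φ Λ ∧ FlowUniquelyErgodicOn φ Λ

/-- Entropy flexibility for flows. -/
def FlowEntropyFlexible (φ : Flow ℝ M) : Prop :=
  ∀ c : ℝ, 0 ≤ c → (c : EReal) < flowTopEntropy φ →
    ∃ (μ : Measure M) (Λ : Set M), IsProbabilityMeasure μ ∧ FlowErgodic φ μ ∧
      IsCompact Λ ∧ FlowInvSet φ Λ ∧
      flowTopEntropyOn φ Λ = (c : EReal) ∧ flowMeasEntropy φ μ = (c : EReal)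

end Flows

/-! ### Suspension flows -/

section Suspension

variable {X : Type*} [MetricSpace X] {Λ : Type*} [MetricSpace Λ]

/-- `φ` (a flow on `Λ`) is, on the subset `Γ ⊆ Λ`, the suspension flow of the base
map `f` restricted to `S ⊆ X` under the roof function `ρ`, witnessed by the
embedding `e : X → Λ` of the base. This characterizes the quotient of `S × ℝ` by
`(x, ρ x) ∼ (f x, 0)` with the unit-speed vertical flow. -/
def IsSuspensionOn (f : X → X) (S : Set X) (ρ : X → ℝ) (φ : Flow ℝ Λ) (Γ : Set Λ) : Prop :=
  ∃ e : X → Λ, ContinuousOn e S ∧ (∀ x ∈ S, e x ∈ Γ) ∧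
    (∀ x ∈ S, φ.toFun (ρ x) (e x) = e (f x)) ∧
    (∀ z ∈ Γ, ∃ x ∈ S, ∃ s : ℝ, 0 ≤ s ∧ s < ρ x ∧ φ.toFun s (e x) = z) ∧
    (∀ x ∈ S, ∀ y ∈ S, ∀ s u : ℝ, 0 ≤ s → s < ρ x → 0 ≤ u → u < ρ y →
      φ.toFun s (e x) = φ.toFun u (e y) → x = y ∧ s = u)

end Suspension

/-! ### Symbolic dynamics -/

section Symbolic

/-- The full shift map on `ℤ → A`. -/
def fullShift (A : Type*) : (ℤ → A) → (ℤ → A) := fun x i => x (i + 1)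

variable {A : Type*} [MetricSpace A]

/-- A subshift: a closed shift-invariant subset of the full shift. -/
def IsSubshift (S : Set (ℤ → A)) : Prop :=
  IsClosed S ∧ fullShift A '' S = S

/-- The vertex shift determined by a transition relation `Adj`. -/
def vertexShift {B : Type*} (Adj : B → B → Prop) : Set (ℤ → B) :=
  {x | ∀ i : ℤ, Adj (x i) (x (i + 1))}

/-- A topological conjugacy between two shift spaces (over possibly different
alphabets): a homeomorphism of the subspaces intertwining the shift maps. -/
def ShiftConj {B : Type*} [mB : MetricSpace B] (S : Set (ℤ → A)) (T : Set (ℤ → B)) : Prop :=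
  ∃ h : ↥S ≃ₜ ↥T, ∀ x y : ↥S, (y : ℤ → A) = fullShift A (x : ℤ → A) →
    ((h y : ℤ → B)) = fullShift B ((h x : ℤ → B))

/-- A subshift of finite type: a subshift topologically conjugate to a vertex shift
over some finite alphabet. -/
def IsSFT [Fintype A] (S : Set (ℤ → A)) : Prop :=
  IsSubshift S ∧ ∃ (B : Type) (_ : Fintype B) (mB : MetricSpace B) (Adj : B → B → Prop),
    @ShiftConj A _ B mB S (vertexShift Adj)

/-- The word `w` occurs in some point of `S`. -/
def occursIn (w : List A) (S : Set (ℤ → A)) : Prop :=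
  ∃ x ∈ S, ∃ a : ℤ, ∀ i : Fin w.length, x (a + (i : ℕ)) = w.get i

/-- The words of length `s` in the language of `S`. -/
def langOf (s : ℕ) (S : Set (ℤ → A)) : Set (List A) :=
  {w | w.length = s ∧ occursIn w S}

/-- `r` is a parsing of `x` into words from `𝒲`. -/
def ParsesAt (x : ℤ → A) (𝒲 : Finset (List A)) (r : ℤ → ℤ) : Prop :=
  ∀ j : ℤ, ∃ w ∈ 𝒲, r (j + 1) = r j + w.length ∧
    ∀ i : Fin w.length, x (r j + (i : ℕ)) = w.get i

/-- The renewal system over a finite set of words `𝒲`: all bi-infinite free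
concatenations of words from `𝒲`. -/
def renewalSet (𝒲 : Finset (List A)) : Set (ℤ → A) :=
  {x | ∃ r : ℤ → ℤ, ParsesAt x 𝒲 r}

end Symbolic

/-! ### Horseshoes for flows -/

section Horseshoe

variable {M : Type*} [MetricSpace M]

/-- Auxiliary: `Λ` is a horseshoe of `φ` with symbol space `B`. -/
def HorseshoeWitness (φ : Flow ℝ M) (Λ : Set M) (B : Type) [Fintype B] [MetricSpace B] : Prop :=
  2 ≤ Fintype.card B ∧ ∃ ρ : (ℤ → B) → ℝ, Continuous ρ ∧ (∀ x, 0 < ρ x) ∧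
    IsSuspensionOn (fullShift B) Set.univ ρ φ Λ

/-- A horseshoe of a flow: a compact invariant set on which the flow is conjugate to
a suspension flow over a full shift on at least two symbols. -/
def IsHorseshoe (φ : Flow ℝ M) (Λ : Set M) : Prop :=
  ∃ (B : Type) (iB : Fintype B) (mB : MetricSpace B), @HorseshoeWitness M _ φ Λ B iB mB

end Horseshoe

/-! ### The metric on measures and empirical measures -/

section MeasMetric

variable {M : Type*} [MetricSpace M] [MeasurableSpace M]

/-- The metric `𝔡` on Borel (probability) measures determined by a sequence of test
functions `Φ`. -/
noncomputable def measDist (Φ : ℕ → M → ℝ) (μ ν : Measure M) : ℝ :=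
  ∑' n : ℕ, (1 / 2 : ℝ) ^ (n + 1) * |(∫ x, Φ n x ∂μ) - ∫ x, Φ n x ∂ν|

/-- A sequence of test functions with `‖Φ n‖_∞ + Lip (Φ n) ≤ 1`, dense in `C(M,ℝ)`. -/
def GoodTestSeq (Φ : ℕ → M → ℝ) : Prop :=
  (∀ n : ℕ, ∃ C K : ℝ, 0 ≤ C ∧ 0 ≤ K ∧ C + K ≤ 1 ∧ (∀ x, |Φ n x| ≤ C) ∧
    ∀ x y, |Φ n x - Φ n y| ≤ K * dist x y) ∧
  ∀ g : M → ℝ, Continuous g → ∀ ε : ℝ, 0 < ε → ∃ n : ℕ, ∀ x, |g x - Φ n x| < ε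

/-- The `n`-th empirical measure of the point `x` for the map `f`. -/
noncomputable def empMeasure (f : M → M) (n : ℕ) (x : M) : Measure M :=
  (n : ℝ≥0∞)⁻¹ • ∑ j ∈ Finset.range n, Measure.dirac (f^[j] x)

/-- The topological support of a measure. -/
def measSupport (μ : Measure M) : Set M :=
  {x | ∀ U : Set M, IsOpen U → x ∈ U → 0 < μ U}

/-- A measure of maximal entropy of `f` on `Λ`. -/
def IsMaxEntropyMeasureOn (f : M → M) (Λ : Set M) (μ : Measure M) : Prop :=
  IsProbabilityMeasure μ ∧ MeasurePreserving f μ μ ∧ μ Λᶜ = 0 ∧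
    measEntropy f μ = topEntropyOn f Λ

end MeasMetric

/-! ### Flow shadowing and expansiveness -/

section FlowShadow

variable {M : Type*} [MetricSpace M]

/-- Bowen–Walters expansiveness for flows. -/
def FlowExpansive (φ : Flow ℝ M) : Prop :=
  ∀ ε : ℝ, 0 < ε → ∃ δ : ℝ, 0 < δ ∧ ∀ x y : M, ∀ s : ℝ → ℝ, Continuous s → s 0 = 0 →
    (∀ t : ℝ, dist (φ.toFun t x) (φ.toFun (s t) y) ≤ δ) →
    ∃ τ : ℝ, |τ| ≤ ε ∧ y = φ.toFun τ x

/-- The shadowing property for flows: every `(δ,1)`-pseudo-orbit is `ε`-traced,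
up to an orientation preserving reparametrization of time, by a true orbit. -/
def FlowShadowing (φ : Flow ℝ M) : Prop :=
  ∀ ε : ℝ, 0 < ε → ∃ δ : ℝ, 0 < δ ∧
    ∀ (x : ℤ → M) (T S : ℤ → ℝ), (∀ i : ℤ, 1 ≤ T i) →
      (∀ i : ℤ, dist (φ.toFun (T i) (x i)) (x (i + 1)) ≤ δ) →
      S 0 = 0 → (∀ i : ℤ, S (i + 1) = S i + T i) →
      ∃ (z : M) (h : ℝ → ℝ), StrictMono h ∧ Continuous h ∧ Function.Surjective h ∧
        ∀ i : ℤ, ∀ t : ℝ, S i ≤ t → t < S (i + 1) →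
          dist (φ.toFun (h t) z) (φ.toFun (t - S i) (x i)) ≤ ε

end FlowShadow


/-! ### Lift of a measure to a suspension flow -/

section Lift

variable {X : Type*} [MeasurableSpace X] {Y : Type*} [TopologicalSpace Y] [MeasurableSpace Y]

/-- The lift of a base measure `ν` to the suspension flow `φ` with roof `ρ`,
via the base embedding `e`: the normalized image of `ν ⊗ Leb` on the region
below the roof. -/
noncomputable def suspLift (φ : Flow ℝ Y) (e : X → Y) (ρ : X → ℝ) (ν : Measure X) :
    Measure Y :=
  (ENNReal.ofReal (∫ x, ρ x ∂ν))⁻¹ •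
    Measure.map (fun p : X × ℝ => φ.toFun p.2 (e p.1))
      ((ν.prod (volume : Measure ℝ)).restrict {p : X × ℝ | 0 ≤ p.2 ∧ p.2 < ρ p.1})

end Lift


end EF
open EF Filter Topology

namespace SE

/-! ### Shannon entropy of finite-valued measurable maps -/

section Shannon

variable {α : Type*} [MeasurableSpace α]

/-- A map to a (finite, discrete) label set all of whose fibres are measurable. -/
def Msr {ι : Type*} (X : α → ι) : Prop := ∀ i, MeasurableSet (X ⁻¹' {i})

lemma Msr.preimage {ι : Type*} [Finite ι] {X : α → ι} (hX : Msr X) (S : Set ι) :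
    MeasurableSet (X ⁻¹' S) := by
  have : X ⁻¹' S = ⋃ i ∈ S, X ⁻¹' {i} := by ext; simp
  rw [this]
  exact MeasurableSet.biUnion S.to_countable fun i _ => hX i

lemma Msr.comp {ι κ : Type*} [Finite ι] {X : α → ι} (hX : Msr X) (g : ι → κ) :
    Msr (fun x => g (X x)) := fun k => hX.preimage (g ⁻¹' {k})

lemma Msr.prodMk {ι κ : Type*} {X : α → ι} {Y : α → κ} (hX : Msr X) (hY : Msr Y) :
    Msr (fun x => (X x, Y x)) := by
  rintro ⟨i, k⟩
  have : (fun x => (X x, Y x)) ⁻¹' {(i, k)} = X ⁻¹' {i} ∩ Y ⁻¹' {k} := by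
    ext; simp [Prod.ext_iff]
  rw [this]
  exact (hX i).inter (hY k)

lemma Msr.pi {J ι : Type*} [Countable J] {X : J → α → ι} (hX : ∀ j, Msr (X j)) :
    Msr (fun x j => X j x) := by
  intro a
  have : (fun x j => X j x) ⁻¹' {a} = ⋂ j, X j ⁻¹' {a j} := by
    ext; simp [funext_iff]
  rw [this]
  exact MeasurableSet.iInter fun j => hX j _

lemma Msr.comp_measurable {ι : Type*} {X : α → ι} (hX : Msr X) {f : α → α}
    (hf : Measurable f) : Msr (fun x => X (f x)) := fun i => hf (hX i)

/-- The `n`-step itinerary of a point with respect to the labelling `X`. -/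
def itin {ι : Type*} (f : α → α) (X : α → ι) (n : ℕ) : α → (Fin n → ι) :=
  fun x i => X (f^[(i : ℕ)] x)

lemma Msr.itin {ι : Type*} {X : α → ι} (hX : Msr X) {f : α → α}
    (hf : Measurable f) (n : ℕ) : Msr (itin f X n) :=
  Msr.pi fun i : Fin n => hX.comp_measurable (hf.iterate i)

/-- Shannon entropy of the distribution of the finite-valued map `X` under `μ`. -/
noncomputable def Hent {ι : Type*} [Fintype ι] (μ : Measure α) (X : α → ι) : ℝ :=
  ∑ i, Real.negMulLog (μ.real (X ⁻¹' {i}))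

lemma sum_real_fiber {ι : Type*} [Fintype ι] (μ : Measure α) [IsProbabilityMeasure μ]
    {X : α → ι} (hX : Msr X) (A : Set α) :
    ∑ i, μ.real (X ⁻¹' {i} ∩ A) = μ.real A := by
  have h1 : A = ⋃ i, X ⁻¹' {i} ∩ A := by ext; simp
  conv_rhs => rw [h1]
  have hres : ∀ i, μ.real (X ⁻¹' {i} ∩ A) = (μ.restrict A).real (X ⁻¹' {i}) := fun i => by
    simp [Measure.real, Measure.restrict_apply (hX i)]
  have : μ.real (⋃ i, X ⁻¹' {i} ∩ A) = (μ.restrict A).real (⋃ i, X ⁻¹' {i}) := by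
    rw [← iUnion_inter]
    simp [Measure.real, Measure.restrict_apply (MeasurableSet.iUnion hX)]
  rw [this, measureReal_iUnion_fintype]
  · simp [hres]
  · intro i j hij
    refine Set.disjoint_left.2 fun x hx hx' => hij ?_
    simp only [mem_preimage, mem_singleton_iff] at hx hx'
    exact hx.symm.trans hx'
  · exact hX

lemma sum_real_fiber_univ {ι : Type*} [Fintype ι] (μ : Measure α) [IsProbabilityMeasure μ]
    {X : α → ι} (hX : Msr X) : ∑ i, μ.real (X ⁻¹' {i}) = 1 := by
  simpa using sum_real_fiber μ hX univ

/-- Gibbs' inequality, with a subprobability vector `q` on the right. -/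
lemma gibbs {ι : Type*} [Fintype ι] (p q : ι → ℝ) (hp : ∀ i, 0 ≤ p i) (hq : ∀ i, 0 ≤ q i)
    (hpq : ∀ i, q i = 0 → p i = 0) (hsum : ∑ i, q i ≤ ∑ i, p i) :
    ∑ i, Real.negMulLog (p i) ≤ ∑ i, -(p i * Real.log (q i)) := by
  have key : ∀ i, Real.negMulLog (p i) - -(p i * Real.log (q i)) ≤ q i - p i := by
    intro i
    rcases (hp i).eq_or_lt with h | h
    · rw [← h]; simpa using hq i
    · have hq' : 0 < q i := lt_of_le_of_ne (hq i) fun h0 => h.ne' (hpq i h0.symm)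
      have := Real.log_le_sub_one_of_pos (div_pos hq' h)
      rw [Real.log_div hq'.ne' h.ne'] at this
      have h2 := mul_le_mul_of_nonneg_left this h.le
      have h3 : p i * (q i / p i - 1) = q i - p i := by field_simp
      rw [h3] at h2
      simp only [Real.negMulLog]
      linarith
  have := Finset.sum_le_sum fun i (_ : i ∈ Finset.univ) => key i
  simp only [Finset.sum_sub_distrib] at this
  linarith

lemma negMulLog_sum_le {ι : Type*} (s : Finset ι) (p : ι → ℝ) (hp : ∀ i, 0 ≤ p i) :
    Real.negMulLog (∑ i ∈ s, p i) ≤ ∑ i ∈ s, Real.negMulLog (p i) := by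
  have : Real.negMulLog (∑ i ∈ s, p i) = ∑ i ∈ s, -(p i * Real.log (∑ j ∈ s, p j)) := by
    rw [Finset.sum_neg_distrib, ← Finset.sum_mul, Real.negMulLog]
    ring
  rw [this]
  refine Finset.sum_le_sum fun i hi => ?_
  rcases (hp i).eq_or_lt with h | h
  · simp [← h]
  · have h1 : p i ≤ ∑ j ∈ s, p j := Finset.single_le_sum (fun j _ => hp j) hi
    have := mul_le_mul_of_nonneg_left (Real.log_le_log h h1) h.le
    simp only [Real.negMulLog]
    linarith

variable {ι κ : Type*} [Fintype ι] [Fintype κ] (μ : Measure α) [IsProbabilityMeasure μ]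

lemma Hent_nonneg (X : α → ι) : 0 ≤ Hent μ X :=
  Finset.sum_nonneg fun _ _ => Real.negMulLog_nonneg measureReal_nonneg measureReal_le_one

lemma Hent_le_log_card {X : α → ι} (hX : Msr X) : Hent μ X ≤ Real.log (Fintype.card ι) := by
  have hs := sum_real_fiber_univ μ hX
  have hne : Nonempty ι := by
    by_contra h
    rw [not_nonempty_iff] at h
    simp at hs
  have hc : (0 : ℝ) < Fintype.card ι := by exact_mod_cast Fintype.card_pos
  refine (gibbs (fun i => μ.real (X ⁻¹' {i})) (fun _ => (Fintype.card ι : ℝ)⁻¹)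
    (fun _ => measureReal_nonneg) (fun _ => by positivity) (fun i h => ?_) ?_).trans ?_
  · exact absurd h (by positivity)
  · rw [hs]; simp
  · simp only [Real.log_inv, mul_neg, neg_neg]
    rw [← Finset.sum_mul, hs, one_mul]

/-- If on a set of full measure the value of `Y` determines that of `X`, then `X` has at most
the entropy of `Y`. -/
lemma Hent_le_of_determined {X : α → ι} {Y : α → κ} (hY : Msr Y)
    (A : Set α) (hA : μ Aᶜ = 0) (h : ∀ x ∈ A, ∀ y ∈ A, Y x = Y y → X x = X y) :
    Hent μ X ≤ Hent μ Y := by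
  classical
  have hA1 : ∀ S : Set α, μ.real (S ∩ A) = μ.real S := by
    intro S
    simp only [Measure.real]
    congr 1
    exact measure_inter_conull hA
  have hne : A.Nonempty := by
    by_contra h0
    rw [not_nonempty_iff_eq_empty] at h0
    simp [h0] at hA
  obtain ⟨x0, hx0⟩ := hne
  let Φ : κ → ι := fun k => if hk : ∃ x ∈ A, Y x = k then X hk.choose else X x0
  have hΦ : ∀ x ∈ A, X x = Φ (Y x) := by
    intro x hx
    have hk : ∃ x' ∈ A, Y x' = Y x := ⟨x, hx, rfl⟩
    simp only [Φ, dif_pos hk]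
    exact h x hx _ hk.choose_spec.1 hk.choose_spec.2.symm
  have hsum : ∀ i, μ.real (X ⁻¹' {i}) =
      ∑ k ∈ Finset.univ.filter (fun k => Φ k = i), μ.real (Y ⁻¹' {k}) := by
    intro i
    rw [← sum_real_fiber μ hY (X ⁻¹' {i}), Finset.sum_filter]
    refine Finset.sum_congr rfl fun k _ => ?_
    split_ifs with hk
    · rw [← hA1, ← hA1 (Y ⁻¹' {k})]
      congr 1
      ext x
      simp only [mem_inter_iff, mem_preimage, mem_singleton_iff]
      constructor
      · tauto
      · rintro ⟨h1, h2⟩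
        exact ⟨⟨h1, by rw [hΦ x h2, h1, hk]⟩, h2⟩
    · rw [← hA1]
      have : Y ⁻¹' {k} ∩ X ⁻¹' {i} ∩ A = ∅ := by
        ext x
        simp only [mem_inter_iff, mem_preimage, mem_singleton_iff, mem_empty_iff_false,
          iff_false]
        rintro ⟨⟨h1, h2⟩, h3⟩
        exact hk (by rw [← h1, ← hΦ x h3, h2])
      rw [this]; simp
  calc Hent μ X ≤ ∑ i, ∑ k ∈ Finset.univ.filter (fun k => Φ k = i),
        Real.negMulLog (μ.real (Y ⁻¹' {k})) := by
        refine Finset.sum_le_sum fun i _ => ?_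
        rw [hsum i]
        exact negMulLog_sum_le _ _ fun _ => measureReal_nonneg
    _ = Hent μ Y := by
        rw [Hent]
        exact Finset.sum_fiberwise Finset.univ Φ fun k => Real.negMulLog (μ.real (Y ⁻¹' {k}))

lemma Hent_prod_le {X : α → ι} {Y : α → κ} (hX : Msr X) (hY : Msr Y) :
    Hent μ (fun x => (X x, Y x)) ≤ Hent μ X + Hent μ Y := by
  have hpre : ∀ i k, (fun x => (X x, Y x)) ⁻¹' {(i, k)} = X ⁻¹' {i} ∩ Y ⁻¹' {k} := by
    intro i k; ext; simp [Prod.ext_iff]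
  set p : ι × κ → ℝ := fun a => μ.real ((fun x => (X x, Y x)) ⁻¹' {a}) with hp
  have hp1 : ∀ i, ∑ k, p (i, k) = μ.real (X ⁻¹' {i}) := by
    intro i
    rw [← sum_real_fiber μ hY]
    refine Finset.sum_congr rfl fun k _ => ?_
    simp only [hp, hpre, inter_comm]
  have hp2 : ∀ k, ∑ i, p (i, k) = μ.real (Y ⁻¹' {k}) := by
    intro k
    rw [← sum_real_fiber μ hX]
    refine Finset.sum_congr rfl fun k _ => ?_
    simp only [hp, hpre]
  have hle1 : ∀ i k, p (i, k) ≤ μ.real (X ⁻¹' {i}) := fun i k => by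
    simp only [hp, hpre]; exact measureReal_mono inter_subset_left
  have hle2 : ∀ i k, p (i, k) ≤ μ.real (Y ⁻¹' {k}) := fun i k => by
    simp only [hp, hpre]; exact measureReal_mono inter_subset_right
  have hp0 : ∀ a, 0 ≤ p a := fun _ => measureReal_nonneg
  have hg := gibbs p (fun a => μ.real (X ⁻¹' {a.1}) * μ.real (Y ⁻¹' {a.2})) hp0
    (fun _ => by positivity) ?_ ?_
  · refine hg.trans (le_of_eq ?_)
    have hlog : ∀ a : ι × κ, -(p a * Real.log (μ.real (X ⁻¹' {a.1}) * μ.real (Y ⁻¹' {a.2})))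
        = -(p a * Real.log (μ.real (X ⁻¹' {a.1}))) + -(p a * Real.log (μ.real (Y ⁻¹' {a.2}))) := by
      rintro ⟨i, k⟩
      by_cases h : p (i, k) = 0
      · simp [h]
      · have hpos : 0 < p (i, k) := lt_of_le_of_ne (hp0 _) (Ne.symm h)
        rw [Real.log_mul (hpos.trans_le (hle1 i k)).ne' (hpos.trans_le (hle2 i k)).ne']
        ring
    rw [Finset.sum_congr rfl fun a _ => hlog a, Finset.sum_add_distrib, Fintype.sum_prod_type,
      Fintype.sum_prod_type_right]
    simp only [Finset.sum_neg_distrib, ← Finset.sum_mul, hp1, hp2, Hent, Real.negMulLog,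
      neg_mul]
  · rintro ⟨i, k⟩ h
    rcases mul_eq_zero.1 h with h | h
    · exact le_antisymm (h ▸ hle1 i k) (hp0 _)
    · exact le_antisymm (h ▸ hle2 i k) (hp0 _)
  · rw [Fintype.sum_prod_type, Fintype.sum_prod_type]
    simp only [hp1, ← Finset.mul_sum, sum_real_fiber_univ μ hY, mul_one]
    exact le_rfl

lemma Hent_fin_pi_le (n : ℕ) (X : Fin n → α → ι) (hX : ∀ j, Msr (X j)) :
    Hent μ (fun x j => X j x) ≤ ∑ j, Hent μ (X j) := by
  induction n with
  | zero =>
    have := Hent_le_log_card μ (Msr.pi hX)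
    simpa using this
  | succ n ih =>
    rw [Fin.sum_univ_succ]
    have h1 := ih (fun j => X j.succ) fun j => hX _
    have h2 := Hent_prod_le μ (hX 0) (Msr.pi fun j : Fin n => hX j.succ)
    refine le_trans (Hent_le_of_determined μ
      ((hX 0).prodMk (Msr.pi fun j : Fin n => hX j.succ)) univ (by simp) ?_)
      (h2.trans (by linarith))
    intro x _ y _ hxy
    simp only [Prod.mk.injEq, funext_iff] at hxy
    funext j
    exact Fin.cases hxy.1 hxy.2 j

lemma Hent_pi_le {J : Type*} [Fintype J] [DecidableEq J] (X : J → α → ι)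
    (hX : ∀ j, Msr (X j)) :
    Hent μ (fun x j => X j x) ≤ ∑ j, Hent μ (X j) := by
  have e := (Fintype.equivFin J).symm
  have h1 := Hent_fin_pi_le μ _ (fun j => X (e j)) fun j => hX _
  rw [Equiv.sum_comp e fun j => Hent μ (X j)] at h1
  refine le_trans (Hent_le_of_determined μ (Msr.pi fun j => hX (e j)) univ
    (by simp) ?_) h1
  intro x _ y _ hxy
  funext j
  have := congrFun hxy (e.symm j)
  simpa using this

lemma Hent_comp {f : α → α} (hf : MeasurePreserving f μ μ) {X : α → ι} (hX : Msr X) :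
    Hent μ (fun x => X (f x)) = Hent μ X := by
  unfold Hent
  refine Finset.sum_congr rfl fun i _ => ?_
  congr 1
  simp only [Measure.real]
  congr 1
  exact hf.measure_preimage (hX i).nullMeasurableSet

end Shannon

/-! ### Itineraries and the entropy of a partition -/

section Part

variable {α : Type*} [MeasurableSpace α]

/-- The cell of the partition `P` containing a given point. -/
noncomputable def cellOf {P : Finset (Set α)} (hP : IsMeasPartition P) (x : α) :
    {p // p ∈ P} :=
  ⟨(mem_sUnion.1 (hP.2.1.symm ▸ mem_univ x)).choose,
    (mem_sUnion.1 (hP.2.1.symm ▸ mem_univ x)).choose_spec.1⟩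

lemma cellOf_eq_iff {P : Finset (Set α)} (hP : IsMeasPartition P) (x : α)
    (p : {p // p ∈ P}) : cellOf hP x = p ↔ x ∈ (p : Set α) := by
  have hx : x ∈ (cellOf hP x : Set α) :=
    (mem_sUnion.1 (hP.2.1.symm ▸ mem_univ x)).choose_spec.2
  refine ⟨fun h => h ▸ hx, fun h => ?_⟩
  by_contra hne
  have := hP.2.2 (cellOf hP x).2 p.2 fun h' => hne (Subtype.ext h')
  exact Set.disjoint_left.1 this hx h

lemma msr_cellOf {P : Finset (Set α)} (hP : IsMeasPartition P) : Msr (cellOf hP) := by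
  intro p
  have : cellOf hP ⁻¹' {p} = (p : Set α) := by
    ext x; simp [cellOf_eq_iff]
  rw [this]
  exact hP.1 _ p.2

lemma refinedInfo_eq {P : Finset (Set α)} (hP : IsMeasPartition P) (f : α → α)
    (μ : Measure α) (n : ℕ) : refinedInfo f μ P n = Hent μ (itin f (cellOf hP) n) := by
  unfold refinedInfo Hent
  refine Finset.sum_congr (by ext; simp) fun a _ => ?_
  have : itin f (cellOf hP) n ⁻¹' {a} = ⋂ i : Fin n, f^[(i : ℕ)] ⁻¹' ((a i : Set α)) := by
    ext x; simp [itin, funext_iff, cellOf_eq_iff]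
  rw [this]
  simp [EF.negMulLog, Real.negMulLog, Measure.real]

lemma Hent_itin_le {ι : Type*} [Fintype ι] (μ : Measure α) [IsProbabilityMeasure μ]
    {X : α → ι} (hX : Msr X) {f : α → α} (hf : Measurable f) (n : ℕ) :
    Hent μ (itin f X n) ≤ n * Real.log (Fintype.card ι) := by
  refine (Hent_fin_pi_le μ n (fun i x => X (f^[(i : ℕ)] x))
    fun i => hX.comp_measurable (hf.iterate i)).trans ?_
  refine (Finset.sum_le_sum fun (i : Fin n) _ =>
    Hent_le_log_card μ (hX.comp_measurable (hf.iterate i))).trans ?_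
  simp

lemma measEntropy_le {f : α → α} {μ : Measure α} [IsProbabilityMeasure μ]
    (h : ℝ) (H : ∀ P : Finset (Set α), ∀ hP : IsMeasPartition P,
      ∀ η : ℝ, 0 < η → ∀ᶠ n : ℕ in atTop, Hent μ (itin f (cellOf hP) n) ≤ n * (h + η)) :
    measEntropy f μ ≤ h := by
  refine iSup₂_le fun P hP => ?_
  rw [EReal.coe_le_coe_iff]
  refine le_of_forall_pos_le_add fun η hη => ?_
  refine limsup_le_of_le ?_ ?_
  · refine IsBoundedUnder.isCoboundedUnder_le ⟨0, ?_⟩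
    simp only [eventually_map]
    filter_upwards with n
    rw [refinedInfo_eq hP]
    have := Hent_nonneg μ (itin f (cellOf hP) n)
    positivity
  · filter_upwards [H P hP η hη, eventually_gt_atTop 0] with n hn hn0
    rw [refinedInfo_eq hP, div_le_iff₀ (by exact_mod_cast hn0)]
    linarith

/-- A finite labelling gives a partition, so the growth rate of the entropy of its itineraries
bounds `measEntropy` from below. -/
lemma le_measEntropy {f : α → α} (hf : Measurable f) {μ : Measure α} [IsProbabilityMeasure μ]
    {ι : Type*} [Fintype ι] (X : α → ι) (hX : Msr X) (h : ℝ)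
    (H : ∀ n : ℕ, 0 < n → n * h ≤ Hent μ (itin f X n)) : (h : EReal) ≤ measEntropy f μ := by
  classical
  let P : Finset (Set α) := Finset.univ.image fun i => X ⁻¹' {i}
  have hP : IsMeasPartition P := by
    refine ⟨?_, ?_, ?_⟩
    · intro p hp
      simp only [P, Finset.mem_image, Finset.mem_univ, true_and] at hp
      obtain ⟨i, rfl⟩ := hp
      exact hX i
    · refine eq_univ_of_forall fun x => mem_sUnion.2 ⟨X ⁻¹' {X x}, ?_, rfl⟩
      simp [P]
    · intro p hp q hq hpq
      simp only [P, Finset.coe_image, Finset.coe_univ, image_univ, mem_range] at hp hq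
      obtain ⟨i, rfl⟩ := hp
      obtain ⟨j, rfl⟩ := hq
      refine Set.disjoint_left.2 fun x hx hx' => hpq ?_
      simp only [mem_preimage, mem_singleton_iff] at hx hx'
      rw [← hx, ← hx']
  refine le_trans ?_ (le_iSup₂ (f := fun P (_ : IsMeasPartition P) =>
    ((partEntropy f μ P : ℝ) : EReal)) P hP)
  rw [EReal.coe_le_coe_iff]
  have hXY : ∀ x y, cellOf hP x = cellOf hP y → X x = X y := by
    intro x y hxy
    have hmem : X ⁻¹' {X y} ∈ P := by simp [P]
    have h1 : cellOf hP y = ⟨X ⁻¹' {X y}, hmem⟩ := (cellOf_eq_iff hP y _).2 rfl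
    have h2 : cellOf hP x = ⟨X ⁻¹' {X y}, hmem⟩ := hxy.trans h1
    exact (cellOf_eq_iff hP x _).1 h2
  have hle : ∀ n, Hent μ (itin f X n) ≤ Hent μ (itin f (cellOf hP) n) := fun n =>
    Hent_le_of_determined μ ((msr_cellOf hP).itin hf n) univ (by simp)
      fun x _ y _ hxy => funext fun i => hXY _ _ (congrFun hxy i)
  refine le_limsup_of_frequently_le ?_ ?_
  · refine Eventually.frequently ?_
    filter_upwards [eventually_gt_atTop 0] with n hn
    rw [refinedInfo_eq hP, le_div_iff₀ (by exact_mod_cast hn), mul_comm]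
    exact (H n hn).trans (hle n)
  · refine ⟨Real.log (Fintype.card {p // p ∈ P}), ?_⟩
    simp only [eventually_map]
    filter_upwards [eventually_gt_atTop 0] with n hn
    rw [refinedInfo_eq hP, div_le_iff₀ (by exact_mod_cast hn), mul_comm]
    exact Hent_itin_le μ (msr_cellOf hP) hf n

lemma exists_partition_of_lt {f : α → α} {μ : Measure α} [IsProbabilityMeasure μ] {h : ℝ}
    (H : (h : EReal) < measEntropy f μ) :
    ∃ (P : Finset (Set α)) (hP : IsMeasPartition P),
      ∃ᶠ n : ℕ in atTop, n * h ≤ Hent μ (itin f (cellOf hP) n) := by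
  simp only [measEntropy, lt_iSup_iff] at H
  obtain ⟨P, hP, hlt⟩ := H
  refine ⟨P, hP, ?_⟩
  rw [EReal.coe_lt_coe_iff] at hlt
  have := frequently_lt_of_lt_limsup (IsBoundedUnder.isCoboundedUnder_le ⟨0, ?_⟩) hlt
  · refine (this.and_eventually (eventually_gt_atTop 0)).mono fun n hn => ?_
    obtain ⟨h1, h2⟩ := hn
    rw [refinedInfo_eq hP, lt_div_iff₀ (by exact_mod_cast h2), mul_comm] at h1
    exact h1.le
  · simp only [eventually_map]
    filter_upwards with n
    rw [refinedInfo_eq hP]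
    have := Hent_nonneg μ (itin f (cellOf hP) n)
    positivity

end Part

end SE

namespace SE

/-! ### Entropy of itineraries and metric closeness -/

section LemmaA

lemma Hent_itin_comp_iterate {M : Type*} [MeasurableSpace M] {f : M → M} {ν : Measure M} [IsProbabilityMeasure ν]
    (hf : MeasurePreserving f ν ν) {ι : Type*} [Fintype ι] {X : M → ι} (hX : Msr X) (j : ℕ) :
    Hent ν (fun x => X (f^[j] x)) = Hent ν X :=
  Hent_comp ν (hf.iterate j) hX

variable {M : Type*} [MetricSpace M] [CompactSpace M] [MeasurableSpace M] [BorelSpace M]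

/-- Bowen-close points have, up to small entropy, the same itinerary: if `α` distinguishes
points that are not `r`-close along `n` steps, then it carries all the information of the
`n`-step itinerary of `X` up to `n * η`. -/
lemma Hent_itin_le_add {f : M → M} {ν : Measure M} [IsProbabilityMeasure ν]
    (hf : MeasurePreserving f ν ν) {ι : Type*} [Fintype ι] {X : M → ι} (hX : Msr X)
    {η : ℝ} (hη : 0 < η) :
    ∃ r : ℝ, 0 < r ∧ ∀ (n : ℕ) (κ : Type) [Fintype κ] (α : M → κ), Msr α →
      ∀ A : Set M, ν Aᶜ = 0 →
      (∀ x ∈ A, ∀ y ∈ A, α x = α y → ∀ j < n, dist (f^[j] x) (f^[j] y) ≤ r) →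
      Hent ν (itin f X n) ≤ Hent ν α + n * η := by
  classical
  set c : ℝ := ((Fintype.card ι : ℕ) : ℝ) with hc
  have hc0 : 0 ≤ c := by positivity
  have hη' : 0 < η / (c + 1) := by positivity
  have h0 : ∀ᶠ x in 𝓝 (0 : ℝ), Real.negMulLog x < η / (c + 1) := by
    have := Real.continuous_negMulLog.tendsto 0
    rw [Real.negMulLog_zero] at this
    exact this.eventually (gt_mem_nhds hη')
  have h1 : ∀ᶠ x in 𝓝 (1 : ℝ), Real.negMulLog x < η / (c + 1) := by
    have := Real.continuous_negMulLog.tendsto 1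
    rw [Real.negMulLog_one] at this
    exact this.eventually (gt_mem_nhds hη')
  obtain ⟨t0, ht0, H0⟩ := Metric.eventually_nhds_iff.1 h0
  obtain ⟨t1, ht1, H1⟩ := Metric.eventually_nhds_iff.1 h1
  set β : ℝ := min (t0 / 2) (t1 / (2 * (c + 1))) with hβ
  have hβ0 : 0 < β := by positivity
  have hK : ∀ i, ∃ K, K ⊆ X ⁻¹' {i} ∧ IsCompact K ∧ ν ((X ⁻¹' {i}) \ K) < ENNReal.ofReal β :=
    fun i => (hX i).exists_isCompact_sdiff_lt (measure_ne_top _ _) (by simpa using hβ0)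
  choose K hKX hKc hKβ using hK
  -- distinct compacta are a positive distance apart
  have hr : ∀ᶠ r in 𝓝[>] (0 : ℝ), ∀ i j, i ≠ j → ∀ x ∈ K i, ∀ y ∈ K j, r < dist x y := by
    rw [eventually_all]; intro i
    rw [eventually_all]; intro j
    rw [eventually_all]; intro hij
    have hd : Disjoint (K i) (K j) := by
      refine Set.disjoint_left.2 fun x hx hx' => hij ?_
      have h1 := hKX _ hx
      have h2 := hKX _ hx'
      simp only [mem_preimage, mem_singleton_iff] at h1 h2
      exact h1.symm.trans h2
    obtain ⟨δ, hδ, hdis⟩ := hd.exists_thickenings (hKc i) (hKc j).isClosed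
    filter_upwards [Ioo_mem_nhdsGT hδ] with r hr x hx y hy
    by_contra hle
    rw [not_lt] at hle
    refine (Set.disjoint_left.1 hdis (?_ : y ∈ _)) ?_
    · exact Metric.mem_thickening_iff.2 ⟨x, hx, by rw [dist_comm]; exact hle.trans_lt hr.2⟩
    · exact Metric.mem_thickening_iff.2 ⟨y, hy, by simpa using hδ⟩
  obtain ⟨r, hr, hr0⟩ := (hr.and self_mem_nhdsWithin).exists
  refine ⟨r, hr0, ?_⟩
  intro n κ _ α hα A hA hclose
  let U : Set M := ⋃ i, K i
  have hUm : MeasurableSet U := MeasurableSet.iUnion fun i => (hKc i).measurableSet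
  let R : M → Option ι := fun x => if x ∈ U then none else some (X x)
  have hRn : R ⁻¹' {none} = U := by
    ext x; by_cases hx : x ∈ U <;> simp [R, hx]
  have hRs : ∀ i, R ⁻¹' {some i} = X ⁻¹' {i} \ U := by
    intro i; ext x; by_cases hx : x ∈ U <;> simp [R, hx]
  have hR : Msr R := by
    rintro (_ | i)
    · rw [hRn]; exact hUm
    · rw [hRs]; exact (hX i).diff hUm
  have hsome : ∀ i, ν.real (R ⁻¹' {some i}) ≤ β := by
    intro i
    rw [hRs]
    have : ν (X ⁻¹' {i} \ U) ≤ ENNReal.ofReal β :=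
      (measure_mono (sdiff_subset_sdiff_right (subset_iUnion K i))).trans (hKβ i).le
    exact ENNReal.toReal_le_of_le_ofReal hβ0.le this
  have hHR : Hent ν R ≤ η := by
    have hs := sum_real_fiber_univ ν hR
    rw [Fintype.sum_option] at hs
    have hsum : ∑ i, ν.real (R ⁻¹' {some i}) ≤ c * β := by
      refine (Finset.sum_le_sum fun i _ => hsome i).trans ?_
      simp [hc]
    have hb1 : c * β < t1 := by
      have : β ≤ t1 / (2 * (c + 1)) := min_le_right _ _
      have h2 := mul_le_mul_of_nonneg_left this hc0
      refine h2.trans_lt ?_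
      rw [mul_div_assoc', div_lt_iff₀ (by positivity)]
      nlinarith
    have hn : Real.negMulLog (ν.real (R ⁻¹' {none})) < η / (c + 1) := by
      refine H1 ?_
      rw [Real.dist_eq, abs_lt]
      have : ν.real (R ⁻¹' {none}) ≤ 1 := measureReal_le_one
      constructor <;> linarith
    have hi : ∀ i, Real.negMulLog (ν.real (R ⁻¹' {some i})) ≤ η / (c + 1) := by
      intro i
      refine (H0 ?_).le
      rw [Real.dist_eq, sub_zero, abs_of_nonneg measureReal_nonneg]
      have : β ≤ t0 / 2 := min_le_left _ _
      linarith [hsome i]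
    unfold Hent
    rw [Fintype.sum_option]
    have h2 := Finset.sum_le_sum fun i (_ : i ∈ Finset.univ) => hi i
    simp only [Finset.sum_const, Finset.card_univ, nsmul_eq_mul] at h2
    have h3 : η / (c + 1) + c * (η / (c + 1)) = η := by field_simp; ring
    rw [← hc] at h2
    linarith
  have hRj : ∀ j : Fin n, Msr (fun x => R (f^[(j : ℕ)] x)) := fun j =>
    hR.comp_measurable (hf.measurable.iterate j)
  have h2 := Hent_prod_le ν hα (Msr.pi hRj)
  have h3 := Hent_fin_pi_le ν n (fun j x => R (f^[(j : ℕ)] x)) hRj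
  have h4 : ∑ j : Fin n, Hent ν (fun x => R (f^[(j : ℕ)] x)) ≤ n * η := by
    refine (Finset.sum_le_sum fun (j : Fin n) _ =>
      (Hent_itin_comp_iterate hf hR j).le.trans hHR).trans ?_
    simp
  refine (Hent_le_of_determined ν (hα.prodMk (Msr.pi hRj)) A hA ?_).trans
    (h2.trans (by linarith))
  intro x hx y hy hxy
  simp only [Prod.mk.injEq, funext_iff] at hxy
  funext j
  have hd := hclose x hx y hy hxy.1 j j.2
  have hRxy := hxy.2 j
  by_cases hxU : f^[(j : ℕ)] x ∈ U
  · have hyU : f^[(j : ℕ)] y ∈ U := by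
      by_contra hyU
      simp [R, hxU, hyU] at hRxy
    obtain ⟨i, hi⟩ := mem_iUnion.1 hxU
    obtain ⟨i', hi'⟩ := mem_iUnion.1 hyU
    have hii : i = i' := by
      by_contra hne
      exact absurd hd (not_le.2 (hr i i' hne _ hi _ hi'))
    have e1 := hKX _ hi
    have e2 := hKX _ hi'
    simp only [mem_preimage, mem_singleton_iff] at e1 e2
    simp only [itin]
    rw [e1, e2, hii]
  · have hyU : f^[(j : ℕ)] y ∉ U := by
      intro hyU
      simp [R, hxU, hyU] at hRxy
    simpa [R, hxU, hyU, itin] using hRxy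

end LemmaA

/-! ### Typical words -/

section Typical

variable {κ : Type*} [Fintype κ]

lemma sum_prod_eq_one (p : κ → ℝ) (hp : ∑ b, p b = 1) (L : ℕ) :
    ∑ u : Fin L → κ, ∏ i, p (u i) = 1 := by
  classical
  rw [← Fintype.piFinset_univ, Finset.sum_prod_piFinset]
  simp [hp]

/-- First and second moments of a centred sum of i.i.d. finite-valued variables. -/
lemma moments (p h : κ → ℝ) (hp : ∑ b, p b = 1) (hh : ∑ b, p b * h b = 0) (L : ℕ) :
    ∑ u : Fin L → κ, (∏ i, p (u i)) * ∑ i, h (u i) = 0 ∧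
    ∑ u : Fin L → κ, (∏ i, p (u i)) * (∑ i, h (u i)) ^ 2 = L * ∑ b, p b * h b ^ 2 := by
  induction L with
  | zero => simp
  | succ L ih =>
    have e : ∀ F : (Fin (L + 1) → κ) → ℝ, ∑ u, F u = ∑ b, ∑ v : Fin L → κ, F (Fin.cons b v) := by
      intro F
      rw [← Fintype.sum_prod_type']
      exact (Equiv.sum_comp (Fin.consEquiv fun _ => κ) F).symm
    have hone := sum_prod_eq_one p hp L
    obtain ⟨ih1, ih2⟩ := ih
    constructor
    · rw [e]
      simp only [Fin.prod_univ_succ, Fin.sum_univ_succ, Fin.cons_zero, Fin.cons_succ]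
      have : ∀ b, ∑ v : Fin L → κ, p b * (∏ i, p (v i)) * (h b + ∑ i, h (v i))
          = p b * h b * ∑ v : Fin L → κ, (∏ i, p (v i)) +
            p b * ∑ v : Fin L → κ, (∏ i, p (v i)) * ∑ i, h (v i) := by
        intro b
        rw [Finset.mul_sum, Finset.mul_sum, ← Finset.sum_add_distrib]
        exact Finset.sum_congr rfl fun v _ => by ring
      simp only [this, hone, ih1, mul_one, mul_zero, add_zero, hh]
    · rw [e]
      simp only [Fin.prod_univ_succ, Fin.sum_univ_succ, Fin.cons_zero, Fin.cons_succ]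
      have : ∀ b, ∑ v : Fin L → κ, p b * (∏ i, p (v i)) * (h b + ∑ i, h (v i)) ^ 2
          = p b * h b ^ 2 * ∑ v : Fin L → κ, (∏ i, p (v i)) +
            2 * (p b * h b) * (∑ v : Fin L → κ, (∏ i, p (v i)) * ∑ i, h (v i)) +
            p b * ∑ v : Fin L → κ, (∏ i, p (v i)) * (∑ i, h (v i)) ^ 2 := by
        intro b
        rw [Finset.mul_sum, Finset.mul_sum, Finset.mul_sum, ← Finset.sum_add_distrib,
          ← Finset.sum_add_distrib]
        exact Finset.sum_congr rfl fun v _ => by ring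
      simp only [this, hone, ih1, ih2, mul_one, mul_zero, add_zero]
      rw [Finset.sum_add_distrib, ← Finset.sum_mul, hp]
      push_cast
      ring

/-- Weak law of large numbers for finite-valued i.i.d. variables. -/
lemma weak_law (p h : κ → ℝ) (hp0 : ∀ b, 0 ≤ p b) (hp : ∑ b, p b = 1) {η τ : ℝ} (hη : 0 < η)
    (hτ : 0 < τ) :
    ∃ L0 : ℕ, ∀ L : ℕ, L0 ≤ L →
      ∑ u ∈ Finset.univ.filter (fun u : Fin L → κ =>
        η * L < |∑ i, h (u i) - L * ∑ b, p b * h b|), ∏ i, p (u i) ≤ τ := by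
  classical
  set m := ∑ b, p b * h b with hm
  set g : κ → ℝ := fun b => h b - m with hg
  have hg0 : ∑ b, p b * g b = 0 := by
    simp only [hg, mul_sub, Finset.sum_sub_distrib, ← Finset.sum_mul, hp, ← hm]
    ring
  set V := ∑ b, p b * g b ^ 2 with hV
  have hV0 : 0 ≤ V := Finset.sum_nonneg fun b _ => mul_nonneg (hp0 b) (sq_nonneg _)
  obtain ⟨L0, hL0⟩ := exists_nat_gt (V / (η ^ 2 * τ))
  refine ⟨L0 + 1, fun L hL => ?_⟩
  have hLpos : (0 : ℝ) < L := by exact_mod_cast (by omega : 0 < L)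
  have hVL : V ≤ L * (η ^ 2 * τ) := by
    rw [div_lt_iff₀ (by positivity)] at hL0
    refine hL0.le.trans ?_
    gcongr
    omega
  have hmom := (moments p g hp hg0 L).2
  have hsumg : ∀ u : Fin L → κ, ∑ i, g (u i) = ∑ i, h (u i) - L * m := by
    intro u; simp [hg]
  set S := Finset.univ.filter (fun u : Fin L → κ => η * L < |∑ i, h (u i) - L * m|) with hS
  have hP0 : ∀ u : Fin L → κ, 0 ≤ ∏ i, p (u i) := fun u => Finset.prod_nonneg fun i _ => hp0 _
  have h1 : (η * L) ^ 2 * ∑ u ∈ S, ∏ i, p (u i) ≤ L * V := by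
    rw [← hmom, Finset.mul_sum]
    refine (Finset.sum_le_sum (f := fun u => (η * L) ^ 2 * ∏ i, p (u i))
      (g := fun u => (∏ i, p (u i)) * (∑ i, g (u i)) ^ 2) fun u hu => ?_).trans
      (Finset.sum_le_univ_sum_of_nonneg fun u => mul_nonneg (hP0 u) (sq_nonneg _))
    rw [mul_comm]
    refine mul_le_mul_of_nonneg_left ?_ (hP0 u)
    rw [hsumg, ← sq_abs (_ - _)]
    have := (Finset.mem_filter.1 hu).2
    exact pow_le_pow_left₀ (by positivity) this.le 2
  have h2 : (η * L) ^ 2 * ∑ u ∈ S, ∏ i, p (u i) ≤ (η * L) ^ 2 * τ := by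
    refine h1.trans ?_
    calc L * V ≤ L * (L * (η ^ 2 * τ)) := by gcongr
      _ = _ := by ring
  exact le_of_mul_le_mul_left h2 (by positivity)

/-- Typical words: for large `L` there are at least `exp (L (H(p) - η)) / 2` words of length `L`
in which every letter `b` has frequency `η`-close to `p b`. -/
lemma exists_typical [DecidableEq κ] (p : κ → ℝ) (hp0 : ∀ b, 0 ≤ p b) (hp : ∑ b, p b = 1)
    {η : ℝ} (hη : 0 < η) :
    ∃ L0 : ℕ, ∀ L : ℕ, L0 ≤ L → ∃ 𝒰 : Finset (Fin L → κ),
      (∀ u ∈ 𝒰, ∀ b, |((Finset.univ.filter fun i => u i = b).card : ℝ) - L * p b| ≤ η * L) ∧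
      Real.exp (L * ((∑ b, Real.negMulLog (p b)) - η)) / 2 ≤ 𝒰.card := by
  classical
  set C : ℝ := ((Fintype.card κ : ℕ) : ℝ) with hC
  have hC0 : 0 ≤ C := by positivity
  have hτ : 0 < 1 / (2 * (C + 1)) := by positivity
  have hW : ∀ b, ∃ L0 : ℕ, ∀ L : ℕ, L0 ≤ L →
      ∑ u ∈ Finset.univ.filter (fun u : Fin L → κ =>
        η * L < |∑ i, (if u i = b then (1 : ℝ) else 0) -
          L * ∑ b', p b' * (if b' = b then 1 else 0)|), ∏ i, p (u i) ≤ 1 / (2 * (C + 1)) :=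
    fun b => weak_law p (fun b' => if b' = b then 1 else 0) hp0 hp hη hτ
  choose L1 hL1 using hW
  obtain ⟨L2, hL2⟩ := weak_law p (fun b => Real.log (p b)) hp0 hp hη hτ
  refine ⟨L2 + ∑ b, L1 b, fun L hL => ?_⟩
  set P : (Fin L → κ) → ℝ := fun u => ∏ i, p (u i) with hP
  have hP0 : ∀ u, 0 ≤ P u := fun u => Finset.prod_nonneg fun i _ => hp0 _
  set Bd : κ → Finset (Fin L → κ) := fun b => Finset.univ.filter (fun u : Fin L → κ =>
        η * L < |∑ i, (if u i = b then (1 : ℝ) else 0) -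
          L * ∑ b', p b' * (if b' = b then 1 else 0)|) with hBd
  set B2 : Finset (Fin L → κ) := Finset.univ.filter (fun u : Fin L → κ =>
        η * L < |∑ i, Real.log (p (u i)) - L * ∑ b, p b * Real.log (p b)|) with hB2
  set Z : Finset (Fin L → κ) := Finset.univ.filter fun u => P u = 0 with hZ
  set 𝒰 : Finset (Fin L → κ) := Finset.univ \ (Finset.univ.biUnion Bd ∪ B2 ∪ Z) with h𝒰
  have hmem : ∀ u ∈ 𝒰, (∀ b, u ∉ Bd b) ∧ u ∉ B2 ∧ P u ≠ 0 := by
    intro u hu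
    simp only [h𝒰, Finset.mem_sdiff, Finset.mem_univ, true_and, Finset.mem_union,
      Finset.mem_biUnion, not_or, not_exists] at hu
    refine ⟨hu.1.1, hu.1.2, fun h => hu.2 ?_⟩
    simp [hZ, h]
  refine ⟨𝒰, fun u hu b => ?_, ?_⟩
  · have := (hmem u hu).1 b
    simp only [hBd, Finset.mem_filter, Finset.mem_univ, true_and, not_lt] at this
    simpa [Finset.sum_boole] using this
  · set H := ∑ b, Real.negMulLog (p b) with hH
    have hup : ∀ u ∈ 𝒰, P u ≤ Real.exp (-(L * (H - η))) := by
      intro u hu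
      obtain ⟨-, h2, h3⟩ := hmem u hu
      have hne : ∀ i ∈ Finset.univ, p (u i) ≠ 0 := by
        intro i hi h0
        exact h3 (Finset.prod_eq_zero hi h0)
      have hpos : 0 < P u := lt_of_le_of_ne (hP0 u) (Ne.symm h3)
      rw [← Real.exp_log hpos, Real.exp_le_exp, hP, Real.log_prod hne]
      simp only [hB2, Finset.mem_filter, Finset.mem_univ, true_and, not_lt] at h2
      have h4 := (abs_le.1 h2).2
      have h5 : ∑ b, p b * Real.log (p b) = -H := by
        simp [hH, Real.negMulLog]
      rw [h5] at h4
      nlinarith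
    have htot := sum_prod_eq_one p hp L
    have hZ0 : ∑ u ∈ Z, P u = 0 :=
      Finset.sum_eq_zero fun u hu => (Finset.mem_filter.1 hu).2
    have hbad : ∑ u ∈ Finset.univ.biUnion Bd ∪ B2 ∪ Z, P u ≤ 1 / 2 := by
      have e2 : ∑ b, ∑ u ∈ Bd b, P u ≤ C * (1 / (2 * (C + 1))) := by
        refine (Finset.sum_le_sum fun b _ => hL1 b L ?_).trans ?_
        · have := Finset.single_le_sum (f := L1) (fun _ _ => Nat.zero_le _) (Finset.mem_univ b)
          omega
        · simp [hC]
      have e3 : ∑ u ∈ B2, P u ≤ 1 / (2 * (C + 1)) := hL2 L (by omega)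
      have e4 : ∀ s t : Finset (Fin L → κ), ∑ u ∈ s ∪ t, P u ≤ ∑ u ∈ s, P u + ∑ u ∈ t, P u := by
        intro s t
        rw [← Finset.sum_union_inter]
        exact le_add_of_nonneg_right (Finset.sum_nonneg fun u _ => hP0 u)
      have e1' : ∀ s : Finset κ, ∑ u ∈ s.biUnion Bd, P u ≤ ∑ b ∈ s, ∑ u ∈ Bd b, P u := by
        intro s
        induction s using Finset.induction_on with
        | empty => simp
        | insert b s hb ih =>
          rw [Finset.biUnion_insert, Finset.sum_insert hb]
          exact (e4 _ _).trans (by linarith)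
      have e1 := e1' Finset.univ
      have e5 := e4 (Finset.univ.biUnion Bd ∪ B2) Z
      have e6 := e4 (Finset.univ.biUnion Bd) B2
      have e7 : C * (1 / (2 * (C + 1))) + 1 / (2 * (C + 1)) = 1 / 2 := by field_simp
      linarith
    have hgood : 1 / 2 ≤ ∑ u ∈ 𝒰, P u := by
      have := Finset.sum_sdiff (f := P)
        (Finset.subset_univ (Finset.univ.biUnion Bd ∪ B2 ∪ Z))
      rw [← h𝒰] at this
      have : ∑ u, P u = 1 := htot
      linarith
    have h6 : ∑ u ∈ 𝒰, P u ≤ 𝒰.card * Real.exp (-(L * (H - η))) := by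
      refine (Finset.sum_le_sum hup).trans ?_
      simp
    have h7 : 1 / 2 ≤ 𝒰.card * Real.exp (-(L * (H - η))) := hgood.trans h6
    rw [Real.exp_neg, ← div_eq_mul_inv, le_div_iff₀ (Real.exp_pos _)] at h7
    linarith

end Typical

end SE

namespace SE

/-! ### One-sided shadowing and free concatenations of orbit words -/

section Levels

variable {M : Type*} [MetricSpace M]

/-- Shadowing of pseudo-orbits indexed by `ℕ`: such a pseudo-orbit is extended to negative times
by an exact backward orbit. -/
lemma shadow_nat {f : M → M} (hf : Function.Surjective f) (hsh : ShadowingProperty f)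
    {ε : ℝ} (hε : 0 < ε) :
    ∃ δ : ℝ, 0 < δ ∧ ∀ x : ℕ → M, (∀ n, dist (f (x n)) (x (n + 1)) ≤ δ) →
      ∃ z : M, ∀ n, dist (f^[n] z) (x n) ≤ ε := by
  obtain ⟨δ, hδ, H⟩ := hsh ε hε
  refine ⟨δ, hδ, fun x hx => ?_⟩
  obtain ⟨g, hg⟩ := hf.hasRightInverse
  let X : ℤ → M := fun k => match k with
    | Int.ofNat n => x n
    | Int.negSucc n => g^[n + 1] (x 0)
  obtain ⟨z, hz, hzX⟩ := H X (by
    intro k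
    match k with
    | Int.ofNat n => exact hx n
    | Int.negSucc 0 =>
      have : X (Int.negSucc 0 + 1) = x 0 := rfl
      rw [this]
      simp only [X, zero_add, Function.iterate_one, hg (x 0), dist_self]
      exact hδ.le
    | Int.negSucc (n + 1) =>
      have e : Int.negSucc (n + 1) + 1 = Int.negSucc n := by omega
      rw [e]
      simp only [X]
      rw [Function.iterate_succ_apply' g (n + 1), hg, dist_self]
      exact hδ.le)
  refine ⟨z 0, fun n => ?_⟩
  have hzn : ∀ n : ℕ, z n = f^[n] (z 0) := by
    intro n
    induction n with
    | zero => rfl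
    | succ n ih => rw [Function.iterate_succ_apply', ← ih, ← hz]; norm_cast
  rw [← hzn]
  exact hzX n

/-- A finite family of words (points `w a 0, …, w a (n-1)` of `M` for `a < N`) of common
length `n`. -/
structure Level (M : Type*) where
  /-- common length of the words -/
  n : ℕ
  /-- number of words -/
  N : ℕ
  hn : 0 < n
  hN : 0 < N
  /-- the words; only the values at times less than `n` matter -/
  w : Fin N → ℕ → M

/-- The infinite concatenation of the words `w (x 0), w (x 1), …`. -/
def Level.conc (W : Level M) (x : ℕ → Fin W.N) (m : ℕ) : M := W.w (x (m / W.n)) (m % W.n)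

lemma Level.conc_mul_add (W : Level M) (x : ℕ → Fin W.N) (q : ℕ) {i : ℕ} (hi : i < W.n) :
    W.conc x (q * W.n + i) = W.w (x q) i := by
  have h1 : (q * W.n + i) / W.n = q := by
    rw [mul_comm, Nat.mul_add_div W.hn, Nat.div_eq_of_lt hi, add_zero]
  have h2 : (q * W.n + i) % W.n = i := by
    rw [mul_comm, Nat.mul_add_mod, Nat.mod_eq_of_lt hi]
  rw [Level.conc, h1, h2]

/-- Every free concatenation of words of `W` is `ε`-traced by a true orbit. -/
def Level.Traced (W : Level M) (f : M → M) (ε : ℝ) : Prop :=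
  ∀ x : ℕ → Fin W.N, ∃ z : M, ∀ m, dist (f^[m] z) (W.conc x m) ≤ ε

lemma Level.conc_step (W : Level M) {f : M → M} {δ : ℝ}
    (h1 : ∀ a i, i + 1 < W.n → dist (f (W.w a i)) (W.w a (i + 1)) ≤ δ)
    (h2 : ∀ a b, dist (f (W.w a (W.n - 1))) (W.w b 0) ≤ δ) (x : ℕ → Fin W.N) (m : ℕ) :
    dist (f (W.conc x m)) (W.conc x (m + 1)) ≤ δ := by
  have hn := W.hn
  have hi : m % W.n < W.n := Nat.mod_lt _ hn
  have hm : m = m / W.n * W.n + m % W.n := by rw [mul_comm]; exact (Nat.div_add_mod m W.n).symm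
  rw [hm]
  generalize m / W.n = q at *
  generalize m % W.n = i at *
  rw [W.conc_mul_add x q hi]
  by_cases h : i + 1 < W.n
  · rw [add_assoc, W.conc_mul_add x q h]
    exact h1 _ _ h
  · have e : q * W.n + i + 1 = (q + 1) * W.n + 0 := by
      rw [add_mul]; omega
    rw [e, W.conc_mul_add x (q + 1) hn]
    have : i = W.n - 1 := by omega
    rw [this]
    exact h2 _ _

/-- One step of the construction: the words of `W'` are, up to `ε`, concatenations of `ℓ` words
of `W` along itineraries `u a`, in which all words of `W` occur with almost the same frequency;
and hardly any exponential growth is lost. -/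
structure StepRel (ε η : ℝ) (W W' : Level M) where
  ℓ : ℕ
  two_le : 2 ≤ ℓ
  n_eq : W'.n = ℓ * W.n
  /-- itinerary of a word of `W'` through words of `W` -/
  u : Fin W'.N → ℕ → Fin W.N
  inj : ∀ a b, (∀ q < ℓ, u a q = u b q) → a = b
  close : ∀ a q i, q < ℓ → i < W.n → dist (W'.w a (q * W.n + i)) (W.w (u a q) i) ≤ ε
  freq : ∀ a, ∑ b, |(((Finset.range ℓ).filter fun q => u a q = b).card : ℝ) - ℓ / W.N| ≤ η * ℓ
  ent : Real.log W.N / W.n - η ≤ Real.log W'.N / W'.n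

lemma exists_frequently_of_finite {ι : Type*} [Finite ι] {P : ι → ℕ → Prop}
    (h : ∃ᶠ j in atTop, ∃ i, P i j) : ∃ i, ∃ᶠ j in atTop, P i j := by
  by_contra! hc
  have := eventually_all.2 hc
  exact h (this.mono fun j hj => by simpa using hj)

/-- A sequence over a finite alphabet in which every finite word occurs infinitely often. -/
lemma exists_rich (N : ℕ) (hN : 0 < N) :
    ∃ x : ℕ → Fin N, ∀ (L : ℕ) (u : Fin L → Fin N) (J : ℕ),
      ∃ j, J ≤ j ∧ ∀ i : Fin L, x (j + i) = u i := by
  have : Inhabited (Fin N) := ⟨⟨0, hN⟩⟩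
  -- the dyadic block `[2 ^ k, 2 ^ (k + 1))` carries the list coded by the first half of `k`
  let x : ℕ → Fin N := fun m =>
    ((Encodable.decode (α := List (Fin N)) (Nat.log 2 m).unpair.1).getD []).getD
      (m - 2 ^ Nat.log 2 m) default
  refine ⟨x, fun L u J => ?_⟩
  let e := Encodable.encode (List.ofFn u)
  let k := Nat.pair e (J + L)
  have hk : J + L ≤ k := Nat.right_le_pair _ _
  have hk2 : k < 2 ^ k := Nat.lt_two_pow_self
  refine ⟨2 ^ k, by omega, fun i => ?_⟩
  have hlog : Nat.log 2 (2 ^ k + i) = k := by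
    refine Nat.log_eq_of_pow_le_of_lt_pow (by omega) ?_
    rw [pow_succ]
    have := i.2
    omega
  have hun : k.unpair.1 = e := by simp [k]
  simp only [x, hlog, hun, e, Encodable.encodek, Option.getD_some, Nat.add_sub_cancel_left]
  rw [List.getD_eq_getElem _ _ (by simp)]
  simp

/-- A compact space has finite labellings whose cells have arbitrarily small diameter. -/
lemma exists_label [CompactSpace M] {δ : ℝ} (hδ : 0 < δ) :
    ∃ (p : ℕ) (κ : M → Fin p), ∀ x y, κ x = κ y → dist x y ≤ δ := by
  classical
  obtain ⟨t, -, htf, ht⟩ := (isCompact_univ (X := M)).finite_cover_balls (half_pos hδ)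
  have := htf.fintype
  have hx : ∀ x : M, ∃ c : t, dist x c < δ / 2 := by
    intro x
    obtain ⟨c, hc, hxc⟩ := mem_iUnion₂.1 (ht (mem_univ x))
    exact ⟨⟨c, hc⟩, hxc⟩
  choose κ hκ using hx
  refine ⟨Fintype.card t, fun x => Fintype.equivFin t (κ x), fun x y h => ?_⟩
  have h' : κ x = κ y := (Fintype.equivFin t).injective h
  have h1 := hκ x
  have h2 := hκ y
  rw [← h'] at h2
  have := dist_triangle_right x y (κ x)
  linarith

end Levels

end SE

namespace SE

/-! ### Refining a family of words -/

section StepLemma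

variable {M : Type*} [MetricSpace M]

lemma card_filter_range_add {N : ℕ} (v : ℕ → Fin N) (L τ : ℕ) (b : Fin N) :
    ((Finset.range (L + τ)).filter fun q => v q = b).card =
      (Finset.univ.filter fun i : Fin L => v i = b).card +
      ((Finset.range τ).filter fun q => v (L + q) = b).card := by
  have e : ∀ (K : ℕ) (g : ℕ → Fin N), ((Finset.range K).filter fun q => g q = b).card =
      ∑ q ∈ Finset.range K, if g q = b then 1 else 0 := by
    intro K g; rw [Finset.card_filter]
  rw [e, e τ fun q => v (L + q), Finset.sum_range_add, Finset.card_filter, Finset.sum_range]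

/-- Refinement of a traced family of words. All words of `W'` are orbit segments of one point
`z₀` tracing a concatenation of `W`-words that contains every finite pattern infinitely often:
a segment following a typical pattern, and a segment of bounded length returning to the start. -/
lemma exists_step [CompactSpace M] {f : M → M} (hf : Function.Surjective f)
    (hsh : ShadowingProperty f) (W : Level M) {ε ε' η : ℝ} (hW : W.Traced f ε) (hε' : 0 < ε')
    (hη : 0 < η) :
    ∃ W' : Level M, W'.Traced f ε' ∧ Nonempty (StepRel ε η W W') := by
  classical
  obtain ⟨δ, hδ, Hδ⟩ := shadow_nat hf hsh hε'
  obtain ⟨p, κ, hκ⟩ := exists_label (M := M) hδ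
  obtain ⟨x0, hx0⟩ := exists_rich W.N W.hN
  obtain ⟨z0, hz0⟩ := hW x0
  have hn := W.hn
  have hNpos : (0 : ℝ) < W.N := by exact_mod_cast W.hN
  have hp : 0 < p := lt_of_le_of_lt (Nat.zero_le _) (κ z0).2
  have hppos : (0 : ℝ) < p := by exact_mod_cast hp
  let c : ℕ → Fin p := fun j => κ (f^[j * W.n] z0)
  let I : Set (Fin p) := {A | ∃ᶠ j in atTop, c j = A}
  -- Any two cells visited infinitely often along the rich orbit are joined, in either order, by a
  -- segment of that orbit; finitely many such segments suffice, so their lengths are bounded by `T`.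
  have hret : ∀ BA : Fin p × Fin p, ∃ j : ℕ × ℕ, BA.1 ∈ I → BA.2 ∈ I →
      j.1 < j.2 ∧ c j.1 = BA.1 ∧ c j.2 = BA.2 := by
    rintro ⟨B, A⟩
    by_cases h : B ∈ I ∧ A ∈ I
    · obtain ⟨j1, -, h1⟩ := (frequently_atTop.1 h.1) 0
      obtain ⟨j2, hj2, h2⟩ := (frequently_atTop.1 h.2) (j1 + 1)
      exact ⟨(j1, j2), fun _ _ => ⟨by omega, h1, h2⟩⟩
    · exact ⟨(0, 0), fun h1 h2 => absurd ⟨h1, h2⟩ h⟩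
  choose J hJ using hret
  let T : ℕ := ∑ BA, ((J BA).2 - (J BA).1)
  have hT : ∀ BA, (J BA).2 - (J BA).1 ≤ T := fun BA =>
    Finset.single_le_sum (f := fun BA => (J BA).2 - (J BA).1) (fun _ _ => Nat.zero_le _)
      (Finset.mem_univ BA)
  set η1 : ℝ := η / (2 * W.N) with hη1
  have hη1pos : 0 < η1 := by positivity
  have hη1le : η1 ≤ η / 2 := by
    rw [hη1]
    have : (1 : ℝ) ≤ W.N := by exact_mod_cast W.hN
    gcongr
    linarith
  have hHN : ∑ _b : Fin W.N, Real.negMulLog (1 / (W.N : ℝ)) = Real.log W.N := by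
    simp only [Finset.sum_const, Finset.card_univ, Fintype.card_fin, nsmul_eq_mul,
      Real.negMulLog, one_div, Real.log_inv]
    field_simp
  obtain ⟨L0, hL0⟩ := exists_typical (fun _ : Fin W.N => 1 / (W.N : ℝ))
    (fun _ => by positivity) (by simp [hNpos.ne']) hη1pos
  set Q : ℝ := T * Real.log W.N + Real.log 2 + 2 * Real.log p + 2 * T with hQ
  obtain ⟨L1, hL1⟩ := exists_nat_gt (Q / (η / 2))
  obtain ⟨L2, hL2⟩ := exists_nat_gt (2 * (T : ℝ) / (η / 2))
  set L : ℕ := L0 + L1 + L2 + 1 with hL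
  have hLQ : Q ≤ L * (η / 2) := by
    rw [div_lt_iff₀ (by positivity)] at hL1
    refine hL1.le.trans ?_
    gcongr
    omega
  have hLT : 2 * (T : ℝ) ≤ L * (η / 2) := by
    rw [div_lt_iff₀ (by positivity)] at hL2
    refine hL2.le.trans ?_
    gcongr
    omega
  have hL1' : 1 ≤ L := by omega
  have hLL0 : L0 ≤ L := by omega
  clear_value L
  obtain ⟨𝒰, h𝒰f, h𝒰c⟩ := hL0 L (by omega)
  rw [hHN] at h𝒰c
  -- Every pattern occurs infinitely often, so by pigeonhole infinitely often with the same start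
  -- and end cells, which are then recurrent.
  have hocc : ∀ u : Fin L → Fin W.N, ∃ AB : Fin p × Fin p, ∃ᶠ j in atTop,
      (∀ i : Fin L, x0 (j + i) = u i) ∧ c j = AB.1 ∧ c (j + L) = AB.2 := by
    intro u
    refine exists_frequently_of_finite ?_
    refine frequently_atTop.2 fun a => ?_
    obtain ⟨j, hj, hju⟩ := hx0 L u a
    exact ⟨j, hj, (c j, c (j + L)), hju, rfl, rfl⟩
  choose AB hAB using hocc
  have hABI : ∀ u, (AB u).1 ∈ I ∧ (AB u).2 ∈ I := by
    intro u
    constructor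
    · exact (hAB u).mono fun j hj => hj.2.1
    · refine frequently_atTop.2 fun a => ?_
      obtain ⟨j, hj, hju⟩ := (frequently_atTop.1 (hAB u)) a
      exact ⟨j + L, by omega, hju.2.2⟩
  have hoccj : ∀ u, ∃ j, (∀ i : Fin L, x0 (j + i) = u i) ∧ c j = (AB u).1 ∧
      c (j + L) = (AB u).2 := fun u => (hAB u).exists
  choose ju hju using hoccj
  -- Fixing the start and end cells costs only the factor `p * p`, and lets one return segment close
  -- up all the remaining patterns, so that the resulting loops can be freely concatenated.
  obtain ⟨D, hD⟩ : ∃ D : Fin p × Fin p,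
      (𝒰.card : ℝ) / (p * p) ≤ (𝒰.filter fun u => AB u = D).card := by
    have h1 : (𝒰.card : ℝ) = ∑ D : Fin p × Fin p, ((𝒰.filter fun u => AB u = D).card : ℝ) := by
      have := Finset.card_eq_sum_card_fiberwise (f := AB) (s := 𝒰) (t := Finset.univ)
        (fun _ _ => Finset.mem_coe.2 (Finset.mem_univ _))
      exact_mod_cast this
    by_contra! hcon
    have hne : (Finset.univ : Finset (Fin p × Fin p)).Nonempty := ⟨(κ z0, κ z0), by simp⟩
    have := Finset.sum_lt_sum_of_nonempty hne fun D _ => hcon D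
    rw [← h1] at this
    simp only [Finset.sum_const, Finset.card_univ, Fintype.card_prod, Fintype.card_fin,
      nsmul_eq_mul, Nat.cast_mul] at this
    rw [mul_div_cancel₀ _ (by positivity)] at this
    exact lt_irrefl _ this
  set 𝒱 := 𝒰.filter fun u => AB u = D with h𝒱
  have h𝒱ge : Real.exp (L * (Real.log W.N - η1)) / 2 / (p * p) ≤ 𝒱.card :=
    le_trans (by gcongr) hD
  have h𝒱pos : (0 : ℝ) < 𝒱.card := lt_of_lt_of_le (by positivity) h𝒱ge
  have hcard : 0 < 𝒱.card := by exact_mod_cast h𝒱pos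
  let e : Fin 𝒱.card ≃ 𝒱 := 𝒱.equivFin.symm
  let U : Fin 𝒱.card → Fin L → Fin W.N := fun a => (e a : Fin L → Fin W.N)
  have hUmem : ∀ a, U a ∈ 𝒰 ∧ AB (U a) = D := fun a => Finset.mem_filter.1 (e a).2
  have hDI : D.1 ∈ I ∧ D.2 ∈ I := by
    have := hABI (U ⟨0, hcard⟩)
    rwa [(hUmem _).2] at this
  obtain ⟨hJlt, hJ1, hJ2⟩ := hJ (D.2, D.1) hDI.2 hDI.1
  have hTJ := hT (D.2, D.1)
  set j1 := (J (D.2, D.1)).1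
  set j2 := (J (D.2, D.1)).2
  set τ : ℕ := j2 - j1 with hτ
  have hτ1 : 1 ≤ τ := by omega
  have hUj : ∀ a, (∀ i : Fin L, x0 (ju (U a) + i) = U a i) ∧ c (ju (U a)) = D.1 ∧
      c (ju (U a) + L) = D.2 := by
    intro a
    have := hju (U a)
    rwa [(hUmem a).2] at this
  let W' : Level M :=
    { n := (L + τ) * W.n
      N := 𝒱.card
      hn := by positivity
      hN := hcard
      w := fun a m => if m < L * W.n then f^[ju (U a) * W.n + m] z0
        else f^[j1 * W.n + (m - L * W.n)] z0 }
  have hLn : 0 < L * W.n := Nat.mul_pos (by omega) hn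
  have hn' : W'.n = L * W.n + τ * W.n := by simp only [W']; ring
  have hτn : 0 < τ * W.n := Nat.mul_pos (by omega) hn
  have hcell : ∀ i j, c i = c j → dist (f^[i * W.n] z0) (f^[j * W.n] z0) ≤ δ :=
    fun i j h => hκ _ _ h
  refine ⟨W', ?_, ⟨?_⟩⟩
  · intro x
    refine Hδ _ fun m => W'.conc_step (δ := δ) ?_ ?_ x m
    · intro a i hi
      by_cases h1 : i + 1 < L * W.n
      · have h2 : i < L * W.n := by omega
        simp only [W', h1, h2, if_true]
        rw [← Function.iterate_succ_apply' f, ← add_assoc, dist_self]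
        exact hδ.le
      · by_cases h2 : i < L * W.n
        · simp only [W', h1, h2, if_true, if_false]
          rw [← Function.iterate_succ_apply' f]
          have e1 : (ju (U a) * W.n + i).succ = (ju (U a) + L) * W.n := by
            rw [add_mul]; omega
          have e2 : j1 * W.n + (i + 1 - L * W.n) = j1 * W.n := by omega
          rw [e1, e2]
          exact hcell _ _ ((hUj a).2.2.trans hJ1.symm)
        · simp only [W', h1, h2, if_false]
          rw [← Function.iterate_succ_apply' f]
          have e1 : (j1 * W.n + (i - L * W.n)).succ = j1 * W.n + (i + 1 - L * W.n) := by omega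
          rw [e1, dist_self]
          exact hδ.le
    · intro a b
      have h2 : ¬ (W'.n - 1 < L * W.n) := by omega
      have e1 : W'.w a (W'.n - 1) = f^[j1 * W.n + (W'.n - 1 - L * W.n)] z0 := if_neg h2
      have e2 : W'.w b 0 = f^[ju (U b) * W.n + 0] z0 := if_pos hLn
      rw [e1, e2, ← Function.iterate_succ_apply' f]
      have e3 : (j1 * W.n + (W'.n - 1 - L * W.n)).succ = j2 * W.n := by
        have : j2 = j1 + τ := by omega
        rw [this, add_mul]; omega
      rw [e3, add_zero]
      exact hcell _ _ (hJ2.trans (hUj b).2.1.symm)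
  · let v : Fin 𝒱.card → ℕ → Fin W.N := fun a q =>
      if q < L then x0 (ju (U a) + q) else x0 (j1 + (q - L))
    have hvL : ∀ a (i : Fin L), v a i = U a i := by
      intro a i
      simp only [v, i.2, if_true]
      exact (hUj a).1 i
    refine
      { ℓ := L + τ
        two_le := by omega
        n_eq := rfl
        u := v
        inj := ?_
        close := ?_
        freq := ?_
        ent := ?_ }
    · intro a b hab
      refine e.injective (Subtype.ext ?_)
      funext i
      have := hab i (by have := i.2; omega)
      rw [hvL, hvL] at this
      exact this
    · intro a q i hq hi
      have key : ∀ k, dist (f^[k * W.n + i] z0) (W.w (x0 k) i) ≤ ε := by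
        intro k
        rw [← W.conc_mul_add x0 k hi]
        exact hz0 _
      by_cases h : q < L
      · have h1 : q * W.n + i < L * W.n := by
          have : (q + 1) * W.n ≤ L * W.n := Nat.mul_le_mul_right _ h
          rw [add_mul] at this; omega
        simp only [W', v, h1, h, if_true]
        have := key (ju (U a) + q)
        rwa [add_mul, add_assoc] at this
      · have h1 : ¬ (q * W.n + i < L * W.n) := by
          have : L * W.n ≤ q * W.n := Nat.mul_le_mul_right _ (not_lt.1 h)
          omega
        simp only [W', v, h1, h, if_false]
        have := key (j1 + (q - L))
        have e1 : (j1 + (q - L)) * W.n + i = j1 * W.n + (q * W.n + i - L * W.n) := by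
          have h3 : L * W.n ≤ q * W.n := Nat.mul_le_mul_right _ (not_lt.1 h)
          rw [add_mul, Nat.sub_mul]; omega
        rwa [e1] at this
    · intro a
      have htyp := h𝒰f (U a) (hUmem a).1
      have hb : ∀ b, |(((Finset.range (L + τ)).filter fun q => v a q = b).card : ℝ)
          - ((L + τ : ℕ) : ℝ) / W.N| ≤ η1 * L +
            ((((Finset.range τ).filter fun q => v a (L + q) = b).card : ℝ) + τ / W.N) := by
        intro b
        rw [card_filter_range_add]
        have h1 := htyp b
        have h2 : (Finset.univ.filter fun i : Fin L => v a i = b) =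
            Finset.univ.filter fun i : Fin L => U a i = b := by
          ext i; simp [hvL]
        rw [h2]
        push_cast
        set r : ℝ := (((Finset.range τ).filter fun q => v a (L + q) = b).card : ℝ)
        have hr : 0 ≤ r := by positivity
        have hτN : 0 ≤ (τ : ℝ) / W.N := by positivity
        have h3 : (L : ℝ) * (1 / W.N) = L / W.N := by ring
        rw [h3] at h1
        rw [abs_le] at h1 ⊢
        rw [add_div]
        constructor <;> linarith [h1.1, h1.2]
      refine (Finset.sum_le_sum fun b _ => hb b).trans ?_
      rw [Finset.sum_add_distrib, Finset.sum_add_distrib]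
      have h4 : ∑ b, (((Finset.range τ).filter fun q => v a (L + q) = b).card : ℝ) = τ := by
        have := Finset.card_eq_sum_card_fiberwise (f := fun q => v a (L + q))
          (s := Finset.range τ) (t := Finset.univ) (fun _ _ => Finset.mem_coe.2 (Finset.mem_univ _))
        rw [Finset.card_range] at this
        exact_mod_cast this.symm
      rw [h4]
      simp only [Finset.sum_const, Finset.card_univ, Fintype.card_fin, nsmul_eq_mul]
      have h5 : (W.N : ℝ) * (η1 * L) = L * (η / 2) := by rw [hη1]; field_simp
      have h6 : (W.N : ℝ) * ((τ : ℝ) / W.N) = τ := by field_simp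
      rw [h5, h6]
      have h7 : (τ : ℝ) ≤ T := by exact_mod_cast hTJ
      push_cast
      have : 0 ≤ η * τ := by positivity
      nlinarith
    · have hlog : L * (Real.log W.N - η1) - Real.log 2 - 2 * Real.log p ≤ Real.log 𝒱.card := by
        have := Real.log_le_log (by positivity) h𝒱ge
        rw [Real.log_div (by positivity) (by positivity), Real.log_div (by positivity) (by norm_num),
          Real.log_exp, Real.log_mul hppos.ne' hppos.ne'] at this
        linarith
      have hn'pos : (0 : ℝ) < W'.n := by exact_mod_cast W'.hn
      have hWn1 : (1 : ℝ) ≤ W.n := by exact_mod_cast hn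
      have hWn : (0 : ℝ) < W.n := by linarith
      change Real.log W.N / W.n - η ≤ Real.log 𝒱.card / W'.n
      rw [le_div_iff₀ hn'pos]
      refine le_trans ?_ hlog
      have e1 : (W'.n : ℝ) = (L + τ) * W.n := by
        rw [hn']; push_cast; ring
      rw [e1]
      have e2 : (Real.log W.N / W.n - η) * ((L + τ) * W.n) =
          (L + τ) * Real.log W.N - η * (L + τ) * W.n := by field_simp
      rw [e2]
      have h7 : (τ : ℝ) ≤ T := by exact_mod_cast hTJ
      have h8 : 0 ≤ Real.log W.N := Real.log_natCast_nonneg _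
      have h9 : (τ : ℝ) * Real.log W.N ≤ T * Real.log W.N := by gcongr
      have h10 : η * L ≤ η * (L + τ) * W.n := by
        have : η * L ≤ η * (L + τ) := by gcongr; simp
        have h0 : 0 ≤ η * (L + τ) := by positivity
        nlinarith
      have h11 : (L : ℝ) * η1 ≤ L * (η / 2) := by gcongr
      have hT0 : (0 : ℝ) ≤ T := by positivity
      linarith

end StepLemma

end SE

namespace SE

/-! ### Pseudo-orbit lists -/

section Lists

variable {M : Type*} [MetricSpace M]

/-- `PO f δ y l y'`: the list `l` is a `δ`-pseudo-orbit whose first point is `δ`-close to `y` and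
whose last point is mapped to `y'` by `f`. -/
def PO (f : M → M) (δ : ℝ) : M → List M → M → Prop
  | y, [], y' => y = y'
  | y, x :: l, y' => dist y x ≤ δ ∧ PO f δ (f x) l y'

lemma PO.append {f : M → M} {δ : ℝ} {l l' : List M} {y y' y'' : M} (h : PO f δ y l y')
    (h' : PO f δ y' l' y'') : PO f δ y (l ++ l') y'' := by
  induction l generalizing y with
  | nil => cases h; exact h'
  | cons x l ih => exact ⟨h.1, ih h.2⟩

/-- The orbit segment `q, f q, …, f^(t-1) q`. -/
def seg {M : Type*} (f : M → M) (q : M) (t : ℕ) : List M := (List.range t).map fun j => f^[j] q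

lemma seg_succ {M : Type*} (f : M → M) (q : M) (t : ℕ) :
    seg f q (t + 1) = q :: seg f (f q) t := by
  simp [seg, List.range_succ_eq_map, Function.comp_def]

@[simp] lemma length_seg {M : Type*} (f : M → M) (q : M) (t : ℕ) : (seg f q t).length = t := by
  simp [seg]

lemma PO.seg {f : M → M} {δ : ℝ} (hδ : 0 ≤ δ) {y q : M} {t : ℕ} (ht : 0 < t)
    (h : dist y q ≤ δ) : PO f δ y (SE.seg f q t) (f^[t] q) := by
  induction t generalizing y q with
  | zero => omega
  | succ t ih =>
    rw [seg_succ, Function.iterate_succ_apply]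
    refine ⟨h, ?_⟩
    rcases Nat.eq_zero_or_pos t with rfl | ht'
    · exact rfl
    · exact ih ht' (by simpa using hδ)

lemma PO.step {f : M → M} {δ : ℝ} {l : List M} {y y' : M} (h : PO f δ y l y') (d : M) {i : ℕ}
    (hi : i + 1 < l.length) : dist (f (l.getD i d)) (l.getD (i + 1) d) ≤ δ := by
  induction l generalizing y i with
  | nil => simp at hi
  | cons x l ih =>
    cases i with
    | zero =>
      cases l with
      | nil => simp at hi
      | cons x' l => simpa using h.2.1
    | succ i => simpa using ih h.2 (i := i) (by simpa using hi)

lemma PO.first {f : M → M} {δ : ℝ} {l : List M} {y y' : M} (h : PO f δ y l y') (d : M)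
    (hl : 0 < l.length) : dist y (l.getD 0 d) ≤ δ := by
  cases l with
  | nil => simp at hl
  | cons x l => simpa using h.1

lemma PO.last {f : M → M} {δ : ℝ} {l : List M} {y y' : M} (h : PO f δ y l y') (d : M)
    (hl : 0 < l.length) : f (l.getD (l.length - 1) d) = y' := by
  induction l generalizing y with
  | nil => simp at hl
  | cons x l ih =>
    cases l with
    | nil => exact h.2
    | cons x' l => simpa using ih h.2 (by simp)

lemma sum_range_getD {M : Type*} (l : List M) (d : M) (g : M → ℝ) :
    ∑ i ∈ Finset.range l.length, g (l.getD i d) = (l.map g).sum := by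
  induction l with
  | nil => simp
  | cons x l ih =>
    rw [List.length_cons, Finset.sum_range_succ']
    simp only [List.getD_cons_succ, List.getD_cons_zero, ih, List.map_cons, List.sum_cons]
    ring

lemma sum_map_seg {M : Type*} (f : M → M) (q : M) (t : ℕ) (g : M → ℝ) :
    ((seg f q t).map g).sum = ∑ j ∈ Finset.range t, g (f^[j] q) := by
  induction t with
  | zero => simp [seg]
  | succ t ih =>
    rw [Finset.sum_range_succ, ← ih]
    simp [seg, List.range_succ]

lemma abs_sum_map_le {M : Type*} (l : List M) (g : M → ℝ) {C : ℝ} (hg : ∀ x, |g x| ≤ C) :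
    |(l.map g).sum| ≤ l.length * C := by
  induction l with
  | nil => simp
  | cons x l ih =>
    simp only [List.map_cons, List.sum_cons, List.length_cons, Nat.cast_add, Nat.cast_one]
    have := abs_add_le (g x) (l.map g).sum
    have := hg x
    linarith

lemma forall₂_append_of_length {α β : Type*} {R : α → β → Prop} {a c : List α} {b d : List β}
    (hl : a.length = b.length) (h : List.Forall₂ R (a ++ c) (b ++ d)) :
    List.Forall₂ R a b ∧ List.Forall₂ R c d := by
  induction a generalizing b with
  | nil => cases b with
    | nil => exact ⟨List.Forall₂.nil, h⟩
    | cons y b => simp at hl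
  | cons x a ih => cases b with
    | nil => simp at hl
    | cons y b =>
      simp only [List.cons_append, List.forall₂_cons] at h ⊢
      have := ih (by simpa using hl) h.2
      exact ⟨⟨h.1, this.1⟩, this.2⟩

lemma forall₂_of_getD {α : Type*} {R : α → α → Prop} {l l' : List α} (d : α)
    (hl : l.length = l'.length) (h : ∀ i < l.length, R (l.getD i d) (l'.getD i d)) :
    List.Forall₂ R l l' := by
  induction l generalizing l' with
  | nil => cases l' with
    | nil => exact List.Forall₂.nil
    | cons y b => simp at hl
  | cons x a ih => cases l' with
    | nil => simp at hl
    | cons y b =>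
      refine List.Forall₂.cons (by simpa using h 0 (by simp)) (ih (by simpa using hl) ?_)
      intro i hi
      simpa using h (i + 1) (by simpa using hi)

lemma forall₂_seg {M : Type*} {R : M → M → Prop} {f : M → M} {q q' : M} {t : ℕ}
    (h : List.Forall₂ R (seg f q t) (seg f q' t)) : ∀ j < t, R (f^[j] q) (f^[j] q') := by
  intro j hj
  have := h.get (i := j) (by simpa using hj) (by simpa using hj)
  simpa [seg] using this

/-- Data for a loop through the `b`-th orbit segment: a connecting segment of length `s b`, the
segment of length `m` of `e b`, and a connecting segment of length `sOut b`. -/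
structure Blk (M : Type*) (k : ℕ) where
  m : ℕ
  e : Fin k → M
  s : Fin k → ℕ
  sOut : Fin k → ℕ
  q : Fin k → M
  qOut : Fin k → M

/-- The `b`-th loop. -/
def Blk.bl {k : ℕ} (D : Blk M k) (f : M → M) (b : Fin k) : List M :=
  seg f (D.q b) (D.s b) ++ (seg f (D.e b) D.m ++ seg f (D.qOut b) (D.sOut b))

/-- The concatenation of the loops listed in `us`. -/
def Blk.word {k : ℕ} (D : Blk M k) (f : M → M) (us : List (Fin k)) : List M :=
  us.flatMap (D.bl f)

lemma Blk.length_word {k : ℕ} (D : Blk M k) (f : M → M) (us : List (Fin k)) :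
    (D.word f us).length =
      ((us.map fun b => (D.s b, D.sOut b)).map fun a => a.1 + (D.m + a.2)).sum := by
  induction us with
  | nil => simp [Blk.word]
  | cons b us ih =>
    simp only [Blk.word] at ih
    simp [Blk.word, Blk.bl, ih, add_assoc]

lemma Blk.word_PO {k : ℕ} (D : Blk M k) {f : M → M} {δ : ℝ} (p0 : M)
    (hb : ∀ b y, dist y p0 ≤ δ / 2 → ∃ y', dist y' p0 ≤ δ / 2 ∧ PO f δ y (D.bl f b) y')
    (us : List (Fin k)) :
    ∀ y, dist y p0 ≤ δ / 2 → ∃ y', dist y' p0 ≤ δ / 2 ∧ PO f δ y (D.word f us) y' := by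
  induction us with
  | nil => exact fun y hy => ⟨y, hy, rfl⟩
  | cons b us ih =>
    intro y hy
    obtain ⟨y', hy', h1⟩ := hb b y hy
    obtain ⟨y'', hy'', h2⟩ := ih y' hy'
    exact ⟨y'', hy'', h1.append h2⟩

lemma Blk.word_sep {k : ℕ} (D : Blk M k) {f : M → M} {ρ : ℝ}
    (hsep : ∀ b b', (∀ j < D.m, dist (f^[j] (D.e b)) (f^[j] (D.e b')) ≤ ρ) → b = b')
    (us vs : List (Fin k))
    (hpat : (us.map fun b => (D.s b, D.sOut b)) = vs.map fun b => (D.s b, D.sOut b))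
    (h : List.Forall₂ (fun x y => dist x y ≤ ρ) (D.word f us) (D.word f vs)) : us = vs := by
  induction us generalizing vs with
  | nil => cases vs with
    | nil => rfl
    | cons b vs => simp at hpat
  | cons b us ih => cases vs with
    | nil => simp at hpat
    | cons b' vs =>
      simp only [List.map_cons, List.cons.injEq, Prod.mk.injEq] at hpat
      obtain ⟨⟨hs, hs'⟩, hrest⟩ := hpat
      simp only [Blk.word, List.flatMap_cons] at h
      obtain ⟨h1, h2⟩ := forall₂_append_of_length (by simp [Blk.bl, hs, hs']) h
      simp only [Blk.bl] at h1
      obtain ⟨-, h3⟩ := forall₂_append_of_length (by simp [hs]) h1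
      obtain ⟨h4, -⟩ := forall₂_append_of_length (by simp) h3
      rw [hsep b b' (forall₂_seg h4), ih vs hrest h2]

lemma Blk.word_sum {k : ℕ} (D : Blk M k) {f : M → M} {T : ℕ} (hs : ∀ b, D.s b ≤ T)
    (hs' : ∀ b, D.sOut b ≤ T) (g : M → ℝ) {C : ℝ} (hC : 0 ≤ C) (hg : ∀ x, |g x| ≤ C)
    (us : List (Fin k)) :
    |((D.word f us).map g).sum - (us.map fun b => ∑ j ∈ Finset.range D.m, g (f^[j] (D.e b))).sum|
      ≤ us.length * (2 * T * C) := by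
  induction us with
  | nil => simp [Blk.word]
  | cons b us ih =>
    simp only [Blk.word] at ih
    simp only [Blk.word, List.flatMap_cons, Blk.bl, List.map_append, List.sum_append,
      List.map_cons, List.sum_cons, sum_map_seg f (D.e b), List.length_cons, Nat.cast_add,
      Nat.cast_one]
    have h1 := abs_sum_map_le (seg f (D.q b) (D.s b)) g hg
    have h2 := abs_sum_map_le (seg f (D.qOut b) (D.sOut b)) g hg
    rw [length_seg] at h1 h2
    have h3 : (D.s b : ℝ) * C ≤ T * C := by
      have := hs b
      gcongr
    have h4 : (D.sOut b : ℝ) * C ≤ T * C := by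
      have := hs' b
      gcongr
    rw [abs_le] at *
    constructor <;> linarith [ih.1, ih.2, h1.1, h1.2, h2.1, h2.2]

end Lists

/-! ### Separated sets, gaps, and first-hit labels -/

section Prep

variable {M : Type*} [MetricSpace M]

/-- The label of the first set of a finite cover containing a given point. -/
lemma exists_first {α : Type*} {k : ℕ} (V : Fin k → Set α) (hV : ∀ x, ∃ i, x ∈ V i) :
    ∃ lab : α → Fin k, ∀ i, lab ⁻¹' {i} = V i \ ⋃ j, ⋃ (_ : j < i), V j := by
  classical
  have h : ∀ x, ∃ i, x ∈ V i ∧ ∀ j < i, x ∉ V j := by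
    intro x
    let S := Finset.univ.filter fun i => x ∈ V i
    have hS : S.Nonempty := by
      obtain ⟨i, hi⟩ := hV x
      exact ⟨i, by simp [S, hi]⟩
    refine ⟨S.min' hS, (Finset.mem_filter.1 (S.min'_mem hS)).2, fun j hj hx => ?_⟩
    exact absurd (S.min'_le j (by simp [S, hx])) (not_le.2 hj)
  choose lab h1 h2 using h
  refine ⟨lab, fun i => ?_⟩
  ext x
  simp only [mem_preimage, mem_singleton_iff, Set.mem_sdiff, mem_iUnion, not_exists, exists_prop,
    not_and]
  constructor
  · rintro rfl
    exact ⟨h1 x, h2 x⟩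
  · rintro ⟨hx, hx'⟩
    rcases lt_trichotomy (lab x) i with hlt | heq | hgt
    · exact absurd (h1 x) (hx' _ hlt)
    · exact heq
    · exact absurd hx (h2 x _ hgt)

lemma exists_first_msr {α : Type*} [MeasurableSpace α] {k : ℕ} (V : Fin k → Set α)
    (hV : ∀ x, ∃ i, x ∈ V i) (hm : ∀ i, MeasurableSet (V i)) :
    ∃ lab : α → Fin k, Msr lab ∧ ∀ x, x ∈ V (lab x) := by
  obtain ⟨lab, hlab⟩ := exists_first V hV
  refine ⟨lab, fun i => ?_, fun x => ?_⟩
  · rw [hlab]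
    exact (hm i).diff (MeasurableSet.iUnion fun j => MeasurableSet.iUnion fun _ => hm j)
  · have : x ∈ lab ⁻¹' {lab x} := rfl
    rw [hlab] at this
    exact this.1

/-- Maximal separated sets for the Bowen metric. -/
lemma exists_maximal_sep [CompactSpace M] (f : M → M) (m : ℕ) {ρ : ℝ} (hρ : 0 < ρ) :
    ∃ (k : ℕ) (e : Fin k → M),
      (∀ b b', (∀ j < m, dist (f^[j] (e b)) (f^[j] (e b')) ≤ ρ) → b = b') ∧
      ∀ x, ∃ b, ∀ j < m, dist (f^[j] x) (f^[j] (e b)) ≤ ρ := by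
  classical
  obtain ⟨p, κ, hκ⟩ := exists_label (M := M) hρ
  let Sep : ℕ → Prop := fun k => ∃ e : Fin k → M,
    ∀ b b', (∀ j < m, dist (f^[j] (e b)) (f^[j] (e b')) ≤ ρ) → b = b'
  have hbd : ∀ k, Sep k → k ≤ p ^ m := by
    rintro k ⟨e, he⟩
    have hinj : Function.Injective fun b : Fin k => fun j : Fin m => κ (f^[(j : ℕ)] (e b)) := by
      intro b b' h
      exact he b b' fun j hj => hκ _ _ (congrFun h ⟨j, hj⟩)
    simpa using Fintype.card_le_of_injective _ hinj
  have h0 : Sep 0 := ⟨fun b => b.elim0, fun b => b.elim0⟩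
  have hk : Sep (Nat.findGreatest Sep (p ^ m)) := Nat.findGreatest_spec (Nat.zero_le _) h0
  set k := Nat.findGreatest Sep (p ^ m) with hkdef
  obtain ⟨e, he⟩ := hk
  refine ⟨k, e, he, fun x => ?_⟩
  by_contra! hcon
  have hSk : Sep (k + 1) := by
    refine ⟨Fin.cons x e, fun b b' => ?_⟩
    refine Fin.cases ?_ (fun b => ?_) b <;> refine Fin.cases ?_ (fun b' => ?_) b'
    · intro _; rfl
    · intro h
      obtain ⟨j, hj, hlt⟩ := hcon b'
      exact absurd (by simpa using h j hj) (not_le.2 hlt)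
    · intro h
      obtain ⟨j, hj, hlt⟩ := hcon b
      have h' := h j hj
      simp only [Fin.cons_succ, Fin.cons_zero] at h'
      rw [dist_comm] at h'
      exact absurd h' (not_le.2 hlt)
    · intro h
      rw [he b b' (by simpa using h)]
  have := Nat.le_findGreatest (P := Sep) (hbd _ hSk) hSk
  omega

/-- Uniformly bounded connecting times between arbitrary pairs of points. -/
lemma exists_gap [CompactSpace M] {f : M → M} (htr : TransitiveOn f Set.univ) {δ : ℝ}
    (hδ : 0 < δ) :
    ∃ T : ℕ, ∀ y y' : M, ∃ t q, 0 < t ∧ t ≤ T ∧ dist y q ≤ δ ∧ dist (f^[t] q) y' ≤ δ := by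
  classical
  obtain ⟨S, -, hSf, hS⟩ := (isCompact_univ (X := M)).finite_cover_balls (half_pos hδ)
  have hx : ∀ x : M, ∃ c ∈ S, dist x c < δ / 2 := by
    intro x
    obtain ⟨c, hc, hxc⟩ := mem_iUnion₂.1 (hS (mem_univ x))
    exact ⟨c, hc, hxc⟩
  have := hSf.fintype
  have htr' : ∀ a : S × S, ∃ t q, 0 < t ∧ dist q (a.1 : M) < δ / 2 ∧
      dist (f^[t] q) (a.2 : M) < δ / 2 := by
    rintro ⟨a, b⟩
    obtain ⟨n, hn, y, hy, hy'⟩ := htr (Metric.ball (a : M) (δ / 2)) (Metric.ball (b : M) (δ / 2))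
      Metric.isOpen_ball Metric.isOpen_ball
      ⟨a, by simpa using hδ⟩ ⟨b, by simpa using hδ⟩
    obtain ⟨q, hq, rfl⟩ := hy
    exact ⟨n, q, hn, hq.1, hy'⟩
  choose t q ht0 htq htf using htr'
  refine ⟨∑ a, t a, fun y y' => ?_⟩
  obtain ⟨a, ha, hya⟩ := hx y
  obtain ⟨b, hb, hyb⟩ := hx y'
  let d : S × S := (⟨a, ha⟩, ⟨b, hb⟩)
  refine ⟨t d, q d, ht0 d, Finset.single_le_sum (fun _ _ => Nat.zero_le _) (Finset.mem_univ d),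
    ?_, ?_⟩
  · have h1 := htq d
    have := dist_triangle_right y (q d) a
    simp only [d] at *
    linarith
  · have h1 := htf d
    have := dist_triangle_right (f^[t d] (q d)) y' b
    simp only [d] at *
    linarith

end Prep

end SE

namespace SE

/-! ### The initial family of words -/

section Initial

lemma pigeon {α ι : Type*} [Fintype ι] [DecidableEq ι] [Nonempty ι] (s : Finset α) (F : α → ι) :
    ∃ D, (s.card : ℝ) / Fintype.card ι ≤ (s.filter fun u => F u = D).card := by
  have h1 : (s.card : ℝ) = ∑ D, ((s.filter fun u => F u = D).card : ℝ) := by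
    have := Finset.card_eq_sum_card_fiberwise (f := F) (s := s) (t := Finset.univ)
      (fun _ _ => Finset.mem_coe.2 (Finset.mem_univ _))
    exact_mod_cast this
  by_contra! hcon
  have := Finset.sum_lt_sum_of_nonempty Finset.univ_nonempty fun D _ => hcon D
  rw [← h1] at this
  simp only [Finset.sum_const, Finset.card_univ, nsmul_eq_mul] at this
  rw [mul_div_cancel₀ _ (by exact_mod_cast Fintype.card_pos.ne')] at this
  exact lt_irrefl _ this

variable {M : Type*} [MetricSpace M] [CompactSpace M] [MeasurableSpace M] [BorelSpace M]

lemma integrable_of_cont (μ : Measure M) [IsFiniteMeasure μ] {g : M → ℝ} (hg : Continuous g) :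
    Integrable g μ :=
  hg.integrable_of_hasCompactSupport (HasCompactSupport.of_compactSpace g)

lemma integral_birkhoff {f : M → M} (hfc : Continuous f) {μ : Measure M} [IsProbabilityMeasure μ]
    (hμ : MeasurePreserving f μ μ) {g : M → ℝ} (hg : Continuous g) (m : ℕ) :
    ∫ x, ∑ j ∈ Finset.range m, g (f^[j] x) ∂μ = m * ∫ x, g x ∂μ := by
  have hi : ∀ j ∈ Finset.range m, Integrable (fun x => g (f^[j] x)) μ :=
    fun j _ => integrable_of_cont μ (hg.comp (hfc.iterate j))
  rw [integral_finsetSum _ hi]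
  have : ∀ j ∈ Finset.range m, ∫ x, g (f^[j] x) ∂μ = ∫ x, g x ∂μ := by
    intro j _
    have h := hμ.iterate j
    rw [← integral_map h.measurable.aemeasurable
      (by rw [h.map_eq]; exact hg.aestronglyMeasurable), h.map_eq]
  rw [Finset.sum_congr rfl this]
  simp

lemma label_integral {f : M → M} (hfc : Continuous f) {μ : Measure M} [IsProbabilityMeasure μ]
    (hμ : MeasurePreserving f μ μ) {k m : ℕ} {lab : M → Fin k} (hlab : Msr lab) (e : Fin k → M)
    {g : M → ℝ} (hg : Continuous g) {θ : ℝ}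
    (h : ∀ x, ∀ j < m, |g (f^[j] x) - g (f^[j] (e (lab x)))| ≤ θ) :
    |∑ b, μ.real (lab ⁻¹' {b}) * ∑ j ∈ Finset.range m, g (f^[j] (e b)) - m * ∫ x, g x ∂μ|
      ≤ m * θ := by
  rw [← integral_birkhoff hfc hμ hg m]
  set S : M → ℝ := fun x => ∑ j ∈ Finset.range m, g (f^[j] x) with hS
  have hSc : Continuous S := continuous_finsetSum _ fun j _ => hg.comp (hfc.iterate j)
  have hSi := integrable_of_cont μ hSc
  have hdec : ∫ x, S x ∂μ = ∑ b, ∫ x in lab ⁻¹' {b}, S x ∂μ := by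
    rw [← integral_iUnion_fintype hlab]
    · have : ⋃ b, lab ⁻¹' {b} = univ := by ext; simp
      rw [this, setIntegral_univ]
    · intro i j hij
      refine Set.disjoint_left.2 fun x hx hx' => hij ?_
      simp only [mem_preimage, mem_singleton_iff] at hx hx'
      exact hx.symm.trans hx'
    · exact fun i => hSi.integrableOn
  change |∑ b, μ.real (lab ⁻¹' {b}) * S (e b) - ∫ x, S x ∂μ| ≤ m * θ
  rw [hdec, ← Finset.sum_sub_distrib]
  refine (Finset.abs_sum_le_sum_abs _ _).trans ?_
  have hb : ∀ b, |μ.real (lab ⁻¹' {b}) * S (e b) - ∫ x in lab ⁻¹' {b}, S x ∂μ|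
      ≤ m * θ * μ.real (lab ⁻¹' {b}) := by
    intro b
    have h1 : μ.real (lab ⁻¹' {b}) * S (e b) - ∫ x in lab ⁻¹' {b}, S x ∂μ =
        ∫ x in lab ⁻¹' {b}, (S (e b) - S x) ∂μ := by
      rw [integral_sub (integrable_const _) hSi.integrableOn]
      simp
    rw [h1, ← Real.norm_eq_abs]
    refine norm_setIntegral_le_of_norm_le_const (measure_lt_top _ _) ?_
    intro x hx
    simp only [mem_preimage, mem_singleton_iff] at hx
    rw [Real.norm_eq_abs, hS]
    simp only
    rw [← Finset.sum_sub_distrib]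
    refine (Finset.abs_sum_le_sum_abs _ _).trans ?_
    refine (Finset.sum_le_sum fun j hj => ?_).trans (b := ∑ j ∈ Finset.range m, θ) (by simp)
    rw [abs_sub_comm, ← hx]
    exact h x j (Finset.mem_range.1 hj)
  refine (Finset.sum_le_sum fun b _ => hb b).trans ?_
  rw [← Finset.mul_sum, sum_real_fiber_univ μ hlab, mul_one]

lemma sum_count {k L : ℕ} (u : Fin L → Fin k) (S : Fin k → ℝ) :
    ∑ i, S (u i) = ∑ b, ((Finset.univ.filter fun i => u i = b).card : ℝ) * S b := by
  classical
  rw [← Finset.sum_fiberwise Finset.univ u]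
  refine Finset.sum_congr rfl fun b _ => ?_
  rw [Finset.sum_congr rfl (g := fun _ => S b)
    fun i hi => by rw [(Finset.mem_filter.1 hi).2]]
  simp

set_option maxHeartbeats 3200000 in
/-- A family of equally long, `ρ`-separated words that can be freely concatenated, with
exponential growth rate close to `c`, and along each of which Birkhoff sums are close to the
`μ`-average. -/
lemma exists_initial {f : M → M} (hfc : Continuous f) (hfs : Function.Surjective f)
    (htr : TransitiveOn f Set.univ) (hsh : ShadowingProperty f)
    {μ : Measure M} [IsProbabilityMeasure μ] (hμ : MeasurePreserving f μ μ)
    {c : ℝ} (hc0 : 0 ≤ c) (hc : (c : EReal) ≤ measEntropy f μ) {r θ : ℝ} (hr : 0 < r)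
    (hθ : 0 < θ) :
    ∃ (W : Level M) (ρ ε0 : ℝ), 0 < ρ ∧ 0 < ε0 ∧ 16 * ε0 ≤ ρ ∧ ρ ≤ r ∧ W.Traced f ε0 ∧
      (∀ a b, (∀ i < W.n, dist (W.w a i) (W.w b i) ≤ ρ) → a = b) ∧
      c - θ ≤ Real.log W.N / W.n ∧ Real.log W.N / W.n ≤ c + θ ∧
      ∀ (g : M → ℝ) (C θ' : ℝ), Continuous g → (∀ x, |g x| ≤ C) →
        (∀ x y, dist x y ≤ r → |g x - g y| ≤ θ') →
        ∀ a, |∑ i ∈ Finset.range W.n, g (W.w a i) - W.n * ∫ x, g x ∂μ| ≤ W.n * (θ' + C * θ) := by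
  classical
  have hlt : ((c - θ / 4 : ℝ) : EReal) < measEntropy f μ := by
    refine lt_of_lt_of_le ?_ hc
    rw [EReal.coe_lt_coe_iff]
    linarith
  obtain ⟨P, hP, hfreq⟩ := exists_partition_of_lt hlt
  obtain ⟨rA, hrA, HA⟩ := Hent_itin_le_add hμ (msr_cellOf hP) (η := θ / 4) (by positivity)
  set ρ : ℝ := min rA r / 2 with hρdef
  have hρ : 0 < ρ := by positivity
  have hρA : 2 * ρ ≤ rA := by rw [hρdef]; linarith [min_le_left rA r]
  have hρr : ρ ≤ r := by rw [hρdef]; linarith [min_le_right rA r]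
  obtain ⟨δ, hδ, Hδ⟩ := shadow_nat hfs hsh (ε := ρ / 16) (by positivity)
  obtain ⟨T, hT⟩ := exists_gap htr (half_pos hδ)
  obtain ⟨p0⟩ : Nonempty M := by
    by_contra h
    rw [not_nonempty_iff] at h
    have : μ univ = 1 := measure_univ
    rw [univ_eq_empty_iff.2 h] at this
    simp at this
  -- the length of the orbit segments dominates all costs of the connecting segments
  set Q : ℝ := 2 * Real.log 2 + 1 + 2 * Real.log (T + 1) + 2 * T * c + 4 * T with hQdef
  have hlog2 : 0 < Real.log 2 := Real.log_pos (by norm_num)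
  have hlogT : 0 ≤ Real.log (T + 1) := Real.log_nonneg (by simp)
  have hTc : 0 ≤ (T : ℝ) * c := by positivity
  have hT0 : (0 : ℝ) ≤ T := by positivity
  obtain ⟨m0, hm0⟩ := exists_nat_gt (Q / (θ / 2))
  obtain ⟨m, hmm0, hment⟩ := (frequently_atTop.1 hfreq) (m0 + 1)
  have hmpos : 0 < m := by omega
  have hmQ : Q ≤ m * (θ / 2) := by
    rw [div_lt_iff₀ (by positivity)] at hm0
    refine hm0.le.trans ?_
    gcongr
    omega
  obtain ⟨k, e, hesep, hecov⟩ := exists_maximal_sep f m hρ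
  obtain ⟨lab, hlab, hlabV⟩ := exists_first_msr
    (fun b => {x | ∀ j < m, dist (f^[j] x) (f^[j] (e b)) ≤ ρ}) hecov (by
      intro b
      have : {x | ∀ j < m, dist (f^[j] x) (f^[j] (e b)) ≤ ρ} =
          ⋂ j, ⋂ (_ : j < m), {x | dist (f^[j] x) (f^[j] (e b)) ≤ ρ} := by ext; simp
      rw [this]
      exact MeasurableSet.iInter fun j => MeasurableSet.iInter fun _ =>
        (isClosed_le ((hfc.iterate j).dist continuous_const) continuous_const).measurableSet)
  have hH : m * (c - θ / 2) ≤ Hent μ lab := by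
    have := HA m (Fin k) lab hlab univ (by simp) (by
      intro x _ y _ hxy j hj
      have h1 := hlabV x j hj
      have h2 := hlabV y j hj
      rw [← hxy] at h2
      have := dist_triangle_right (f^[j] x) (f^[j] y) (f^[j] (e (lab x)))
      linarith)
    linarith
  have hp1 := sum_real_fiber_univ μ hlab
  set η2 : ℝ := min 1 (θ / (2 * (k + 1))) with hη2
  have hη2pos : 0 < η2 := by positivity
  have hη21 : η2 ≤ 1 := min_le_left _ _
  have hη2k : k * η2 ≤ θ / 2 := by
    have h1 : η2 ≤ θ / (2 * (k + 1)) := min_le_right _ _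
    have h2 : (k : ℝ) * η2 ≤ k * (θ / (2 * (k + 1))) := by gcongr
    refine h2.trans ?_
    rw [mul_div_assoc', div_le_iff₀ (by positivity)]
    nlinarith
  obtain ⟨L0, hL0⟩ := exists_typical (fun b => μ.real (lab ⁻¹' {b}))
    (fun _ => measureReal_nonneg) hp1 hη2pos
  obtain ⟨𝒰, h𝒰f, h𝒰c⟩ := hL0 (L0 + 1) (by omega)
  have hL1 : 1 ≤ L0 + 1 := by omega
  generalize L0 + 1 = L at *
  have hHent : ∑ b, Real.negMulLog (μ.real (lab ⁻¹' {b})) = Hent μ lab := rfl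
  rw [hHent] at h𝒰c
  -- Each separated point `e b` is joined from and to the base point `p0` by connecting segments of
  -- length at most `T`, which makes its orbit segment part of a pseudo-orbit loop at `p0`.
  choose t0 q0 ht0 ht0T hq0 hq0' using fun b => hT p0 (e b)
  choose t1 q1 ht1 ht1T hq1 hq1' using fun b => hT (f^[m] (e b)) p0
  let D : Blk M k := { m := m, e := e, s := t0, sOut := t1, q := q0, qOut := q1 }
  have hDPO : ∀ b y, dist y p0 ≤ δ / 2 → ∃ y', dist y' p0 ≤ δ / 2 ∧ PO f δ y (D.bl f b) y' := by
    intro b y hy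
    refine ⟨f^[t1 b] (q1 b), hq1' b, ?_⟩
    refine (PO.seg hδ.le (ht0 b) ?_).append ((PO.seg hδ.le hmpos ?_).append
      (PO.seg hδ.le (ht1 b) ?_))
    · have := dist_triangle y p0 (q0 b)
      linarith [hq0 b]
    · exact (hq0' b).trans (by linarith)
    · exact (hq1 b).trans (by linarith)
  -- Restricting to words with the same connecting times gives them all the same length, and costs
  -- at most the factor `(T + 1) ^ (2 * L)`.
  let pat : (Fin L → Fin k) → (Fin L → Fin (T + 1) × Fin (T + 1)) := fun u i =>
    (⟨t0 (u i), Nat.lt_succ_of_le (ht0T _)⟩, ⟨t1 (u i), Nat.lt_succ_of_le (ht1T _)⟩)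
  obtain ⟨D0, hD0⟩ := pigeon 𝒰 pat
  set 𝒱 := 𝒰.filter fun u => pat u = D0 with h𝒱
  set n0 : ℕ := ∑ i, (((D0 i).1 : ℕ) + (m + ((D0 i).2 : ℕ))) with hn0
  have hpatmap : ∀ u ∈ 𝒱, ((List.ofFn u).map fun b => (D.s b, D.sOut b)) =
      List.ofFn fun i => (((D0 i).1 : ℕ), ((D0 i).2 : ℕ)) := by
    intro u hu
    rw [List.map_ofFn]
    congr 1
    funext i
    have := congrFun (Finset.mem_filter.1 hu).2 i
    rw [← this]
    rfl
  have hlen : ∀ u ∈ 𝒱, (D.word f (List.ofFn u)).length = n0 := by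
    intro u hu
    rw [D.length_word, hpatmap u hu, List.map_ofFn, List.sum_ofFn]
    rfl
  have hn0lo : L * m ≤ n0 := by
    calc L * m = ∑ _i : Fin L, m := by simp
      _ ≤ n0 := Finset.sum_le_sum fun i _ => by omega
  have hn0hi : n0 ≤ L * (m + 2 * T) := by
    calc n0 ≤ ∑ _i : Fin L, (m + 2 * T) := Finset.sum_le_sum fun i _ => by
          have h1 := (D0 i).1.2
          have h2 := (D0 i).2.2
          omega
      _ = _ := by simp
  have hn0pos : 0 < n0 := lt_of_lt_of_le (Nat.mul_pos hL1 hmpos) hn0lo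
  have hn0lo' : (L : ℝ) * m ≤ n0 := by exact_mod_cast hn0lo
  have hn0hi' : (n0 : ℝ) ≤ L * (m + 2 * T) := by exact_mod_cast hn0hi
  have hn0r : (0 : ℝ) < n0 := by exact_mod_cast hn0pos
  have hLr : (1 : ℝ) ≤ L := by exact_mod_cast hL1
  have hmr : (1 : ℝ) ≤ m := by exact_mod_cast hmpos
  have hcardpat : (Fintype.card (Fin L → Fin (T + 1) × Fin (T + 1)) : ℝ) =
      Real.exp (L * (2 * Real.log (T + 1))) := by
    rw [mul_comm, Real.exp_mul, Real.rpow_natCast, two_mul, Real.exp_add, Real.exp_log (by positivity)]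
    simp
  have h𝒱ge : Real.exp (L * (Hent μ lab - η2) - L * (2 * Real.log (T + 1))) / 2 ≤ 𝒱.card := by
    refine le_trans ?_ hD0
    rw [hcardpat, Real.exp_sub, div_right_comm]
    gcongr
  have h𝒱pos : 0 < 𝒱.card := by
    have : (0 : ℝ) < 𝒱.card := lt_of_lt_of_le (by positivity) h𝒱ge
    exact_mod_cast this
  -- The surviving words may be too many; only about `exp (n0 * c')` of them are kept, so that the
  -- growth rate is also bounded above by `c + θ`.
  set c' : ℝ := max (c - θ) 0 with hc'
  have hc'0 : 0 ≤ c' := le_max_right _ _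
  have hc'c : c' ≤ c := max_le (by linarith) hc0
  set N0 : ℕ := ⌈Real.exp (n0 * c')⌉₊ with hN0
  have hN0ge : Real.exp (n0 * c') ≤ N0 := Nat.le_ceil _
  have hN0lt : (N0 : ℝ) < Real.exp (n0 * c') + 1 := Nat.ceil_lt_add_one (by positivity)
  have hexp1 : 1 ≤ Real.exp (n0 * c') := Real.one_le_exp (by positivity)
  have hN0pos : 0 < N0 := by
    have : (0 : ℝ) < N0 := by linarith
    exact_mod_cast this
  have hN0r : (0 : ℝ) < N0 := by exact_mod_cast hN0pos
  have hN0le : N0 ≤ 𝒱.card := by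
    rcases le_total (c - θ) 0 with hcase | hcase
    · have : c' = 0 := max_eq_right hcase
      have : N0 = 1 := by simp [hN0, this]
      omega
    · have hc'eq : c' = c - θ := max_eq_left hcase
      have h1 : (N0 : ℝ) ≤ Real.exp (n0 * c' + Real.log 2) := by
        rw [Real.exp_add, Real.exp_log (by norm_num)]
        linarith
      have h2 : n0 * c' + Real.log 2 ≤
          L * (Hent μ lab - η2) - L * (2 * Real.log (T + 1)) - Real.log 2 := by
        have e1 : n0 * c' ≤ L * (m + 2 * T) * c' := by gcongr
        have e2 : (L : ℝ) * (m + 2 * T) * c' ≤ L * (m * (c - θ) + 2 * T * c) := by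
          have h3 : (T : ℝ) * c' ≤ T * c := by gcongr
          have h4 : (m + 2 * (T : ℝ)) * c' ≤ m * (c - θ) + 2 * T * c := by
            rw [add_mul, hc'eq]; rw [hc'eq] at h3; nlinarith
          rw [mul_assoc]
          gcongr
        have e3 : (L : ℝ) * (m * (c - θ) + 2 * T * c + 2 * Real.log 2) ≤
            L * (Hent μ lab - η2 - 2 * Real.log (T + 1)) := by
          refine mul_le_mul_of_nonneg_left ?_ (by linarith)
          nlinarith
        have e4 : 2 * Real.log 2 ≤ L * (2 * Real.log 2) := by nlinarith
        nlinarith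
      have h3 : (N0 : ℝ) ≤ 𝒱.card := by
        refine (h1.trans (Real.exp_le_exp.2 h2)).trans (le_trans (le_of_eq ?_) h𝒱ge)
        rw [Real.exp_sub _ (Real.log 2), Real.exp_log (by norm_num)]
      exact_mod_cast h3
  let emb : Fin N0 → 𝒱 := fun a => 𝒱.equivFin.symm (Fin.castLE hN0le a)
  have hemb : Function.Injective emb := fun a b h =>
    Fin.castLE_injective hN0le (𝒱.equivFin.symm.injective h)
  let U : Fin N0 → Fin L → Fin k := fun a => (emb a : Fin L → Fin k)
  have hU : ∀ a, U a ∈ 𝒱 := fun a => (emb a).2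
  let W : Level M :=
    { n := n0, N := N0, hn := hn0pos, hN := hN0pos
      w := fun a i => (D.word f (List.ofFn (U a))).getD i p0 }
  have hwPO := fun a => D.word_PO p0 hDPO (List.ofFn (U a))
  refine ⟨W, ρ, ρ / 16, hρ, by positivity, by linarith, hρr, ?_, ?_, ?_, ?_, ?_⟩
  · intro x
    refine Hδ _ fun j => W.conc_step (δ := δ) ?_ ?_ x j
    · intro a i hi
      obtain ⟨y', -, h⟩ := hwPO a p0 (by simpa using (half_pos hδ).le)
      exact h.step p0 (by rw [hlen _ (hU a)]; exact hi)
    · intro a b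
      obtain ⟨y', hy', h⟩ := hwPO a p0 (by simpa using (half_pos hδ).le)
      obtain ⟨y'', -, h'⟩ := hwPO b y' hy'
      have h1 := h.last p0 (by rw [hlen _ (hU a)]; exact hn0pos)
      have h2 := h'.first p0 (by rw [hlen _ (hU b)]; exact hn0pos)
      rw [hlen _ (hU a)] at h1
      change dist (f ((D.word f (List.ofFn (U a))).getD (n0 - 1) p0)) _ ≤ δ
      rw [h1]
      exact h2
  · intro a b hab
    refine hemb (Subtype.ext (List.ofFn_injective ?_))
    refine D.word_sep hesep _ _ ((hpatmap _ (hU a)).trans (hpatmap _ (hU b)).symm) ?_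
    refine forall₂_of_getD p0 ((hlen _ (hU a)).trans (hlen _ (hU b)).symm) fun i hi => ?_
    rw [hlen _ (hU a)] at hi
    exact hab i hi
  · change c - θ ≤ Real.log N0 / n0
    rw [le_div_iff₀ hn0r]
    have h1 := Real.log_le_log (by positivity) hN0ge
    rw [Real.log_exp] at h1
    have h2 : c - θ ≤ c' := le_max_left _ _
    nlinarith
  · change Real.log N0 / n0 ≤ c + θ
    rw [div_le_iff₀ hn0r]
    have h1 : (N0 : ℝ) ≤ Real.exp (n0 * c' + Real.log 2) := by
      rw [Real.exp_add, Real.exp_log (by norm_num)]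
      linarith
    have h2 := Real.log_le_log hN0r h1
    rw [Real.log_exp] at h2
    have h3 : (n0 : ℝ) * c' ≤ n0 * c := by gcongr
    have h4 : (m : ℝ) * θ ≤ n0 * θ := by
      have : (m : ℝ) ≤ n0 := by nlinarith
      gcongr
    nlinarith
  · intro g C θ' hg hgC hgθ a
    have hC : 0 ≤ C := (abs_nonneg _).trans (hgC p0)
    have hθ' : 0 ≤ θ' := (abs_nonneg _).trans (hgθ p0 p0 (by simpa using hr.le))
    set S : Fin k → ℝ := fun b => ∑ j ∈ Finset.range m, g (f^[j] (e b)) with hS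
    have hSb : ∀ b, |S b| ≤ m * C := by
      intro b
      refine (Finset.abs_sum_le_sum_abs _ _).trans ?_
      refine (Finset.sum_le_sum fun j _ => hgC _).trans ?_
      simp
    have e0 : ∑ i ∈ Finset.range W.n, g (W.w a i) =
        ((D.word f (List.ofFn (U a))).map g).sum := by
      rw [← sum_range_getD _ p0, hlen _ (hU a)]
    have e1 := D.word_sum (f := f) ht0T ht1T g hC hgC (List.ofFn (U a))
    rw [← e0, List.map_ofFn, List.sum_ofFn, List.length_ofFn] at e1
    change |_ - ∑ i, S (U a i)| ≤ _ at e1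
    rw [sum_count] at e1
    have e2 : |∑ b, ((Finset.univ.filter fun i => U a i = b).card : ℝ) * S b -
        L * ∑ b, μ.real (lab ⁻¹' {b}) * S b| ≤ k * (η2 * L * (m * C)) := by
      rw [Finset.mul_sum, ← Finset.sum_sub_distrib]
      refine (Finset.abs_sum_le_sum_abs _ _).trans ?_
      refine (Finset.sum_le_sum (g := fun _ => η2 * L * (m * C)) fun b _ => ?_).trans (by simp)
      rw [← mul_assoc, ← sub_mul, abs_mul]
      have h1 := h𝒰f (U a) (Finset.mem_filter.1 (hU a)).1 b
      exact mul_le_mul h1 (hSb b) (abs_nonneg _) (by positivity)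
    have e3 := label_integral hfc hμ hlab e hg (θ := θ') (m := m) (by
      intro x j hj
      exact hgθ _ _ ((hlabV x j hj).trans hρr))
    change |∑ b, μ.real (lab ⁻¹' {b}) * S b - m * ∫ x, g x ∂μ| ≤ m * θ' at e3
    have e4 : |∫ x, g x ∂μ| ≤ C := by
      have := norm_integral_le_of_norm_le_const (μ := μ) (f := g) (C := C)
        (Eventually.of_forall hgC)
      simpa using this
    generalize ∫ x, g x ∂μ = G at *
    generalize ∑ b, μ.real (lab ⁻¹' {b}) * S b = A1 at *
    generalize ∑ b, ((Finset.univ.filter fun i => U a i = b).card : ℝ) * S b = A2 at *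
    generalize ∑ i ∈ Finset.range W.n, g (W.w a i) = A3 at *
    change |A3 - n0 * G| ≤ n0 * (θ' + C * θ)
    have e5 : |L * A1 - L * (m * G)| ≤ L * (m * θ') := by
      rw [← mul_sub, abs_mul, abs_of_nonneg (by linarith : (0 : ℝ) ≤ L)]
      gcongr
    have e6 : |L * (m * G) - n0 * G| ≤ L * (2 * T) * C := by
      rw [← mul_assoc, ← sub_mul, abs_mul]
      refine mul_le_mul ?_ e4 (abs_nonneg _) (by positivity)
      rw [abs_le]
      constructor <;> nlinarith
    have e7 : |A3 - n0 * G| ≤ L * (2 * T * C) + k * (η2 * L * (m * C)) + L * (m * θ') +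
        L * (2 * T) * C := by
      rw [abs_le] at *
      constructor <;> linarith [e1.1, e1.2, e2.1, e2.2, e5.1, e5.2, e6.1, e6.2]
    refine e7.trans ?_
    have e8 : (k : ℝ) * (η2 * L * (m * C)) ≤ L * m * C * (θ / 2) := by
      have : (k : ℝ) * (η2 * L * (m * C)) = k * η2 * (L * m * C) := by ring
      rw [this, mul_comm]
      gcongr
    have e9 : (L : ℝ) * (2 * T * C) + L * (2 * T) * C ≤ L * m * C * (θ / 2) := by
      have h1 : 4 * (T : ℝ) ≤ m * (θ / 2) := by linarith
      have h2 : (L : ℝ) * (2 * T * C) + L * (2 * T) * C = L * C * (4 * T) := by ring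
      have h3 : (L : ℝ) * m * C * (θ / 2) = L * C * (m * (θ / 2)) := by ring
      rw [h2, h3]
      gcongr
    have e10 : (L : ℝ) * m * (θ' + C * θ) ≤ n0 * (θ' + C * θ) := by gcongr
    nlinarith

end Initial

end SE

namespace SE

/-! ### Uniform Birkhoff averages force strict ergodicity of the support -/

section Ergodicity

variable {M : Type*} [MetricSpace M] [CompactSpace M] [MeasurableSpace M] [BorelSpace M]

/-- Birkhoff averages (of some length) of every continuous function are uniformly almost constant
on `Λ`. -/
def UniformAvg (f : M → M) (Λ : Set M) : Prop :=
  ∀ g : M → ℝ, Continuous g → ∀ tol : ℝ, 0 < tol → ∃ (a : ℝ) (L : ℕ), 0 < L ∧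
    ∀ z ∈ Λ, |∑ j ∈ Finset.range L, g (f^[j] z) - L * a| ≤ L * tol

lemma abs_integral_sub_le {f : M → M} (hfc : Continuous f) {Λ : Set M} {ν : Measure M}
    [IsProbabilityMeasure ν] (hν : MeasurePreserving f ν ν) (hΛ : ν Λᶜ = 0)
    {g : M → ℝ} (hg : Continuous g) {a tol : ℝ} {L : ℕ} (hL : 0 < L)
    (h : ∀ z ∈ Λ, |∑ j ∈ Finset.range L, g (f^[j] z) - L * a| ≤ L * tol) :
    |∫ x, g x ∂ν - a| ≤ tol := by
  set S : M → ℝ := fun x => ∑ j ∈ Finset.range L, g (f^[j] x) with hS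
  have hSc : Continuous S := continuous_finsetSum _ fun j _ => hg.comp (hfc.iterate j)
  have h1 : L * (∫ x, g x ∂ν - a) = ∫ x, (S x - L * a) ∂ν := by
    rw [integral_sub (integrable_of_cont ν hSc) (integrable_const _),
      integral_birkhoff hfc hν hg L]
    simp
    ring
  have h2 : ‖∫ x, (S x - L * a) ∂ν‖ ≤ L * tol * ν.real univ := by
    refine norm_integral_le_of_norm_le_const ?_
    have : ∀ᵐ x ∂ν, x ∈ Λ := hΛ
    filter_upwards [this] with x hx
    exact h x hx
  rw [← h1, Real.norm_eq_abs, abs_mul, Nat.abs_cast] at h2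
  simp only [probReal_univ, mul_one] at h2
  exact le_of_mul_le_mul_left h2 (by exact_mod_cast hL)

lemma UniformAvg.unique {f : M → M} (hfc : Continuous f) {Λ : Set M} (hU : UniformAvg f Λ)
    {ν η : Measure M} [IsProbabilityMeasure ν] [IsProbabilityMeasure η]
    (hν : MeasurePreserving f ν ν) (hη : MeasurePreserving f η η) (hνΛ : ν Λᶜ = 0)
    (hηΛ : η Λᶜ = 0) : η = ν := by
  refine ext_of_forall_integral_eq_of_IsFiniteMeasure fun g => ?_
  refine eq_of_abs_sub_le_all fun tol htol => ?_
  obtain ⟨a, L, hL, h⟩ := hU g g.continuous (tol / 2) (half_pos htol)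
  have h1 := abs_integral_sub_le hfc hν hνΛ g.continuous hL h
  have h2 := abs_integral_sub_le hfc hη hηΛ g.continuous hL h
  rw [abs_le] at h1 h2 ⊢
  constructor <;> linarith [h1.1, h1.2, h2.1, h2.2]

lemma measure_compl_measSupport (ν : Measure M) : ν (measSupport ν)ᶜ = 0 := by
  refine measure_null_of_locally_null _ fun x hx => ?_
  simp only [measSupport, mem_compl_iff, mem_ofPred_eq, not_forall, not_lt] at hx
  obtain ⟨U, hU, hxU, h0⟩ := hx
  exact ⟨U, mem_nhdsWithin_of_mem_nhds (hU.mem_nhds hxU), le_antisymm h0 bot_le⟩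

/-- The normalised restriction of `ν` to an invariant set is invariant, so uniqueness of the
invariant measure forces invariant sets to be trivial. -/
lemma UniformAvg.ergodic {f : M → M} (hfc : Continuous f) {Λ : Set M} (hU : UniformAvg f Λ)
    {ν : Measure M} [IsProbabilityMeasure ν] (hν : MeasurePreserving f ν ν) (hνΛ : ν Λᶜ = 0) :
    Ergodic f ν := by
  refine ⟨hν, ⟨fun s hs hfs => ?_⟩⟩
  rw [eventuallyConst_set']
  by_cases h0 : ν s = 0
  · left; exact ae_eq_empty.2 h0
  right
  set η : Measure M := ProbabilityTheory.cond ν s with hη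
  have : IsProbabilityMeasure η := ProbabilityTheory.cond_isProbabilityMeasure h0
  have hηi : MeasurePreserving f η η := by
    refine ⟨hν.measurable, ?_⟩
    ext A hA
    rw [Measure.map_apply hν.measurable hA, hη, ProbabilityTheory.cond_apply hs,
      ProbabilityTheory.cond_apply hs]
    congr 1
    conv_lhs => rw [← hfs]
    rw [← preimage_inter, hν.measure_preimage (hs.inter hA).nullMeasurableSet]
  have hηΛ : η Λᶜ = 0 := ProbabilityTheory.cond_absolutelyContinuous hνΛ
  have := hU.unique hfc hν hηi hνΛ hηΛ
  have h1 : ν sᶜ = 0 := by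
    rw [← this, hη, ProbabilityTheory.cond_apply hs]
    simp
  exact ae_eq_univ.2 h1

lemma UniformAvg.mono {f : M → M} {Λ Λ' : Set M} (hU : UniformAvg f Λ) (h : Λ' ⊆ Λ) :
    UniformAvg f Λ' := fun g hg tol htol =>
  let ⟨a, L, hL, H⟩ := hU g hg tol htol
  ⟨a, L, hL, fun z hz => H z (h hz)⟩

lemma UniformAvg.strictlyErgodic {f : M → M} (hfc : Continuous f) {Λ : Set M}
    (hΛc : IsClosed Λ) (hU : UniformAvg f Λ)
    {ν : Measure M} [IsProbabilityMeasure ν] (hν : MeasurePreserving f ν ν) (hνΛ : ν Λᶜ = 0) :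
    StrictlyErgodicOn f (measSupport ν) := by
  have hsub : measSupport ν ⊆ Λ := by
    intro x hx
    by_contra h
    exact absurd (hx Λᶜ hΛc.isOpen_compl h) (by simp [hνΛ])
  have hUs := hU.mono hsub
  have hs0 := measure_compl_measSupport ν
  refine ⟨?_, ν, ⟨inferInstance, hν, hs0⟩, ?_⟩
  · intro K hKs hKne hKc hKf
    refine Subset.antisymm hKs fun x hx => ?_
    by_contra hxK
    -- the distance to `K` vanishes along orbits in `K`, so its integral must be zero
    have hg : Continuous fun y => Metric.infDist y K := Metric.continuous_infDist_pt K
    have hint : ∫ y, Metric.infDist y K ∂ν = 0 := by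
      refine eq_of_abs_sub_le_all fun tol htol => ?_
      obtain ⟨a, L, hL, h⟩ := hUs _ hg (tol / 2) (half_pos htol)
      have h1 := abs_integral_sub_le hfc hν hs0 hg hL h
      obtain ⟨z, hz⟩ := hKne
      have h2 := h z (hKs hz)
      have hzK : ∀ j, f^[j] z ∈ K := by
        intro j
        induction j with
        | zero => exact hz
        | succ j ih =>
          rw [Function.iterate_succ_apply', ← hKf]
          exact mem_image_of_mem f ih
      rw [Finset.sum_eq_zero fun j _ => Metric.infDist_zero_of_mem (hzK j), zero_sub, abs_neg,
        abs_mul, Nat.abs_cast] at h2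
      have h3 := le_of_mul_le_mul_left h2 (by exact_mod_cast hL)
      rw [abs_le] at h1 h3 ⊢
      constructor <;> linarith [h1.1, h1.2, h3.1, h3.2]
    rw [integral_eq_zero_iff_of_nonneg (fun _ => Metric.infDist_nonneg)
      (integrable_of_cont ν hg)] at hint
    have hpos := hx Kᶜ hKc.isOpen_compl hxK
    refine hpos.ne' ?_
    refine measure_mono_null ?_ (ae_iff.1 hint)
    intro y hy
    simp only [mem_ofPred_eq, Pi.zero_apply]
    exact ((hKc.notMem_iff_infDist_pos hKne).1 hy).ne'
  · rintro η ⟨hη1, hη2, hη3⟩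
    exact hUs.unique hfc hν hη2 hs0 hη3

end Ergodicity

end SE

namespace SE

/-! ### Entropy of empirical measures (Misiurewicz's argument) -/

section Misiurewicz

open ProbabilityTheory

lemma uniformOn_real {Ω : Type*} [Fintype Ω] [MeasurableSpace Ω] [MeasurableSingletonClass Ω]
    (s : Set Ω) [DecidablePred (· ∈ s)] :
    (uniformOn (univ : Set Ω)).real s = (∑ i, if i ∈ s then (1 : ℝ) else 0) / Fintype.card Ω := by
  have hs : s = ↑(Finset.univ.filter (· ∈ s)) := by ext; simp
  rw [Measure.real, uniformOn_univ]
  conv_lhs => rw [hs]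
  rw [Measure.count_apply_finset, ENNReal.toReal_div]
  simp [Finset.sum_boole]

/-- The average of the Dirac masses at `f^[j] (z a)` for `j < n`, `a < N`. -/
noncomputable def emp {M : Type*} [MeasurableSpace M] (f : M → M) {N : ℕ} (z : Fin N → M)
    (n : ℕ) : Measure M :=
  (uniformOn (univ : Set (Fin n × Fin N))).map fun p => f^[(p.1 : ℕ)] (z p.2)

variable {M : Type*} [MeasurableSpace M] {f : M → M} {N n : ℕ} {z : Fin N → M}

lemma isProbabilityMeasure_emp (hn : 0 < n) (hN : 0 < N) : IsProbabilityMeasure (emp f z n) := by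
  have : Nonempty (Fin n × Fin N) := ⟨(⟨0, hn⟩, ⟨0, hN⟩)⟩
  exact Measure.isProbabilityMeasure_map (measurable_of_countable _).aemeasurable

lemma emp_real (A : Set M) (hA : MeasurableSet A) :
    (emp f z n).real A =
      (∑ j : Fin n, (uniformOn (univ : Set (Fin N))).real {a | f^[(j : ℕ)] (z a) ∈ A}) / n := by
  classical
  rw [emp, map_measureReal_apply (measurable_of_countable _) hA, uniformOn_real]
  simp_rw [uniformOn_real]
  rw [← Finset.sum_div, Fintype.sum_prod_type, div_div]
  simp only [mem_preimage, mem_ofPred_eq, Fintype.card_prod, Fintype.card_fin]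
  push_cast
  rw [mul_comm (n : ℝ)]

lemma emp_integral {g : M → ℝ} (hg : Measurable g) :
    ∫ x, g x ∂(emp f z n) =
      (∑ a, ∑ j ∈ Finset.range n, g (f^[j] (z a))) / (n * N) := by
  rw [emp, integral_map (measurable_of_countable _).aemeasurable hg.aestronglyMeasurable,
    integral_fintype .of_finite]
  have : ∀ p : Fin n × Fin N, (uniformOn (univ : Set (Fin n × Fin N))).real {p} =
      1 / (n * N) := by
    classical
    intro p
    rw [uniformOn_real]
    simp
  simp_rw [this, smul_eq_mul]
  rw [← Finset.mul_sum, Fintype.sum_prod_type_right, one_div, inv_mul_eq_div]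
  congr 1
  refine Finset.sum_congr rfl fun a _ => ?_
  rw [Finset.sum_range]

lemma emp_compl_eq_zero {A : Set M} (hA : MeasurableSet A) (h : ∀ a, ∀ j < n, f^[j] (z a) ∈ A) :
    emp f z n Aᶜ = 0 := by
  rw [emp, Measure.map_apply (measurable_of_countable _) hA.compl]
  have : (fun p : Fin n × Fin N => f^[(p.1 : ℕ)] (z p.2)) ⁻¹' Aᶜ = ∅ := by
    ext p
    simpa using h p.2 p.1 p.1.2
  rw [this, measure_empty]

lemma msr_fin {ι : Type*} (X : Fin N → ι) : Msr X := fun _ => MeasurableSet.of_discrete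

lemma Hent_uniform_of_injective {ι : Type*} [Fintype ι] (hN : 0 < N) {X : Fin N → ι}
    (hX : Function.Injective X) :
    Real.log N ≤ Hent (uniformOn (univ : Set (Fin N))) X := by
  classical
  have : Nonempty (Fin N) := ⟨⟨0, hN⟩⟩
  have hN' : (0 : ℝ) < N := by exact_mod_cast hN
  refine le_trans ?_ (Hent_le_of_determined (X := (id : Fin N → Fin N)) _ (msr_fin X) univ
    (by simp) fun x _ y _ h => hX h)
  rw [Hent]
  have : ∀ a : Fin N, (uniformOn (univ : Set (Fin N))).real (id ⁻¹' {a}) = (N : ℝ)⁻¹ := by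
    intro a
    rw [uniformOn_real]
    simp
  simp_rw [this, Real.negMulLog, Real.log_inv]
  have hN0 := hN'.ne'
  simp [hN0]

/-- By concavity, the entropy of a labelling under the empirical measure is at least the average
of its entropies along the orbit segments. -/
lemma sum_Hent_le_emp {ι : Type*} [Fintype ι] (hn : 0 < n) {Y : M → ι} (hY : Msr Y) :
    ∑ j : Fin n, Hent (uniformOn (univ : Set (Fin N))) (fun a => Y (f^[(j : ℕ)] (z a))) ≤
      n * Hent (emp f z n) Y := by
  have hn' : (0 : ℝ) < n := by exact_mod_cast hn
  simp only [Hent]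
  rw [Finset.sum_comm, Finset.mul_sum]
  refine Finset.sum_le_sum fun i _ => ?_
  rw [emp_real _ (hY i)]
  have h := Real.concaveOn_negMulLog.le_map_sum (t := Finset.univ) (w := fun _ : Fin n => (n : ℝ)⁻¹)
    (p := fun j : Fin n =>
      (uniformOn (univ : Set (Fin N))).real {a | f^[(j : ℕ)] (z a) ∈ Y ⁻¹' {i}})
    (fun _ _ => by positivity) (by simp [hn'.ne']) (fun _ _ => measureReal_nonneg)
  simp only [smul_eq_mul, ← Finset.mul_sum] at h
  rw [inv_mul_le_iff₀ hn', inv_mul_eq_div] at h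
  exact h

/-- Misiurewicz's estimate: if the orbit segments of the `N` points `z a` have distinct
`n`-step itineraries, cutting the itineraries into blocks of length `q` at each of the `q` possible
offsets bounds the entropy of the `q`-step itinerary under the empirical measure from below. -/
lemma misiurewicz {ι : Type*} [Fintype ι] (hf : Measurable f) (hn : 0 < n) (hN : 0 < N)
    {X : M → ι} (hX : Msr X) (hsep : Function.Injective fun a => itin f X n (z a))
    {q : ℕ} (hq : 0 < q) :
    q * Real.log N ≤ n * Hent (emp f z n) (itin f X q) + q ^ 2 * Real.log (Fintype.card ι) := by
  classical
  set σ := uniformOn (univ : Set (Fin N)) with hσ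
  have : Nonempty (Fin N) := ⟨⟨0, hN⟩⟩
  set Y : ℕ → Fin N → (Fin q → ι) := fun j a => itin f X q (f^[j] (z a)) with hYdef
  have hoff : ∀ i : Fin q, Real.log N ≤ q * Real.log (Fintype.card ι) +
      ∑ j ∈ Finset.univ.filter (fun j : Fin n => (⟨j % q, Nat.mod_lt _ hq⟩ : Fin q) = i),
        Hent σ (Y j) := by
    intro i
    set J := Finset.univ.filter (fun j : Fin n => (⟨j % q, Nat.mod_lt _ hq⟩ : Fin q) = i)
    have h1 := Hent_uniform_of_injective hN hsep
    have h2 : Hent σ (fun a => itin f X n (z a)) ≤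
        Hent σ (fun a => (Y 0 a, fun j : J => Y (j : Fin n) a)) := by
      refine Hent_le_of_determined _ (msr_fin _) univ (by simp) fun a _ b _ hab => ?_
      simp only [Prod.mk.injEq] at hab
      funext m
      by_cases hm : (m : ℕ) < q
      · exact congrFun hab.1 ⟨m, hm⟩
      · have hi := i.2
        set t := ((m : ℕ) - i) / q with ht
        have hdm := Nat.div_add_mod ((m : ℕ) - i) q
        have hml := Nat.mod_lt ((m : ℕ) - i) hq
        rw [← ht] at hdm
        set r := ((m : ℕ) - i) % q with hr
        have hm' : (m : ℕ) = r + (q * t + i) := by omega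
        have hjn : q * t + i < n := by have := m.2; omega
        have hmem : (⟨q * t + i, hjn⟩ : Fin n) ∈ J := by
          simp only [J, Finset.mem_filter, Finset.mem_univ, true_and]
          ext
          simp [Nat.mod_eq_of_lt hi]
        have := congrFun (congrFun hab.2 ⟨_, hmem⟩) ⟨r, hml⟩
        simp only [hYdef, itin, ← Function.iterate_add_apply, ← hm'] at this
        exact this
    have h3 := Hent_prod_le σ (msr_fin (Y 0)) (msr_fin fun a (j : J) => Y (j : Fin n) a)
    have h4 := Hent_pi_le σ (fun (j : J) => Y (j : Fin n)) fun j => msr_fin _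
    have h5 : Hent σ (Y 0) ≤ q * Real.log (Fintype.card ι) := by
      have := Hent_le_log_card σ (msr_fin (Y 0))
      simpa using this
    rw [Finset.sum_coe_sort J fun j => Hent σ (Y j)] at h4
    linarith
  have hsum := Finset.sum_le_sum fun i (_ : i ∈ (Finset.univ : Finset (Fin q))) => hoff i
  rw [Finset.sum_add_distrib, Finset.sum_fiberwise] at hsum
  simp only [Finset.sum_const, Finset.card_univ, Fintype.card_fin, nsmul_eq_mul] at hsum
  have hlast := sum_Hent_le_emp (f := f) (z := z) hn (hX.itin hf q)
  change ∑ j : Fin n, Hent σ (Y j) ≤ _ at hlast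
  nlinarith [hsum, hlast]

end Misiurewicz

section Boundary

variable {M : Type*} [MetricSpace M] [CompactSpace M] [MeasurableSpace M] [BorelSpace M]

/-- Finite labellings with small cells and `ν`-null cell boundaries: the radii of a finite cover by
balls can be chosen such that the spheres are null. -/
lemma exists_null_label (ν : Measure M) [IsProbabilityMeasure ν] {r : ℝ} (hr : 0 < r) :
    ∃ (k : ℕ) (X : M → Fin k), Msr X ∧ (∀ x y, X x = X y → dist x y ≤ r) ∧
      ∀ i, ν (frontier (X ⁻¹' {i})) = 0 := by
  have hex : ∀ x : M, ∃ s ∈ Ioo 0 (r / 2), ν (frontier (Metric.ball x s)) = 0 := by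
    intro x
    obtain ⟨s, hs, h⟩ := exists_null_frontier_thickening ν {x} (half_pos hr)
    rw [Metric.thickening_singleton] at h
    exact ⟨s, hs, h⟩
  choose s hs hnull using hex
  obtain ⟨t, ht⟩ := isCompact_univ.elim_finite_subcover (fun x : M => Metric.ball x (s x))
    (fun _ => Metric.isOpen_ball) (fun x _ => mem_iUnion.2 ⟨x, Metric.mem_ball_self (hs x).1⟩)
  let e := t.equivFin
  let V : Fin t.card → Set M := fun i => Metric.ball (e.symm i : M) (s (e.symm i))
  have hV : ∀ x, ∃ i, x ∈ V i := by
    intro x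
    have hx := ht (mem_univ x)
    simp only [mem_iUnion] at hx
    obtain ⟨y, hy, hxy⟩ := hx
    exact ⟨e ⟨y, hy⟩, by simpa [V] using hxy⟩
  obtain ⟨X, hX⟩ := exists_first V hV
  have hm : Msr X := fun i => by
    rw [hX]
    exact Metric.isOpen_ball.measurableSet.diff
      (MeasurableSet.iUnion fun j => MeasurableSet.iUnion fun _ => Metric.isOpen_ball.measurableSet)
  have hmem : ∀ x, x ∈ V (X x) := by
    intro x
    have : x ∈ X ⁻¹' {X x} := rfl
    rw [hX] at this
    exact this.1
  have hnullV : ∀ i, ν (frontier (V i)) = 0 := fun i => hnull _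
  have hfU : ∀ i : Fin t.card, frontier (X ⁻¹' {i}) ⊆ ⋃ j, frontier (V j) := by
    intro i x hx
    by_contra hcon
    simp only [mem_iUnion, not_exists] at hcon
    -- off the spheres, membership in each ball, hence the label, is locally constant
    have hloc : ∀ j, ∀ᶠ y in 𝓝 x, (y ∈ V j ↔ x ∈ V j) := by
      intro j
      by_cases hj : x ∈ V j
      · filter_upwards [(Metric.isOpen_ball : IsOpen (V j)).mem_nhds hj] with y hy
        exact ⟨fun _ => hj, fun _ => hy⟩
      · have : x ∉ closure (V j) := by
          intro hcl
          refine hcon j ?_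
          rw [(Metric.isOpen_ball : IsOpen (V j)).frontier_eq]
          exact ⟨hcl, hj⟩
        filter_upwards [isClosed_closure.isOpen_compl.mem_nhds this] with y hy
        have : y ∉ V j := fun h => hy (subset_closure h)
        simp [hj, this]
    have hall : ∀ᶠ y in 𝓝 x, ∀ j, (y ∈ V j ↔ x ∈ V j) := Filter.eventually_all.2 hloc
    have hlab : ∀ᶠ y in 𝓝 x, (y ∈ X ⁻¹' {i} ↔ x ∈ X ⁻¹' {i}) := by
      filter_upwards [hall] with y hy
      rw [hX]
      simp [hy]
    rw [frontier_eq_closure_inter_closure] at hx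
    by_cases hxi : x ∈ X ⁻¹' {i}
    · obtain ⟨y, hy1, hy2⟩ := ((mem_closure_iff_frequently.1 hx.2).and_eventually hlab).exists
      exact hy1 (hy2.2 hxi)
    · obtain ⟨y, hy1, hy2⟩ := ((mem_closure_iff_frequently.1 hx.1).and_eventually hlab).exists
      exact hxi (hy2.1 hy1)
  refine ⟨t.card, X, hm, ?_, fun i => ?_⟩
  · intro x y hxy
    have hx := Metric.mem_ball.1 (hmem x)
    have hy := Metric.mem_ball.1 (hmem y)
    rw [← hxy] at hy
    have := (hs (e.symm (X x))).2
    have := dist_triangle_right x y (e.symm (X x) : M)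
    linarith
  · exact measure_mono_null (hfU i) (measure_iUnion_null hnullV)

lemma null_frontier_itin {f : M → M} (hfc : Continuous f) {ν : Measure M}
    (hν : MeasurePreserving f ν ν) {k : ℕ} {X : M → Fin k}
    (h : ∀ i, ν (frontier (X ⁻¹' {i})) = 0) (q : ℕ) (v : Fin q → Fin k) :
    ν (frontier (itin f X q ⁻¹' {v})) = 0 := by
  have h1 : itin f X q ⁻¹' {v} = ⋂ j ∈ (Finset.univ : Finset (Fin q)),
      f^[(j : ℕ)] ⁻¹' (X ⁻¹' {v j}) := by
    ext x
    simp [itin, funext_iff]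
  rw [h1]
  generalize (Finset.univ : Finset (Fin q)) = s
  classical
  induction s using Finset.induction_on with
  | empty => simp
  | insert a s ha ih =>
    rw [Finset.set_biInter_insert]
    refine null_frontier_inter ?_ ih
    refine measure_mono_null ((hfc.iterate a).frontier_preimage_subset _) ?_
    rw [(hν.iterate a).measure_preimage isClosed_frontier.measurableSet.nullMeasurableSet]
    exact h _

end Boundary

end SE

namespace SE

/-! ### Orbits shadowed by concatenations at one level -/

section Cover

variable {M : Type*} [MetricSpace M]

/-- Extension of a finite itinerary to an infinite one by a fixed symbol. -/
def Level.ext (W : Level M) {p : ℕ} (d : Fin p → Fin W.N) (q : ℕ) : Fin W.N :=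
  if h : q < p then d ⟨q, h⟩ else ⟨0, W.hN⟩

/-- Index set for the pieces of length `n` of concatenations of words of `W`: a starting position
inside the first word, and enough symbols to cover `n` steps. -/
abbrev Level.Code (W : Level M) (n : ℕ) := Fin W.n × (Fin (n / W.n + 2) → Fin W.N)

/-- The points whose orbit of length `n` stays `e`-close to a given piece of a concatenation. -/
def Level.cell (W : Level M) (f : M → M) (e : ℝ) (n : ℕ) (d : W.Code n) : Set M :=
  {z | ∀ j < n, dist (f^[j] z) (W.conc (W.ext d.2) (d.1 + j)) ≤ e}

/-- The points whose orbit of length `n` stays `e`-close to a piece of some concatenation of words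
of `W`. -/
def Level.cover (W : Level M) (f : M → M) (e : ℝ) (n : ℕ) : Set M := ⋃ d, W.cell f e n d

lemma Level.isClosed_cell (W : Level M) {f : M → M} (hf : Continuous f) (e : ℝ) (n : ℕ)
    (d : W.Code n) : IsClosed (W.cell f e n d) := by
  have : W.cell f e n d =
      ⋂ j, ⋂ (_ : j < n), {z | dist (f^[j] z) (W.conc (W.ext d.2) (d.1 + j)) ≤ e} := by
    ext; simp [Level.cell]
  rw [this]
  exact isClosed_iInter fun j => isClosed_iInter fun _ =>
    isClosed_le ((hf.iterate j).dist continuous_const) continuous_const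

lemma Level.isClosed_cover (W : Level M) {f : M → M} (hf : Continuous f) (e : ℝ) (n : ℕ) :
    IsClosed (W.cover f e n) := isClosed_iUnion_of_finite fun d => W.isClosed_cell hf e n d

lemma Level.mem_cover (W : Level M) {f : M → M} {e : ℝ} {n : ℕ} {z : M} (x : ℕ → Fin W.N)
    (s : ℕ) (h : ∀ j < n, dist (f^[j] z) (W.conc x (s + j)) ≤ e) : z ∈ W.cover f e n := by
  have hn := W.hn
  refine mem_iUnion.2 ⟨(⟨s % W.n, Nat.mod_lt _ hn⟩, fun q => x (s / W.n + q)), fun j hj => ?_⟩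
  convert h j hj using 2
  have hs := Nat.div_add_mod s W.n
  have hsl := Nat.mod_lt s hn
  set r := s % W.n
  set p := s / W.n
  have e1 : s + j = W.n * p + (r + j) := by omega
  have hlt : (r + j) / W.n < n / W.n + 2 := by
    have h1 : (r + j) / W.n ≤ (n + W.n) / W.n := Nat.div_le_div_right (by omega)
    rw [Nat.add_div_right _ hn] at h1
    omega
  simp only [Level.conc, Level.ext]
  rw [dif_pos (show (s % W.n + j) / W.n < n / W.n + 2 from hlt), e1, Nat.mul_add_div hn, Nat.mul_add_mod]

/-- Birkhoff sums of orbits close to concatenations are governed by the sums along words. -/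
lemma Level.birkhoff (W : Level M) {f : M → M} {e : ℝ} {g : M → ℝ} {C ω a B : ℝ}
    (hC : ∀ x, |g x| ≤ C) (hω : ∀ x y, dist x y ≤ e → |g x - g y| ≤ ω) (ha : |a| ≤ C)
    (hB : ∀ b, |∑ i ∈ Finset.range W.n, g (W.w b i) - W.n * a| ≤ W.n * B)
    {L : ℕ} {z : M} (hz : z ∈ W.cover f e L) :
    |∑ j ∈ Finset.range L, g (f^[j] z) - L * a| ≤ L * (ω + B) + 2 * W.n * (B + 2 * C) := by
  have hn := W.hn
  have hn' : (0 : ℝ) < W.n := by exact_mod_cast hn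
  have hB0 : 0 ≤ B := by
    have := (abs_nonneg _).trans (hB ⟨0, W.hN⟩)
    exact nonneg_of_mul_nonneg_right this hn'
  have hC0 : 0 ≤ C := (abs_nonneg _).trans ha
  obtain ⟨d, hd⟩ := mem_iUnion.1 hz
  set x := W.ext d.2
  set h : ℕ → ℝ := fun j => g (W.conc x j) - a with hh
  have hhC : ∀ j, |h j| ≤ 2 * C := fun j => by
    have := hC (W.conc x j)
    rw [hh]
    simp only
    rw [abs_le] at *
    constructor <;> linarith [this.1, this.2, ha.1, ha.2]
  have hfull : ∀ p : ℕ, |∑ j ∈ Finset.range (p * W.n), h j| ≤ (p * W.n : ℕ) * B := by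
    intro p
    induction p with
    | zero => simp
    | succ p ih =>
      rw [add_mul, one_mul, Finset.sum_range_add]
      have h1 : ∑ i ∈ Finset.range W.n, h (p * W.n + i) =
          ∑ i ∈ Finset.range W.n, g (W.w (x p) i) - W.n * a := by
        rw [Finset.sum_congr rfl (g := fun i => g (W.w (x p) i) - a) fun i hi => by
          simp only [hh]; rw [W.conc_mul_add x p (Finset.mem_range.1 hi)]]
        simp [Finset.sum_sub_distrib]
      rw [h1]
      refine (abs_add_le _ _).trans ((add_le_add ih (hB (x p))).trans (le_of_eq ?_))
      push_cast
      ring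
  have hpart : ∀ t : ℕ, |∑ j ∈ Finset.range t, h j| ≤ t * B + W.n * (2 * C) := by
    intro t
    have ht := Nat.div_add_mod t W.n
    have hr := Nat.mod_lt t hn
    have e1 : t = t / W.n * W.n + t % W.n := by rw [mul_comm]; exact ht.symm
    generalize t / W.n = p at e1
    generalize t % W.n = r at e1 hr
    rw [e1, Finset.sum_range_add]
    refine (abs_add_le _ _).trans (add_le_add ((hfull p).trans ?_) ?_)
    · gcongr
      omega
    · refine (Finset.abs_sum_le_sum_abs _ _).trans
        ((Finset.sum_le_sum fun i _ => hhC _).trans ?_)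
      rw [Finset.sum_const, Finset.card_range, nsmul_eq_mul]
      gcongr
  have hs : ((d.1 : ℕ) : ℝ) ≤ W.n := by exact_mod_cast d.1.2.le
  have h1 : |∑ j ∈ Finset.range L, g (f^[j] z) - ∑ j ∈ Finset.range L, g (W.conc x (d.1 + j))|
      ≤ L * ω := by
    rw [← Finset.sum_sub_distrib]
    refine (Finset.abs_sum_le_sum_abs _ _).trans ((Finset.sum_le_sum fun i hi =>
      hω _ _ (hd i (Finset.mem_range.1 hi))).trans ?_)
    simp
  have h2 : ∑ j ∈ Finset.range L, g (W.conc x (d.1 + j)) - L * a =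
      ∑ j ∈ Finset.range (d.1 + L), h j - ∑ j ∈ Finset.range d.1, h j := by
    rw [Finset.sum_range_add]
    simp [hh, Finset.sum_sub_distrib]
  have h3 := hpart (d.1 + L)
  have h4 := hpart d.1
  push_cast at h3
  have hsB : (d.1 : ℕ) * B ≤ W.n * B := by gcongr
  have e2 : ∑ j ∈ Finset.range L, g (f^[j] z) - L * a =
      (∑ j ∈ Finset.range L, g (f^[j] z) - ∑ j ∈ Finset.range L, g (W.conc x (d.1 + j))) +
      (∑ j ∈ Finset.range (d.1 + L), h j - ∑ j ∈ Finset.range d.1, h j) := by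
    rw [← h2]; ring
  rw [e2]
  rw [abs_le] at h1 h3 h4 ⊢
  constructor <;> nlinarith [h1.1, h1.2, h3.1, h3.2, h4.1, h4.2]

lemma Level.exists_birkhoff (W : Level M) {f : M → M} {e : ℝ} {g : M → ℝ} {C ω a B tol : ℝ}
    (hC : ∀ x, |g x| ≤ C) (hω : ∀ x y, dist x y ≤ e → |g x - g y| ≤ ω) (ha : |a| ≤ C)
    (hB : ∀ b, |∑ i ∈ Finset.range W.n, g (W.w b i) - W.n * a| ≤ W.n * B)
    (htol : ω + B < tol) :
    ∃ L : ℕ, 0 < L ∧ ∀ z ∈ W.cover f e L,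
      |∑ j ∈ Finset.range L, g (f^[j] z) - L * a| ≤ L * tol := by
  obtain ⟨L, hL⟩ := exists_nat_gt (2 * W.n * (B + 2 * C) / (tol - (ω + B)))
  have hpos : 0 < tol - (ω + B) := by linarith
  rw [div_lt_iff₀ hpos] at hL
  refine ⟨L + 1, by omega, fun z hz => (W.birkhoff hC hω ha hB hz).trans ?_⟩
  push_cast
  nlinarith

/-- Labelling each point of the cover by a piece of a concatenation that it follows: equal labels
mean `2 * e`-close orbits of length `n`, and the entropy is bounded by the logarithm of the number
of pieces. -/
lemma Level.Hent_le [MeasurableSpace M] [BorelSpace M] (W : Level M) {f : M → M}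
    (hfc : Continuous f) {ν : Measure M} [IsProbabilityMeasure ν] (e : ℝ) (n : ℕ) :
    ∃ (κ : Type) (_ : Fintype κ) (α : M → κ), Msr α ∧
      (∀ x ∈ W.cover f e n, ∀ y ∈ W.cover f e n, α x = α y →
        ∀ j < n, dist (f^[j] x) (f^[j] y) ≤ 2 * e) ∧
      Hent ν α ≤ Real.log W.n + (n / W.n + 2 : ℝ) * Real.log W.N := by
  have hn' : (0 : ℝ) < W.n := by exact_mod_cast W.hn
  have hN' : (1 : ℝ) ≤ W.N := by exact_mod_cast W.hN
  let E := Fintype.equivFin (W.Code n)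
  let V : Fin (Fintype.card (W.Code n)) → Set M :=
    fun i => W.cell f e n (E.symm i) ∪ (W.cover f e n)ᶜ
  have hne : Nonempty (W.Code n) := ⟨(⟨0, W.hn⟩, fun _ => ⟨0, W.hN⟩)⟩
  obtain ⟨α, hα, hmem⟩ := exists_first_msr V (fun x => by
    by_cases hx : x ∈ W.cover f e n
    · obtain ⟨d, hd⟩ := mem_iUnion.1 hx
      exact ⟨E d, Or.inl (by simpa using hd)⟩
    · exact ⟨E hne.some, Or.inr hx⟩) (fun i => (W.isClosed_cell hfc e n _).measurableSet.union
        (W.isClosed_cover hfc e n).measurableSet.compl)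
  refine ⟨_, inferInstance, α, hα, ?_, ?_⟩
  · intro x hx y hy hxy j hj
    have h1 := (hmem x).resolve_right (fun h => h hx)
    have h2 := (hmem y).resolve_right (fun h => h hy)
    rw [← hxy] at h2
    have := dist_triangle_right (f^[j] x) (f^[j] y)
      (W.conc (W.ext (E.symm (α x)).2) ((E.symm (α x)).1 + j))
    linarith [h1 j hj, h2 j hj]
  · refine (Hent_le_log_card ν hα).trans ?_
    simp only [Fintype.card_fin, Fintype.card_prod, Fintype.card_fun]
    push_cast
    rw [Real.log_mul hn'.ne' (by positivity), Real.log_pow]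
    have h1 : ((n / W.n : ℕ) : ℝ) ≤ n / W.n := Nat.cast_div_le
    have h2 : 0 ≤ Real.log W.N := Real.log_nonneg hN'
    push_cast
    gcongr

end Cover

end SE

namespace SE

/-! ### The tower of levels -/

section Tower

variable {M : Type*} [MetricSpace M]

/-- The concatenations of words of `W'` are close to concatenations of words of `W`. -/
lemma StepRel.conc {ε η : ℝ} {W W' : Level M} (S : StepRel ε η W W') (x : ℕ → Fin W'.N) (m : ℕ) :
    dist (W'.conc x m) (W.conc (fun q => S.u (x (q / S.ℓ)) (q % S.ℓ)) m) ≤ ε := by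
  have hℓ : 0 < S.ℓ := by have := S.two_le; omega
  have h1 : m / W'.n = m / W.n / S.ℓ := by
    rw [S.n_eq, Nat.div_div_eq_div_mul, mul_comm]
  have h2 : m % W'.n = m / W.n % S.ℓ * W.n + m % W.n := by
    rw [S.n_eq, mul_comm S.ℓ, Nat.mod_mul, mul_comm W.n, add_comm]
  simp only [Level.conc]
  rw [h1, h2]
  exact S.close _ _ _ (Nat.mod_lt _ hℓ) (Nat.mod_lt _ W.hn)

lemma StepRel.log_le {ε η : ℝ} {W W' : Level M} (S : StepRel ε η W W') :
    Real.log W'.N / W'.n ≤ Real.log W.N / W.n := by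
  have hℓ : 0 < S.ℓ := by have := S.two_le; omega
  have hℓ' : (0 : ℝ) < S.ℓ := by exact_mod_cast hℓ
  have hn' : (0 : ℝ) < W.n := by exact_mod_cast W.hn
  have hN' : (0 : ℝ) < W'.N := by exact_mod_cast W'.hN
  have hcard : W'.N ≤ W.N ^ S.ℓ := by
    have hinj : Function.Injective fun (a : Fin W'.N) (q : Fin S.ℓ) => S.u a q := by
      intro a b hab
      exact S.inj a b fun q hq => congrFun hab ⟨q, hq⟩
    simpa using Fintype.card_le_of_injective _ hinj
  have h1 : Real.log W'.N ≤ S.ℓ * Real.log W.N := by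
    rw [← Real.log_pow]
    exact Real.log_le_log hN' (by exact_mod_cast hcard)
  rw [S.n_eq]
  push_cast
  rw [div_le_div_iff₀ (by positivity) hn']
  nlinarith

/-- The average of `g` over all words of `W`. -/
noncomputable def Level.avg (W : Level M) (g : M → ℝ) : ℝ :=
  (∑ b, ∑ i ∈ Finset.range W.n, g (W.w b i)) / (W.n * W.N)

lemma Level.abs_sum_word_le (W : Level M) {g : M → ℝ} {C : ℝ} (hC : ∀ x, |g x| ≤ C) (b : Fin W.N) :
    |∑ i ∈ Finset.range W.n, g (W.w b i)| ≤ W.n * C := by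
  refine (Finset.abs_sum_le_sum_abs _ _).trans ((Finset.sum_le_sum fun i _ => hC _).trans ?_)
  simp

lemma Level.abs_avg_le (W : Level M) {g : M → ℝ} {C : ℝ} (hC : ∀ x, |g x| ≤ C) :
    |W.avg g| ≤ C := by
  have hn' : (0 : ℝ) < W.n := by exact_mod_cast W.hn
  have hN' : (0 : ℝ) < W.N := by exact_mod_cast W.hN
  rw [Level.avg, abs_div, abs_of_pos (mul_pos hn' hN'), div_le_iff₀ (by positivity)]
  refine (Finset.abs_sum_le_sum_abs _ _).trans
    ((Finset.sum_le_sum fun b _ => W.abs_sum_word_le hC b).trans (le_of_eq ?_))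
  simp
  ring

/-- Almost equal frequencies of the words of `W` make all words of `W'` have almost the same
Birkhoff averages. -/
lemma StepRel.avg {ε η : ℝ} {W W' : Level M} (S : StepRel ε η W W') {g : M → ℝ} {C ω : ℝ}
    (hC : ∀ x, |g x| ≤ C) (hω : ∀ x y, dist x y ≤ ε → |g x - g y| ≤ ω) (a : Fin W'.N) :
    |∑ i ∈ Finset.range W'.n, g (W'.w a i) - W'.n * W.avg g| ≤ W'.n * (ω + C * η) := by
  classical
  have hn' : (0 : ℝ) < W.n := by exact_mod_cast W.hn
  have hN' : (0 : ℝ) < W.N := by exact_mod_cast W.hN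
  have hC0 : 0 ≤ C := (abs_nonneg _).trans (hC (W'.w a 0))
  set T : Fin W.N → ℝ := fun b => ∑ i ∈ Finset.range W.n, g (W.w b i) with hT
  have hsplit : ∀ p : ℕ, ∑ i ∈ Finset.range (p * W.n), g (W'.w a i) =
      ∑ q ∈ Finset.range p, ∑ i ∈ Finset.range W.n, g (W'.w a (q * W.n + i)) := by
    intro p
    induction p with
    | zero => simp
    | succ p ih => rw [add_mul, one_mul, Finset.sum_range_add, ih, Finset.sum_range_succ]
  have h1 : |∑ i ∈ Finset.range W'.n, g (W'.w a i) - ∑ q ∈ Finset.range S.ℓ, T (S.u a q)| ≤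
      S.ℓ * (W.n * ω) := by
    rw [S.n_eq, hsplit, ← Finset.sum_sub_distrib]
    refine (Finset.abs_sum_le_sum_abs _ _).trans
      ((Finset.sum_le_sum (g := fun _ => W.n * ω) fun q hq => ?_).trans (by simp))
    rw [hT]
    simp only
    rw [← Finset.sum_sub_distrib]
    refine (Finset.abs_sum_le_sum_abs _ _).trans
      ((Finset.sum_le_sum (g := fun _ => ω) fun i hi => ?_).trans (by simp))
    exact hω _ _ (S.close a q i (Finset.mem_range.1 hq) (Finset.mem_range.1 hi))
  have h2 : ∑ q ∈ Finset.range S.ℓ, T (S.u a q) =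
      ∑ b, (((Finset.range S.ℓ).filter fun q => S.u a q = b).card : ℝ) * T b := by
    rw [← Finset.sum_fiberwise (Finset.range S.ℓ) (S.u a)]
    refine Finset.sum_congr rfl fun b _ => ?_
    rw [Finset.sum_congr rfl (g := fun _ => T b)
      fun i hi => by rw [(Finset.mem_filter.1 hi).2]]
    simp
  have h3 : W'.n * W.avg g = ∑ b, (S.ℓ / W.N : ℝ) * T b := by
    rw [← Finset.mul_sum, Level.avg, S.n_eq]
    push_cast
    field_simp
    rfl
  have h4 : |∑ q ∈ Finset.range S.ℓ, T (S.u a q) - W'.n * W.avg g| ≤ η * S.ℓ * (W.n * C) := by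
    rw [h2, h3, ← Finset.sum_sub_distrib]
    refine (Finset.abs_sum_le_sum_abs _ _).trans ?_
    refine (Finset.sum_le_sum fun b _ => ?_).trans
      ((Finset.sum_mul _ _ _).symm.le.trans (mul_le_mul_of_nonneg_right (S.freq a)
        (by positivity : (0 : ℝ) ≤ W.n * C)))
    rw [← sub_mul, abs_mul]
    gcongr
    exact W.abs_sum_word_le hC b
  have h5 : (W'.n : ℝ) = S.ℓ * W.n := by rw [S.n_eq]; push_cast; ring
  have e1 : (W'.n : ℝ) * (ω + C * η) = S.ℓ * (W.n * ω) + η * S.ℓ * (W.n * C) := by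
    rw [h5]; ring
  rw [e1]
  refine le_trans ?_ (add_le_add h1 h4)
  rw [← sub_add_sub_cancel _ (∑ q ∈ Finset.range S.ℓ, T (S.u a q))]
  exact abs_add_le _ _

/-- An infinite sequence of levels, each obtained from the previous one by a step whose errors
decay geometrically. -/
structure Tower (f : M → M) (e τ : ℝ) where
  /-- the levels -/
  W : ℕ → Level M
  traced : ∀ k, (W k).Traced f (e / 2 ^ k)
  step : ∀ k, StepRel (e / 2 ^ k) (τ / 2 ^ (k + 1)) (W k) (W (k + 1))

lemma exists_tower [CompactSpace M] {f : M → M} (hf : Function.Surjective f)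
    (hsh : ShadowingProperty f) (W0 : Level M) {e τ : ℝ} (he : 0 < e) (hτ : 0 < τ)
    (h0 : W0.Traced f e) : ∃ T : Tower f e τ, T.W 0 = W0 := by
  have key : ∀ (k : ℕ) (W : {W : Level M // W.Traced f (e / 2 ^ k)}),
      ∃ W' : {W : Level M // W.Traced f (e / 2 ^ (k + 1))},
        Nonempty (StepRel (e / 2 ^ k) (τ / 2 ^ (k + 1)) W.1 W'.1) := by
    intro k W
    obtain ⟨W', h1, h2⟩ := exists_step hf hsh W.1 W.2 (ε' := e / 2 ^ (k + 1))
      (η := τ / 2 ^ (k + 1)) (by positivity) (by positivity)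
    exact ⟨⟨W', h1⟩, h2⟩
  choose F hF using key
  let T : ∀ k, {W : Level M // W.Traced f (e / 2 ^ k)} :=
    fun k => Nat.rec ⟨W0, by simpa using h0⟩ (fun k W => F k W) k
  exact ⟨⟨fun k => (T k).1, fun k => (T k).2, fun k => (hF k (T k)).some⟩, rfl⟩

variable {f : M → M} {e τ : ℝ}

/-- Concatenations at level `K` follow concatenations at any lower level `k`; the errors of the
intermediate steps form a geometric sum. -/
lemma Tower.descend (T : Tower f e τ) (k : ℕ) {K : ℕ} (hK : k ≤ K)
    (x : ℕ → Fin (T.W K).N) : ∃ y : ℕ → Fin (T.W k).N,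
      ∀ m, dist ((T.W K).conc x m) ((T.W k).conc y m) ≤ 2 * e / 2 ^ k - 2 * e / 2 ^ K := by
  induction K, hK using Nat.le_induction with
  | base => exact ⟨x, fun m => by simp⟩
  | succ K hK ih =>
    obtain ⟨y, hy⟩ := ih (fun q => (T.step K).u (x (q / (T.step K).ℓ)) (q % (T.step K).ℓ))
    refine ⟨y, fun m => (dist_triangle _ _ _).trans
      ((add_le_add ((T.step K).conc x m) (hy m)).trans (le_of_eq ?_))⟩
    rw [pow_succ]
    field_simp
    ring

/-- The separation of the words of the lowest level persists, up to the sum of the errors, at all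
levels. -/
lemma Tower.sep (T : Tower f e τ) {ρ : ℝ}
    (h0 : ∀ a b, (∀ i < (T.W 0).n, dist ((T.W 0).w a i) ((T.W 0).w b i) ≤ ρ) → a = b) (K : ℕ)
    (a b : Fin (T.W K).N) (h : ∀ i < (T.W K).n, dist ((T.W K).w a i) ((T.W K).w b i) ≤
      ρ - 4 * e + 4 * e / 2 ^ K) : a = b := by
  induction K with
  | zero => exact h0 a b fun i hi => (h i hi).trans (by simp)
  | succ K ih =>
    set S := T.step K
    refine S.inj a b fun q hq => ih _ _ fun i hi => ?_
    have hlt : q * (T.W K).n + i < (T.W (K + 1)).n := by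
      rw [S.n_eq]
      calc q * (T.W K).n + i < (q + 1) * (T.W K).n := by rw [add_mul]; omega
        _ ≤ S.ℓ * (T.W K).n := Nat.mul_le_mul_right _ hq
    have h1 := S.close a q i hq hi
    have h2 := S.close b q i hq hi
    have h3 := h _ hlt
    have h4 := dist_triangle4 ((T.W K).w (S.u a q) i) ((T.W (K + 1)).w a (q * (T.W K).n + i))
      ((T.W (K + 1)).w b (q * (T.W K).n + i)) ((T.W K).w (S.u b q) i)
    rw [dist_comm] at h1
    have e1 : 4 * e / 2 ^ (K + 1) + 2 * (e / 2 ^ K) = 4 * e / 2 ^ K := by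
      rw [pow_succ]; field_simp; ring
    linarith

lemma Tower.log_le (T : Tower f e τ) (k : ℕ) :
    Real.log (T.W k).N / (T.W k).n ≤ Real.log (T.W 0).N / (T.W 0).n := by
  induction k with
  | zero => rfl
  | succ k ih => exact (T.step k).log_le.trans ih

lemma Tower.le_log (T : Tower f e τ) (k : ℕ) :
    Real.log (T.W 0).N / (T.W 0).n - τ + τ / 2 ^ k ≤ Real.log (T.W k).N / (T.W k).n := by
  induction k with
  | zero => simp
  | succ k ih =>
    have h1 := (T.step k).ent
    have e1 : τ / 2 ^ (k + 1) + τ / 2 ^ (k + 1) = τ / 2 ^ k := by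
      rw [pow_succ]; field_simp; ring
    linarith

lemma Tower.two_pow_le (T : Tower f e τ) (k : ℕ) : 2 ^ k ≤ (T.W k).n := by
  induction k with
  | zero => exact (T.W 0).hn
  | succ k ih =>
    rw [(T.step k).n_eq, pow_succ, mul_comm]
    exact Nat.mul_le_mul (T.step k).two_le ih

/-- The points that, at every level and for every length, follow concatenations of words. -/
def Tower.limitSet (T : Tower f e τ) : Set M := ⋂ k, ⋂ n, (T.W k).cover f (3 * e / 2 ^ k) n

lemma Tower.isClosed_limitSet (T : Tower f e τ) (hf : Continuous f) : IsClosed T.limitSet :=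
  isClosed_iInter fun _ => isClosed_iInter fun _ => Level.isClosed_cover _ hf _ _

lemma Tower.limitSet_subset (T : Tower f e τ) (k n : ℕ) :
    T.limitSet ⊆ (T.W k).cover f (3 * e / 2 ^ k) n :=
  (iInter_subset _ k).trans (iInter_subset _ n)

lemma Tower.mem_cover (T : Tower f e τ) (he : 0 ≤ e) {k K : ℕ} (hK : k ≤ K) {z : M}
    {x : ℕ → Fin (T.W K).N} (hz : ∀ m, dist (f^[m] z) ((T.W K).conc x m) ≤ e / 2 ^ K)
    (i n : ℕ) : f^[i] z ∈ (T.W k).cover f (3 * e / 2 ^ k) n := by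
  obtain ⟨y, hy⟩ := T.descend k hK x
  refine (T.W k).mem_cover y i fun j _ => ?_
  rw [← Function.iterate_add_apply, add_comm j i]
  refine (dist_triangle _ _ _).trans ((add_le_add (hz _) (hy _)).trans ?_)
  have h1 : e / 2 ^ K ≤ e / 2 ^ k :=
    div_le_div_of_nonneg_left he (by positivity) (pow_le_pow_right₀ (by norm_num) hK)
  have e2 : 2 * e / 2 ^ K = 2 * (e / 2 ^ K) := by ring
  have e3 : 2 * e / 2 ^ k = 2 * (e / 2 ^ k) := by ring
  have e4 : 3 * e / 2 ^ k = 3 * (e / 2 ^ k) := by ring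
  have : 0 ≤ e / 2 ^ K := by positivity
  linarith

lemma exists_abs_le [CompactSpace M] {g : M → ℝ} (hg : Continuous g) :
    ∃ C, 0 ≤ C ∧ ∀ x, |g x| ≤ C := by
  obtain ⟨C, hC⟩ := isCompact_univ.exists_bound_of_continuousOn hg.continuousOn
  exact ⟨|C|, abs_nonneg _, fun x => (hC x (mem_univ x)).trans (le_abs_self C)⟩

lemma exists_modulus [CompactSpace M] {g : M → ℝ} (hg : Continuous g) {ω : ℝ} (hω : 0 < ω) :
    ∃ δ > 0, ∀ x y, dist x y ≤ δ → |g x - g y| ≤ ω := by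
  obtain ⟨δ, hδ, h⟩ := Metric.uniformContinuous_iff.1
    (CompactSpace.uniformContinuous_of_continuous hg) ω hω
  exact ⟨δ / 2, half_pos hδ, fun x y hxy => (h (lt_of_le_of_lt hxy (half_lt_self hδ))).le⟩

lemma tendsto_div_two_pow (c : ℝ) : Tendsto (fun k : ℕ => c / 2 ^ k) atTop (𝓝 0) := by
  have := (tendsto_pow_atTop_nhds_zero_of_lt_one (r := (1 / 2 : ℝ)) (by norm_num)
    (by norm_num)).const_mul c
  simpa [div_eq_mul_inv] using this

/-- All words of level `k + 1` have almost the same Birkhoff average, because they visit the words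
of level `k` with almost equal frequencies; points of the limit set inherit this. -/
lemma Tower.uniformAvg [CompactSpace M] [MeasurableSpace M] [BorelSpace M]
    (T : Tower f e τ) (he : 0 < e) : UniformAvg f T.limitSet := by
  intro g hg tol htol
  obtain ⟨C, hC0, hC⟩ := exists_abs_le hg
  obtain ⟨δ, hδ, hmod⟩ := exists_modulus hg (ω := tol / 4) (by positivity)
  have h1 := (tendsto_div_two_pow (3 * e)).eventually_le_const hδ
  have h2 := (tendsto_div_two_pow (C * τ / 2)).eventually_lt_const (show 0 < tol / 4 by positivity)
  obtain ⟨k, hk1, hk2⟩ := (h1.and h2).exists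
  have hk3 : 3 * e / 2 ^ (k + 1) ≤ δ := by
    refine le_trans ?_ hk1
    exact div_le_div_of_nonneg_left (by positivity) (by positivity)
      (pow_le_pow_right₀ (by norm_num) (Nat.le_succ k))
  have hk4 : e / 2 ^ k ≤ δ := by
    refine le_trans ?_ hk1
    gcongr
    linarith
  have hk5 : C * (τ / 2 ^ (k + 1)) < tol / 4 := by
    refine lt_of_eq_of_lt ?_ hk2
    rw [pow_succ]; field_simp
  obtain ⟨L, hL, h⟩ := (T.W (k + 1)).exists_birkhoff (f := f) (e := 3 * e / 2 ^ (k + 1))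
    (tol := tol) hC (fun x y hxy => hmod x y (hxy.trans hk3)) ((T.W k).abs_avg_le hC)
    ((T.step k).avg hC fun x y hxy => hmod x y (hxy.trans hk4)) (by linarith)
  exact ⟨_, L, hL, fun z hz => h z (T.limitSet_subset _ _ hz)⟩

end Tower

end SE

namespace SE

/-! ### The limit measure -/

section Limit

variable {M : Type*} [MetricSpace M] [CompactSpace M] [MeasurableSpace M] [BorelSpace M]
  {f : M → M} {e τ : ℝ}

/-- On the limit set, orbits of length `n` follow pieces of concatenations at every level, and the
number of these grows at most at the rate of the lowest level. -/
lemma Tower.entropy_le (T : Tower f e τ) (hfc : Continuous f) {ν : Measure M}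
    [IsProbabilityMeasure ν] (hν : MeasurePreserving f ν ν) (hνΛ : ν T.limitSetᶜ = 0) :
    measEntropy f ν ≤ ((Real.log (T.W 0).N / (T.W 0).n : ℝ) : EReal) := by
  refine measEntropy_le _ fun P hP η hη => ?_
  obtain ⟨r, hr, H⟩ := Hent_itin_le_add hν (msr_cellOf hP) (half_pos hη)
  obtain ⟨k, hk⟩ := ((tendsto_div_two_pow (6 * e)).eventually_le_const hr).exists
  set W := T.W k
  have hn' : (0 : ℝ) < W.n := by exact_mod_cast W.hn
  set R : ℝ := Real.log W.n + 2 * Real.log W.N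
  filter_upwards [eventually_ge_atTop ⌈R / (η / 2)⌉₊] with n hn
  have hcov : ν (W.cover f (3 * e / 2 ^ k) n)ᶜ = 0 :=
    measure_mono_null (compl_subset_compl.2 (T.limitSet_subset k n)) hνΛ
  obtain ⟨κ, _, α, hα, hsep, hent⟩ := W.Hent_le hfc (ν := ν) (3 * e / 2 ^ k) n
  have h1 := H n κ α hα _ hcov fun x hx y hy hxy j hj => (hsep x hx y hy hxy j hj).trans
    (le_trans (le_of_eq (by ring)) hk)
  have h2 : R ≤ n * (η / 2) := by
    rw [← div_le_iff₀ (half_pos hη)]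
    exact Nat.ceil_le.1 hn
  have h3 : (n : ℝ) * (Real.log W.N / W.n) ≤ n * (Real.log (T.W 0).N / (T.W 0).n) :=
    mul_le_mul_of_nonneg_left (T.log_le k) (Nat.cast_nonneg n)
  have e1 : (n / W.n + 2 : ℝ) * Real.log W.N = n * (Real.log W.N / W.n) + 2 * Real.log W.N := by
    field_simp
  rw [e1] at hent
  simp only [R] at h2
  linarith

/-- A weak limit of the empirical measures on the tracing orbits of the words of higher and higher
levels. -/
lemma Tower.exists_measure (T : Tower f e τ) (hfc : Continuous f) (he : 0 < e) (hτ : 0 < τ)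
    {ρ : ℝ} (hρ : 16 * e ≤ ρ)
    (h0 : ∀ a b, (∀ i < (T.W 0).n, dist ((T.W 0).w a i) ((T.W 0).w b i) ≤ ρ) → a = b) :
    ∃ ν : Measure M, IsProbabilityMeasure ν ∧ MeasurePreserving f ν ν ∧ ν T.limitSetᶜ = 0 ∧
      ((Real.log (T.W 0).N / (T.W 0).n - τ : ℝ) : EReal) ≤ measEntropy f ν := by
  have htr : ∀ K (a : Fin (T.W K).N), ∃ z : M, ∀ m,
      dist (f^[m] z) ((T.W K).conc (fun _ => a) m) ≤ e / 2 ^ K :=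
    fun K a => T.traced K fun _ => a
  choose z hz using htr
  let p : ℕ → ProbabilityMeasure M := fun K =>
    ⟨emp f (z K) (T.W K).n, isProbabilityMeasure_emp (T.W K).hn (T.W K).hN⟩
  let 𝒰 : Ultrafilter ℕ := Filter.hyperfilter ℕ
  have h𝒰 : (𝒰 : Filter ℕ) ≤ atTop := Nat.hyperfilter_le_atTop
  obtain ⟨ν, hlim⟩ : ∃ ν : ProbabilityMeasure M, Tendsto p 𝒰 (𝓝 ν) := by
    obtain ⟨ν, -, hν⟩ := isCompact_univ.ultrafilter_le_nhds (𝒰.map p) (by simp)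
    exact ⟨ν, hν⟩
  have hinv_n : Tendsto (fun K => ((T.W K).n : ℝ)⁻¹) 𝒰 (𝓝 0) := by
    refine Tendsto.mono_left ?_ h𝒰
    refine squeeze_zero (fun K => by positivity) (fun K => ?_) (tendsto_div_two_pow 1)
    rw [one_div]
    refine inv_anti₀ (by positivity) ?_
    exact_mod_cast T.two_pow_le K
  have hint := ProbabilityMeasure.tendsto_iff_forall_integral_tendsto.1 hlim
  -- invariance: shifting an orbit segment by one step only affects its two ends
  have hinv : MeasurePreserving f (ν : Measure M) (ν : Measure M) := by
    refine ⟨hfc.measurable, ?_⟩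
    have : IsProbabilityMeasure ((ν : Measure M).map f) :=
      Measure.isProbabilityMeasure_map hfc.measurable.aemeasurable
    refine ext_of_forall_integral_eq_of_IsFiniteMeasure fun g => ?_
    rw [integral_map hfc.measurable.aemeasurable g.continuous.aestronglyMeasurable]
    obtain ⟨C, hC0, hC⟩ := exists_abs_le g.continuous
    have h1 := hint (g.compContinuous ⟨f, hfc⟩)
    have h2 := hint g
    have h3 : Tendsto (fun K => ∫ x, (g.compContinuous ⟨f, hfc⟩) x ∂(p K : Measure M) -
        ∫ x, g x ∂(p K : Measure M)) 𝒰 (𝓝 0) := by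
      have hb : ∀ K, ‖∫ x, (g.compContinuous ⟨f, hfc⟩) x ∂(p K : Measure M) -
          ∫ x, g x ∂(p K : Measure M)‖ ≤ 2 * C * ((T.W K).n : ℝ)⁻¹ := by
        intro K
        have hn' : (0 : ℝ) < (T.W K).n := by exact_mod_cast (T.W K).hn
        have hN' : (0 : ℝ) < (T.W K).N := by exact_mod_cast (T.W K).hN
        change ‖∫ x, (g ∘ f) x ∂(emp f (z K) (T.W K).n) - ∫ x, g x ∂(emp f (z K) (T.W K).n)‖ ≤ _
        rw [emp_integral (g.continuous.comp hfc).measurable, emp_integral g.continuous.measurable,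
          ← sub_div, ← Finset.sum_sub_distrib, Real.norm_eq_abs, abs_div,
          abs_of_pos (mul_pos hn' hN'), div_le_iff₀ (by positivity)]
        refine (Finset.abs_sum_le_sum_abs _ _).trans
          ((Finset.sum_le_sum (g := fun _ => 2 * C) fun a _ => ?_).trans (le_of_eq ?_))
        · have hs : ∑ j ∈ Finset.range (T.W K).n, (g ∘ f) (f^[j] (z K a)) -
              ∑ j ∈ Finset.range (T.W K).n, g (f^[j] (z K a)) =
              g (f^[(T.W K).n] (z K a)) - g (z K a) := by
            rw [← Finset.sum_sub_distrib]
            simp only [Function.comp_apply, ← Function.iterate_succ_apply' f]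
            rw [Finset.sum_range_sub (fun j => g (f^[j] (z K a)))]
            simp
          refine (congrArg abs hs).le.trans ?_
          have h4 := hC (f^[(T.W K).n] (z K a))
          have h5 := hC (z K a)
          rw [abs_le] at h4 h5 ⊢
          constructor <;> linarith [h4.1, h4.2, h5.1, h5.2]
        · simp
          field_simp
      refine squeeze_zero_norm hb ?_
      simpa using hinv_n.const_mul (2 * C)
    have h4 := tendsto_nhds_unique (h1.sub h2) h3
    exact sub_eq_zero.1 h4
  have hcover : ∀ k n, (ν : Measure M) ((T.W k).cover f (3 * e / 2 ^ k) n)ᶜ = 0 := by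
    intro k n
    set A := (T.W k).cover f (3 * e / 2 ^ k) n
    have hAc : IsClosed A := Level.isClosed_cover _ hfc _ _
    have h1 := ProbabilityMeasure.limsup_measure_closed_le_of_tendsto hlim hAc
    have h2 : ∀ᶠ K in (𝒰 : Filter ℕ), (p K : Measure M) A = 1 := by
      filter_upwards [h𝒰 (eventually_ge_atTop k)] with K hK
      rw [← prob_compl_eq_zero_iff hAc.measurableSet]
      exact emp_compl_eq_zero hAc.measurableSet fun a j _ => T.mem_cover he.le hK (hz K a) j n
    rw [limsup_congr h2, limsup_const] at h1
    rw [prob_compl_eq_zero_iff hAc.measurableSet]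
    exact le_antisymm prob_le_one h1
  refine ⟨ν, inferInstance, hinv, ?_, ?_⟩
  · rw [Tower.limitSet, compl_iInter]
    refine measure_iUnion_null fun k => ?_
    rw [compl_iInter]
    exact measure_iUnion_null fun n => hcover k n
  · obtain ⟨s, X, hX, hdiam, hnull⟩ := exists_null_label (ν : Measure M) (r := 10 * e)
      (by positivity)
    refine le_measEntropy hfc.measurable X hX _ fun q hq => ?_
    -- tracing orbits of distinct words are separated, hence have distinct itineraries
    have hsep : ∀ K, Function.Injective fun a => itin f X (T.W K).n (z K a) := by
      intro K a b hab
      refine T.sep h0 K a b fun i hi => ?_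
      have h1 := hdiam _ _ (congrFun hab ⟨i, hi⟩)
      have h2 := hz K a i
      have h3 := hz K b i
      have hc : ∀ c, (T.W K).conc (fun _ => c) i = (T.W K).w c i := fun c => by
        simpa using (T.W K).conc_mul_add (fun _ => c) 0 hi
      rw [hc] at h2 h3
      rw [dist_comm] at h2
      have h4 := dist_triangle4 ((T.W K).w a i) (f^[i] (z K a)) (f^[i] (z K b)) ((T.W K).w b i)
      have h5 : e / 2 ^ K ≤ e := div_le_self he.le (one_le_pow₀ (by norm_num))
      have h6 : 0 ≤ 4 * e / 2 ^ K := by positivity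
      simp only at h1
      linarith
    have hfin : ∀ K, q * (Real.log (T.W 0).N / (T.W 0).n - τ) ≤
        Hent (p K : Measure M) (itin f X q) +
          q ^ 2 * Real.log (Fintype.card (Fin s)) * ((T.W K).n : ℝ)⁻¹ := by
      intro K
      have hn' : (0 : ℝ) < (T.W K).n := by exact_mod_cast (T.W K).hn
      have h1 := misiurewicz hfc.measurable (T.W K).hn (T.W K).hN hX (hsep K) hq
      have h2 : Real.log (T.W 0).N / (T.W 0).n - τ ≤ Real.log (T.W K).N / (T.W K).n := by
        have := T.le_log K
        have h3 : 0 ≤ τ / 2 ^ K := by positivity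
        linarith
      refine (mul_le_mul_of_nonneg_left h2 (Nat.cast_nonneg q)).trans ?_
      rw [← mul_div_assoc, div_le_iff₀ hn', add_mul, inv_mul_cancel_right₀ hn'.ne']
      refine h1.trans (le_of_eq ?_)
      rw [mul_comm (Hent _ _)]
      rfl
    have hHlim : Tendsto (fun K => Hent (p K : Measure M) (itin f X q)) 𝒰
        (𝓝 (Hent (ν : Measure M) (itin f X q))) := by
      refine tendsto_finsetSum _ fun v _ => ?_
      refine (Real.continuous_negMulLog.tendsto _).comp ?_
      have := ProbabilityMeasure.tendsto_measure_of_null_frontier_of_tendsto' hlim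
        (null_frontier_itin hfc hinv hnull q v)
      exact (ENNReal.tendsto_toReal (measure_ne_top _ _)).comp this
    have hR := hHlim.add (hinv_n.const_mul (q ^ 2 * Real.log (Fintype.card (Fin s))))
    rw [mul_zero, add_zero] at hR
    exact ge_of_tendsto' hR hfin

/-- The approximation statement at one scale: `r` controls the modulus of continuity of test
functions and `θ` the remaining errors. -/
lemma exists_approx (hf : IsHomeomorph f) (htr : TransitiveOn f Set.univ)
    (hsh : ShadowingProperty f) {μ : Measure M} [IsProbabilityMeasure μ]
    (hμ : MeasurePreserving f μ μ) {c : ℝ} (hc0 : 0 ≤ c) (hc : (c : EReal) ≤ measEntropy f μ)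
    {r θ : ℝ} (hr : 0 < r) (hθ : 0 < θ) :
    ∃ ν : Measure M, IsProbabilityMeasure ν ∧ Ergodic f ν ∧
      StrictlyErgodicOn f (measSupport ν) ∧
      ((c - 2 * θ : ℝ) : EReal) ≤ measEntropy f ν ∧ measEntropy f ν ≤ ((c + θ : ℝ) : EReal) ∧
      ∀ (g : M → ℝ) (C θ' : ℝ), Continuous g → (∀ x, |g x| ≤ C) →
        (∀ x y, dist x y ≤ r → |g x - g y| ≤ θ') →
        |∫ x, g x ∂ν - ∫ x, g x ∂μ| ≤ 2 * θ' + C * θ + θ := by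
  have hfc := hf.continuous
  obtain ⟨W, ρ, e, hρ, he, hρe, hρr, hW, hsep, hlo, hup, hg⟩ :=
    exists_initial hfc hf.surjective htr hsh hμ hc0 hc hr hθ
  obtain ⟨T, rfl⟩ := exists_tower hf.surjective hsh W he hθ hW
  obtain ⟨ν, hν1, hν2, hνΛ, hent⟩ := T.exists_measure hfc he hθ hρe hsep
  have hU := T.uniformAvg he
  refine ⟨ν, hν1, hU.ergodic hfc hν2 hνΛ,
    hU.strictlyErgodic hfc (T.isClosed_limitSet hfc) hν2 hνΛ, ?_, ?_, ?_⟩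
  · refine le_trans ?_ hent
    rw [EReal.coe_le_coe_iff]
    linarith
  · refine (T.entropy_le hfc hν2 hνΛ).trans ?_
    rw [EReal.coe_le_coe_iff]
    exact hup
  · intro g C θ' hgc hC hmod
    have ha : |∫ x, g x ∂μ| ≤ C := by
      have := norm_integral_le_of_norm_le_const (μ := μ) (f := g) (C := C)
        (Eventually.of_forall hC)
      simpa using this
    obtain ⟨L, hL, h⟩ := (T.W 0).exists_birkhoff (f := f) (e := 3 * e / 2 ^ 0)
      (tol := 2 * θ' + C * θ + θ) hC
      (fun x y hxy => hmod x y (hxy.trans (by simp; linarith))) ha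
      (hg g C θ' hgc hC hmod) (by linarith)
    exact abs_integral_sub_le hfc hν2 hνΛ hgc hL fun z hz => h z (T.limitSet_subset _ _ hz)

end Limit

end SE

/-- For a transitive homeomorphism with shadowing, any value
`0 ≤ c ≤ h_μ(f)` is approximated by ergodic measures supported on strictly
ergodic subsystems, converging to `μ` in the weak* topology with entropies
converging to `c`. -/
theorem transitive_shadowing_intermediate_measures
    {M : Type*} [MetricSpace M] [CompactSpace M] [MeasurableSpace M] [BorelSpace M]
    (f : M → M) (hf : IsHomeomorph f)
    (htr : TransitiveOn f Set.univ) (hsh : ShadowingProperty f)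
    (μ : MeasureTheory.Measure M) (hμp : MeasureTheory.IsProbabilityMeasure μ)
    (hμi : MeasureTheory.MeasurePreserving f μ μ)
    (c : ℝ) (hc0 : 0 ≤ c) (hc : (c : EReal) ≤ measEntropy f μ) :
    ∃ ν : ℕ → MeasureTheory.Measure M,
      (∀ n, MeasureTheory.IsProbabilityMeasure (ν n)) ∧
      (∀ n, Ergodic f (ν n)) ∧
      (∀ n, StrictlyErgodicOn f (measSupport (ν n))) ∧
      (∀ n, ∀ η : MeasureTheory.Measure M, MeasureTheory.IsProbabilityMeasure η →
        MeasureTheory.MeasurePreserving f η η → η (measSupport (ν n))ᶜ = 0 → η = ν n) ∧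
      (∀ g : M → ℝ, Continuous g →
        Tendsto (fun n => ∫ x, g x ∂(ν n)) atTop (𝓝 (∫ x, g x ∂μ))) ∧
      Tendsto (fun n => measEntropy f (ν n)) atTop (𝓝 (c : EReal)) := by
  have hpos : ∀ n : ℕ, (0 : ℝ) < 1 / (n + 1) := fun n => Nat.one_div_pos_of_nat
  choose ν hν1 hν2 hν3 hlo hup hint using fun n : ℕ =>
    SE.exists_approx hf htr hsh hμi hc0 hc (hpos n) (hpos n)
  have hθ : Tendsto (fun n : ℕ => 1 / ((n : ℝ) + 1)) atTop (𝓝 0) :=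
    tendsto_one_div_add_atTop_nhds_zero_nat
  refine ⟨ν, hν1, hν2, hν3, fun n η h1 h2 h3 => ?_, fun g hg => ?_, ?_⟩
  · exact (hν3 n).2.unique ⟨h1, h2, h3⟩
      ⟨hν1 n, (hν2 n).toMeasurePreserving, SE.measure_compl_measSupport _⟩
  · obtain ⟨C, hC0, hC⟩ := SE.exists_abs_le hg
    rw [Metric.tendsto_atTop']
    intro t ht
    obtain ⟨δ, hδ, hmod⟩ := SE.exists_modulus hg (ω := t / 8) (by positivity)
    have hCθ : Tendsto (fun n : ℕ => C * (1 / ((n : ℝ) + 1)) + 1 / ((n : ℝ) + 1)) atTop (𝓝 0) := by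
      simpa using (hθ.const_mul C).add hθ
    have hev := (hθ.eventually_le_const hδ).and
      (hCθ.eventually_lt_const (show 0 < t / 2 by positivity))
    obtain ⟨n0, hn0⟩ := eventually_atTop.1 hev
    refine ⟨n0, fun n hn => ?_⟩
    obtain ⟨h1, h2⟩ := hn0 n hn.le
    have h3 := hint n g C (t / 8) hg hC fun x y hxy => hmod x y (hxy.trans h1)
    rw [Real.dist_eq]
    linarith
  · have h1 : Tendsto (fun n : ℕ => ((c - 2 * (1 / ((n : ℝ) + 1)) : ℝ) : EReal)) atTop
        (𝓝 (c : EReal)) := by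
      refine (continuous_coe_real_ereal.tendsto c).comp ?_
      simpa using tendsto_const_nhds.sub (hθ.const_mul 2)
    have h2 : Tendsto (fun n : ℕ => ((c + 1 / ((n : ℝ) + 1) : ℝ) : EReal)) atTop
        (𝓝 (c : EReal)) := by
      refine (continuous_coe_real_ereal.tendsto c).comp ?_
      simpa using tendsto_const_nhds.add hθ
    exact tendsto_of_tendsto_of_tendsto_of_le_of_le h1 h2 hlo hup
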